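/- arXiv:1709.05322 — 3 statements merged into one kernel-verified Lean document; each statement's English description precedes it below -/
import Mathlib

section
/- Let T be a contraction on a real Hilbert space H. Then for every x ∈ H, both (1/n)∑_{j=1}^n T^{p_j} x and (1/N)∑_{j=1}^{π(N)} (log p_j) T^{p_j} x converge in norm. -/
section
open Filter Finset MeasureTheory Topology

theorem hb_posdef {H : Type*} [NormedAddCommGroup H] [InnerProductSpace ℝ H]
    (T : H →L[ℝ] H) (hT : ‖T‖ ≤ 1) (x : H) (N : ℕ) : ∀ a : ℕ → ℝ,
    ‖∑ n ∈ range N, a n • (T ^ n) x‖ ^ 2 ≤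
      ∑ n ∈ range N, ∑ m ∈ range N, a n * a m * inner ℝ ((T ^ (Nat.dist n m)) x) x := by
  induction N with
  | zero => intro a; simp
  | succ N ih =>
    intro a
    have h := ih (fun n => a (n + 1))
    set s := ∑ n ∈ range N, a (n + 1) • (T ^ n) x with hs
    have hTs : ∑ n ∈ range (N + 1), a n • (T ^ n) x = a 0 • x + T s := by
      rw [Finset.sum_range_succ', add_comm]
      congr 1
      rw [hs, map_sum]
      refine Finset.sum_congr rfl fun n _ => ?_
      rw [map_smul, pow_succ']; rfl
    have hTn : ‖T s‖ ≤ ‖s‖ := by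
      calc ‖T s‖ ≤ ‖T‖ * ‖s‖ := T.le_opNorm s
        _ ≤ 1 * ‖s‖ := by gcongr
        _ = ‖s‖ := one_mul _
    have hin : inner ℝ (T s) x = ∑ n ∈ range N, a (n + 1) * inner ℝ ((T ^ (n + 1)) x) x := by
      rw [hs, map_sum, sum_inner]
      refine Finset.sum_congr rfl fun n _ => ?_
      rw [map_smul, real_inner_smul_left, pow_succ']; rfl
    rw [hTs, norm_add_sq_real]
    have e1 : ∑ n ∈ range (N + 1), ∑ m ∈ range (N + 1),
        a n * a m * inner ℝ ((T ^ (Nat.dist n m)) x) x =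
        ∑ n ∈ range N, ∑ m ∈ range N,
          a (n + 1) * a (m + 1) * inner ℝ ((T ^ (Nat.dist n m)) x) x
        + 2 * a 0 * inner ℝ (T s) x + a 0 ^ 2 * ‖x‖ ^ 2 := by
      rw [Finset.sum_range_succ']
      simp_rw [Finset.sum_range_succ' _ N]
      rw [Finset.sum_add_distrib, hin]
      have hd : ∀ n m : ℕ, Nat.dist (n + 1) (m + 1) = Nat.dist n m := fun n m =>
        Nat.dist_succ_succ
      have hd0 : ∀ n : ℕ, Nat.dist (n + 1) 0 = n + 1 := fun n => by simp [Nat.dist]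
      have hd1 : ∀ n : ℕ, Nat.dist 0 (n + 1) = n + 1 := fun n => by simp [Nat.dist]
      simp only [hd, hd0, hd1, Nat.dist_self, pow_zero, one_apply_eq_self,
        real_inner_self_eq_norm_sq, Finset.mul_sum]
      have : ∑ i ∈ range N, 2 * a 0 * (a (i + 1) * inner ℝ ((T ^ (i + 1)) x) x) =
        ∑ i ∈ range N, a (i + 1) * a 0 * inner ℝ ((T ^ (i + 1)) x) x +
        ∑ i ∈ range N, a 0 * a (i + 1) * inner ℝ ((T ^ (i + 1)) x) x := by
        rw [← Finset.sum_add_distrib]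
        exact Finset.sum_congr rfl fun n _ => by ring
      rw [this]; ring
    rw [e1, norm_smul, real_inner_smul_left, real_inner_comm]
    have : ‖T s‖ ^ 2 ≤ ‖s‖ ^ 2 := by gcongr
    have h2 : (‖a 0‖ * ‖x‖) ^ 2 = a 0 ^ 2 * ‖x‖ ^ 2 := by
      rw [mul_pow, Real.norm_eq_abs, sq_abs]
    rw [h2]
    linarith

/-- Herglotz -/
theorem hb_herglotz (c : ℕ → ℝ)
    (hc : ∀ (N : ℕ) (a : ℕ → ℝ), 0 ≤ ∑ n ∈ range N, ∑ m ∈ range N, a n * a m * c (Nat.dist n m)) :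
    ∃ μ : FiniteMeasure ℝ, ∀ k : ℕ, ∫ t, Real.cos (k * t) ∂(μ : Measure ℝ) = c k := by
  set f : ℕ → ℝ → ℝ := fun R t => (2 * Real.pi * R)⁻¹ * ∑ n ∈ range R, ∑ m ∈ range R,
    c (Nat.dist n m) * Real.cos ((n - m) * t) with hf
  have hfcont : ∀ R, Continuous (f R) := fun R => by
    simp only [hf]; fun_prop
  have hfpos : ∀ R t, 0 ≤ f R t := by
    intro R t
    simp only [hf]
    refine mul_nonneg (by positivity) ?_
    have h1 := hc R (fun n => Real.cos (n * t))
    have h2 := hc R (fun n => Real.sin (n * t))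
    have : ∑ n ∈ range R, ∑ m ∈ range R, c (Nat.dist n m) * Real.cos ((n - m) * t) =
      ∑ n ∈ range R, ∑ m ∈ range R, Real.cos (n * t) * Real.cos (m * t) * c (Nat.dist n m) +
      ∑ n ∈ range R, ∑ m ∈ range R, Real.sin (n * t) * Real.sin (m * t) * c (Nat.dist n m) := by
      rw [← Finset.sum_add_distrib]
      refine Finset.sum_congr rfl fun n _ => ?_
      rw [← Finset.sum_add_distrib]
      refine Finset.sum_congr rfl fun m _ => ?_
      rw [sub_mul, Real.cos_sub]; ring
    rw [this]; exact add_nonneg h1 h2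
  have hcosint : ∀ j : ℤ, ∫ t in (0:ℝ)..(2 * Real.pi), Real.cos (j * t) =
      if j = 0 then 2 * Real.pi else 0 := by
    intro j
    split_ifs with h
    · simp [h]
    · have hj : (j : ℝ) ≠ 0 := by exact_mod_cast h
      rw [intervalIntegral.integral_comp_mul_left (fun t => Real.cos t) hj, integral_cos]
      have : Real.sin (j * (2 * Real.pi)) = 0 := by
        have := Real.sin_int_mul_pi (2 * j)
        push_cast at this
        rw [← this]; ring_nf
      simp [this]
  have hfint : ∀ R k : ℕ, ∫ t in (0:ℝ)..(2 * Real.pi), Real.cos (k * t) * f R t =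
      (R - k : ℕ) / R * c k := by
    intro R k
    have e1 : ∀ t, Real.cos (k * t) * f R t = (2 * Real.pi * R)⁻¹ * ∑ n ∈ range R, ∑ m ∈ range R,
        c (Nat.dist n m) * (1 / 2 * Real.cos (((n - m + k : ℤ) : ℝ) * t) +
          1 / 2 * Real.cos (((n - m - k : ℤ) : ℝ) * t)) := by
      intro t
      simp only [hf]
      rw [mul_left_comm]
      congr 1
      rw [Finset.mul_sum]
      refine Finset.sum_congr rfl fun n _ => ?_
      rw [Finset.mul_sum]
      refine Finset.sum_congr rfl fun m _ => ?_
      push_cast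
      rw [add_mul _ (k:ℝ) t, sub_mul _ (k:ℝ) t, Real.cos_add, Real.cos_sub]
      ring
    simp_rw [e1]
    rw [intervalIntegral.integral_const_mul, intervalIntegral.integral_finsetSum
      (fun i _ => Continuous.intervalIntegrable (by fun_prop) _ _)]
    have e2 : ∀ n m : ℕ, ∫ t in (0:ℝ)..(2 * Real.pi),
        c (Nat.dist n m) * (1 / 2 * Real.cos (((n - m + k : ℤ) : ℝ) * t) +
          1 / 2 * Real.cos (((n - m - k : ℤ) : ℝ) * t)) =
        Real.pi * ((if m = n + k then c k else 0) + (if n = m + k then c k else 0)) := by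
      intro n m
      rw [intervalIntegral.integral_const_mul, intervalIntegral.integral_add
        (Continuous.intervalIntegrable (by fun_prop) _ _)
        (Continuous.intervalIntegrable (by fun_prop) _ _),
        intervalIntegral.integral_const_mul, intervalIntegral.integral_const_mul,
        hcosint, hcosint]
      have i1 : ((n:ℤ) - m + k = 0) ↔ m = n + k := by omega
      have i2 : ((n:ℤ) - m - k = 0) ↔ n = m + k := by omega
      simp only [i1, i2]
      have d1 : m = n + k → c (Nat.dist n m) = c k := by
        intro h; congr 1; simp only [Nat.dist]; omega
      have d2 : n = m + k → c (Nat.dist n m) = c k := by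
        intro h; congr 1; simp only [Nat.dist]; omega
      split_ifs with h1 h2 h2
      · rw [d1 h1]; ring
      · rw [d1 h1]; ring
      · rw [d2 h2]; ring
      · ring
    have e3 : ∑ n ∈ range R, ∫ t in (0:ℝ)..(2 * Real.pi), ∑ m ∈ range R,
        c (Nat.dist n m) * (1 / 2 * Real.cos (((n - m + k : ℤ) : ℝ) * t) +
          1 / 2 * Real.cos (((n - m - k : ℤ) : ℝ) * t)) =
        Real.pi * (∑ n ∈ range R, ∑ m ∈ range R, (if m = n + k then c k else 0) +
          ∑ n ∈ range R, ∑ m ∈ range R, (if n = m + k then c k else 0)) := by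
      rw [← Finset.sum_add_distrib, Finset.mul_sum]
      refine Finset.sum_congr rfl fun n _ => ?_
      rw [intervalIntegral.integral_finsetSum
        (fun i _ => Continuous.intervalIntegrable (by fun_prop) _ _)]
      simp_rw [e2]
      rw [← Finset.mul_sum, Finset.sum_add_distrib]
    rw [e3]
    have e4 : ∑ n ∈ range R, ∑ m ∈ range R, (if m = n + k then c k else 0) = (R - k : ℕ) * c k := by
      simp only [Finset.sum_ite_eq', Finset.mem_range]
      rw [← Finset.sum_filter, Finset.sum_const, nsmul_eq_mul]
      congr 2
      have : Finset.filter (fun a => a + k < R) (range R) = range (R - k) := by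
        ext a; simp; omega
      rw [this, Finset.card_range]
    have e5 : ∑ n ∈ range R, ∑ m ∈ range R, (if n = m + k then c k else 0) = (R - k : ℕ) * c k := by
      rw [Finset.sum_comm]; exact e4
    rw [e4, e5]
    rcases Nat.eq_zero_or_pos R with h | h
    · simp [h]
    · have : (R:ℝ) ≠ 0 := by positivity
      field_simp; ring
  -- measures
  have h2pi : (0:ℝ) ≤ 2 * Real.pi := by positivity
  set K : Set ℝ := Set.Icc 0 (2 * Real.pi) with hK
  let ν : ℕ → Measure ℝ := fun R => (volume.restrict K).withDensity (fun t => ENNReal.ofReal (f R t))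
  have hνint : ∀ R (g : ℝ → ℝ), ∫ t, g t ∂(ν R) = ∫ t in (0:ℝ)..(2 * Real.pi), g t * f R t := by
    intro R g
    have : ν R = (volume.restrict K).withDensity (fun t => ((f R t).toNNReal : ENNReal)) := rfl
    rw [this, integral_withDensity_eq_integral_smul ((hfcont R).measurable.real_toNNReal)]
    rw [intervalIntegral.integral_of_le h2pi, ← integral_Icc_eq_integral_Ioc]
    refine integral_congr_ae (Eventually.of_forall fun t => ?_)
    simp only [NNReal.smul_def, smul_eq_mul, Real.coe_toNNReal _ (hfpos R t)]
    ring
  have hνfin : ∀ R, IsFiniteMeasure (ν R) := fun R =>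
    isFiniteMeasure_withDensity_ofReal
      ((hfcont R).continuousOn.integrableOn_compact isCompact_Icc).2
  let νf : ℕ → FiniteMeasure ℝ := fun R => ⟨ν R, hνfin R⟩
  have hmass : ∀ R, ((νf R).mass : ℝ) ≤ c 0 := by
    intro R
    have h1 : ∫ t, (1:ℝ) ∂(ν R) = (R - 0 : ℕ) / R * c 0 := by
      rw [hνint, ← hfint R 0]; simp
    have h2 : ((νf R).mass : ℝ) = ∫ t, (1:ℝ) ∂(ν R) := by
      rw [integral_const, smul_eq_mul, mul_one]; rfl
    rw [h2, h1]
    have h0 : 0 ≤ c 0 := by simpa using hc 1 (fun _ => 1)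
    rcases Nat.eq_zero_or_pos R with h | h
    · simp [h, h0]
    · have : (R:ℝ) ≠ 0 := by positivity
      simp [this]
  have hcomp := isCompact_setOfPred_finiteMeasure_le_of_isCompact (E := ℝ) (c 0).toNNReal
    (K := K) isCompact_Icc
  have hmem : ∀ R, νf R ∈ {μ : FiniteMeasure ℝ | μ.mass ≤ (c 0).toNNReal ∧ μ Kᶜ = 0} := by
    intro R
    refine ⟨?_, ?_⟩
    · rw [← NNReal.coe_le_coe]
      exact (hmass R).trans (Real.le_coe_toNNReal _)
    · rw [FiniteMeasure.null_iff_toMeasure_null]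
      change (ν R) Kᶜ = 0
      refine withDensity_absolutelyContinuous _ _ ?_
      rw [Measure.restrict_apply' measurableSet_Icc, Set.compl_inter_self, measure_empty]
  obtain ⟨μ, -, hμ⟩ := hcomp.ultrafilter_le_nhds ((hyperfilter ℕ).map νf) (by
    rw [le_principal_iff]
    exact Filter.mem_map.2 (univ_mem' hmem))
  have hμ' : Tendsto νf (hyperfilter ℕ : Filter ℕ) (𝓝 μ) := hμ
  rw [FiniteMeasure.tendsto_iff_forall_integral_tendsto] at hμ'
  refine ⟨μ, fun k => ?_⟩
  let g : BoundedContinuousFunction ℝ ℝ := BoundedContinuousFunction.ofNormedAddCommGroup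
    (fun t => Real.cos (k * t)) (by fun_prop) 1 (fun t => by
      rw [Real.norm_eq_abs]; exact Real.abs_cos_le_one _)
  have h1 := hμ' g
  have h2 : Tendsto (fun R : ℕ => ((R - k : ℕ) : ℝ) / R * c k) atTop (𝓝 (1 * c k)) := by
    refine Tendsto.mul_const _ ?_
    have : Tendsto (fun R : ℕ => 1 - (k:ℝ) / R) atTop (𝓝 (1 - 0)) :=
      tendsto_const_nhds.sub (tendsto_const_div_atTop_nhds_zero_nat _)
    rw [sub_zero] at this
    refine this.congr' ?_
    filter_upwards [eventually_ge_atTop (k + 1)] with R hR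
    have : (R:ℝ) ≠ 0 := by
      have : 0 < R := by omega
      positivity
    rw [Nat.cast_sub (by omega)]
    field_simp
  have h3 : Tendsto (fun R => ∫ t, g t ∂(νf R : Measure ℝ)) (hyperfilter ℕ : Filter ℕ)
      (𝓝 (1 * c k)) := by
    refine (h2.mono_left Nat.hyperfilter_le_atTop).congr fun R => ?_
    rw [← hfint R k]
    exact (hνint R _).symm
  have := tendsto_nhds_unique h1 h3
  rw [one_mul] at this
  exact this

theorem hb_ext (a : ℕ → ℕ → ℝ) (L : ℕ → ℕ) (hL : ∀ N n, L N ≤ n → a N n = 0)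
    (V : Type*) [AddCommMonoid V] (N' R : ℕ) (h : L N' ≤ R) (g : ℕ → V)
    (hg : ∀ n, a N' n = 0 → g n = 0) : ∑ n ∈ range (L N'), g n = ∑ n ∈ range R, g n := by
  refine Finset.sum_subset (Finset.range_mono h) fun n _ hn => hg n (hL N' n ?_)
  simpa using hn

theorem hb_main {H : Type*} [NormedAddCommGroup H] [InnerProductSpace ℝ H] [CompleteSpace H]
    (T : H →L[ℝ] H) (hT : ‖T‖ ≤ 1) (x : H) (a : ℕ → ℕ → ℝ) (L : ℕ → ℕ)
    (hL : ∀ N n, L N ≤ n → a N n = 0)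
    (C : ℝ) (hC : ∀ N, ∑ n ∈ range (L N), |a N n| ≤ C)
    (P : ℝ → ℂ)
    (hP : ∀ t : ℝ, Tendsto (fun N => ∑ n ∈ range (L N), (a N n : ℂ) * Complex.exp (n * t * Complex.I))
      atTop (𝓝 (P t))) :
    ∃ y : H, Tendsto (fun N => ∑ n ∈ range (L N), a N n • (T ^ n) x) atTop (𝓝 y) := by
  have hpd := hb_posdef T hT x
  obtain ⟨μ, hμ⟩ := hb_herglotz (fun k => inner ℝ ((T ^ k) x) x)
    (fun N a => (sq_nonneg _).trans (hpd N a))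
  have key : ∀ (N : ℕ) (b : ℕ → ℝ), ‖∑ n ∈ range N, b n • (T ^ n) x‖ ^ 2 ≤
      ∫ t, ‖∑ n ∈ range N, (b n : ℂ) * Complex.exp (n * t * Complex.I)‖ ^ 2 ∂(μ : Measure ℝ) := by
    intro N b
    refine (hpd N b).trans (le_of_eq ?_)
    have e1 : ∀ t : ℝ, ‖∑ n ∈ range N, (b n : ℂ) * Complex.exp (n * t * Complex.I)‖ ^ 2 =
        ∑ n ∈ range N, ∑ m ∈ range N, b n * b m * Real.cos ((Nat.dist n m : ℕ) * t) := by
      intro t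
      have e2 : ∑ n ∈ range N, (b n : ℂ) * Complex.exp (n * t * Complex.I) =
          ((∑ n ∈ range N, b n * Real.cos (n * t) : ℝ) : ℂ) +
          ((∑ n ∈ range N, b n * Real.sin (n * t) : ℝ) : ℂ) * Complex.I := by
        push_cast
        rw [Finset.sum_mul, ← Finset.sum_add_distrib]
        refine Finset.sum_congr rfl fun n _ => ?_
        rw [Complex.exp_mul_I]; ring
      rw [e2, ← Complex.normSq_eq_norm_sq, Complex.normSq_add_mul_I, sq, sq, Finset.sum_mul_sum,
        Finset.sum_mul_sum, ← Finset.sum_add_distrib]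
      refine Finset.sum_congr rfl fun n _ => ?_
      rw [← Finset.sum_add_distrib]
      refine Finset.sum_congr rfl fun m _ => ?_
      have : Real.cos ((Nat.dist n m : ℕ) * t) = Real.cos (n * t - m * t) := by
        rcases le_total n m with h | h
        · rw [Nat.dist_eq_sub_of_le h, Nat.cast_sub h, ← Real.cos_neg]; ring_nf
        · rw [Nat.dist_eq_sub_of_le_right h, Nat.cast_sub h]; ring_nf
      rw [this, Real.cos_sub]; ring
    simp_rw [e1]
    have hint : ∀ k : ℕ, Integrable (fun t => Real.cos (k * t)) (μ : Measure ℝ) := fun k =>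
      Integrable.of_bound (by fun_prop) 1 (Eventually.of_forall fun t => by
        rw [Real.norm_eq_abs]; exact Real.abs_cos_le_one _)
    rw [integral_finsetSum _ (fun n _ => integrable_finsetSum _ fun m _ => (hint _).const_mul _)]
    refine Finset.sum_congr rfl fun n _ => ?_
    rw [integral_finsetSum _ (fun m _ => (hint _).const_mul _)]
    refine Finset.sum_congr rfl fun m _ => ?_
    rw [integral_const_mul, hμ]
  set F : ℕ → ℝ → ℂ := fun N t => ∑ n ∈ range (L N), (a N n : ℂ) * Complex.exp (n * t * Complex.I)
    with hF
  have hFc : ∀ N, Continuous (F N) := fun N => by simp only [hF]; fun_prop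
  have hFb : ∀ N t, ‖F N t‖ ≤ C := by
    intro N t
    refine (norm_sum_le _ _).trans (le_trans (Finset.sum_le_sum fun n _ => ?_) (hC N))
    rw [norm_mul, Complex.norm_real, Real.norm_eq_abs]
    have : ‖Complex.exp (n * t * Complex.I)‖ = 1 := by
      have := Complex.norm_exp_ofReal_mul_I (n * t)
      push_cast at this; exact this
    rw [this, mul_one]
  have hPb : ∀ t, ‖P t‖ ≤ C := fun t =>
    le_of_tendsto (hP t).norm (Eventually.of_forall fun N => hFb N t)
  have hPm : Measurable P := measurable_of_tendsto_metrizable (fun N => (hFc N).measurable)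
    (tendsto_pi_nhds.2 hP)
  have hdct : Tendsto (fun N => ∫ t, ‖F N t - P t‖ ^ 2 ∂(μ : Measure ℝ)) atTop (𝓝 0) := by
    have := tendsto_integral_of_dominated_convergence (μ := (μ : Measure ℝ))
      (F := fun N t => ‖F N t - P t‖ ^ 2) (f := fun _ => (0:ℝ)) (fun _ => (2 * C) ^ 2)
      (fun N => (((hFc N).measurable.sub hPm).norm.pow_const 2).aestronglyMeasurable)
      (integrable_const _)
      (fun N => Eventually.of_forall fun t => by
        rw [Real.norm_eq_abs, abs_of_nonneg (by positivity)]
        have : ‖F N t - P t‖ ≤ 2 * C := (norm_sub_le _ _).trans (by linarith [hFb N t, hPb t])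
        gcongr)
      (Eventually.of_forall fun t => by
        have := ((hP t).sub_const (P t)).norm.pow 2
        simpa using this)
    simpa using this
  have hi : ∀ N, Integrable (fun t => ‖F N t - P t‖ ^ 2) (μ : Measure ℝ) := fun N =>
    Integrable.of_bound (((hFc N).measurable.sub hPm).norm.pow_const 2).aestronglyMeasurable
      ((2 * C) ^ 2) (Eventually.of_forall fun t => by
        rw [Real.norm_eq_abs, abs_of_nonneg (by positivity)]
        have : ‖F N t - P t‖ ≤ 2 * C := (norm_sub_le _ _).trans (by linarith [hFb N t, hPb t])
        gcongr)
  apply cauchySeq_tendsto_of_complete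
  rw [Metric.cauchySeq_iff]
  intro ε hε
  have hev := hdct.eventually (gt_mem_nhds (show (0:ℝ) < ε ^ 2 / 4 by positivity))
  obtain ⟨N0, hN0⟩ := eventually_atTop.1 hev
  refine ⟨N0, fun N hN M hM => ?_⟩
  set R := max (L N) (L M)
  have hv : ∑ n ∈ range (L N), a N n • (T ^ n) x - ∑ n ∈ range (L M), a M n • (T ^ n) x =
      ∑ n ∈ range R, (a N n - a M n) • (T ^ n) x := by
    rw [hb_ext a L hL H N R (le_max_left _ _) _ (fun n h => by simp [h]),
      hb_ext a L hL H M R (le_max_right _ _) _ (fun n h => by simp [h]), ← Finset.sum_sub_distrib]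
    simp_rw [sub_smul]
  have hw : ∀ t : ℝ, F N t - F M t =
      ∑ n ∈ range R, ((a N n - a M n : ℝ) : ℂ) * Complex.exp (n * t * Complex.I) := by
    intro t
    simp only [hF]
    rw [hb_ext a L hL ℂ N R (le_max_left _ _) _ (fun n h => by simp [h]),
      hb_ext a L hL ℂ M R (le_max_right _ _) _ (fun n h => by simp [h]), ← Finset.sum_sub_distrib]
    push_cast
    simp_rw [sub_mul]
  rw [dist_eq_norm, hv]
  have h1 := key R (fun n => a N n - a M n)
  simp_rw [← hw] at h1
  have h2 : ∫ t, ‖F N t - F M t‖ ^ 2 ∂(μ : Measure ℝ) ≤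
      ∫ t, (2 * ‖F N t - P t‖ ^ 2 + 2 * ‖F M t - P t‖ ^ 2) ∂(μ : Measure ℝ) := by
    refine integral_mono_of_nonneg (Eventually.of_forall fun t => by positivity)
      (((hi N).const_mul 2).add ((hi M).const_mul 2)) (Eventually.of_forall fun t => ?_)
    have h3 : ‖F N t - F M t‖ ≤ ‖F N t - P t‖ + ‖F M t - P t‖ := by
      have : F N t - F M t = (F N t - P t) - (F M t - P t) := by ring
      rw [this]; exact norm_sub_le _ _
    have h4 : ‖F N t - F M t‖ ^ 2 ≤ (‖F N t - P t‖ + ‖F M t - P t‖) ^ 2 := by gcongr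
    nlinarith [sq_nonneg (‖F N t - P t‖ - ‖F M t - P t‖)]
  rw [integral_add ((hi N).const_mul 2) ((hi M).const_mul 2), integral_const_mul,
    integral_const_mul] at h2
  have h5 := hN0 N hN
  have h6 := hN0 M hM
  exact lt_of_pow_lt_pow_left₀ 2 hε.le (by linarith)

end

section
open Filter Finset MeasureTheory Topology

noncomputable def wiKern (v : ℝ) : ℝ := 2 * (1 - Real.cos v) / v ^ 2

theorem wiKern_nonneg (v : ℝ) : 0 ≤ wiKern v := by
  unfold wiKern
  have := Real.cos_le_one v
  exact div_nonneg (by linarith) (sq_nonneg _)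

theorem wiKern_measurable : Measurable wiKern := by
  unfold wiKern; fun_prop

theorem wiKern_le (v : ℝ) : wiKern v ≤ 8 * (1 + v ^ 2)⁻¹ := by
  have h1 : wiKern v ≤ 1 := by
    unfold wiKern
    apply div_le_one_of_le₀ _ (sq_nonneg _)
    have := Real.one_sub_sq_div_two_le_cos (x := v)
    linarith
  rw [← div_eq_mul_inv, le_div_iff₀ (by positivity)]
  by_cases hv : v ^ 2 ≤ 1
  · have := wiKern_nonneg v
    nlinarith
  · push Not at hv
    have h2 : wiKern v * v ^ 2 ≤ 4 := by
      unfold wiKern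
      rw [div_mul_cancel₀ _ (by positivity)]
      have := Real.neg_one_le_cos v
      linarith
    nlinarith [wiKern_nonneg v]

theorem wiKern_integrable : Integrable wiKern := by
  refine (integrable_inv_one_add_sq.const_mul 8).mono' wiKern_measurable.aestronglyMeasurable
    (Eventually.of_forall fun v => ?_)
  rw [Real.norm_eq_abs, abs_of_nonneg (wiKern_nonneg v)]
  exact wiKern_le v

theorem wiKern_int_pos : 0 < ∫ v, wiKern v := by
  rw [integral_pos_iff_support_of_nonneg wiKern_nonneg wiKern_integrable]
  refine lt_of_lt_of_le ?_ (measure_mono (show Set.Ioo (0:ℝ) 1 ⊆ Function.support wiKern from ?_))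
  · simp
  · intro v hv
    have h1 : Real.cos v < 1 := by
      rw [← Real.cos_zero]
      exact Real.cos_lt_cos_of_nonneg_of_le_pi le_rfl
        (by linarith [hv.2, Real.pi_gt_three]) hv.1
    have : 0 < wiKern v := by
      unfold wiKern
      have := hv.1
      exact div_pos (by linarith) (by positivity)
    exact this.ne'

theorem wiKern_fourier (v : ℝ) (hv : v ≠ 0) :
    ∫ y in Set.Ioc (-1:ℝ) 1, (((1 - |y|) : ℝ) : ℂ) * Complex.exp (v * y * Complex.I) =
      wiKern v := by
  rw [← intervalIntegral.integral_of_le (by norm_num)]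
  set F : ℝ → ℂ := fun y => (((1 - |y|) : ℝ) : ℂ) * Complex.exp (v * y * Complex.I) with hF
  have hFc : Continuous F := by simp only [hF]; fun_prop
  have h0 : ∫ y in (-1:ℝ)..0, F y = ∫ y in (0:ℝ)..1, F (-y) := by
    rw [intervalIntegral.integral_comp_neg]; simp
  rw [← intervalIntegral.integral_add_adjacent_intervals (hFc.intervalIntegrable (-1) 0)
    (hFc.intervalIntegrable 0 1), h0, ← intervalIntegral.integral_add
    (Continuous.intervalIntegrable (by fun_prop) _ _) (hFc.intervalIntegrable 0 1)]
  have h1 : ∫ y in (0:ℝ)..1, (F (-y) + F y) =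
      ∫ y in (0:ℝ)..1, ((2 * (1 - y) * Real.cos (v * y) : ℝ) : ℂ) := by
    refine intervalIntegral.integral_congr fun y hy => ?_
    rw [Set.uIcc_of_le (by norm_num)] at hy
    simp only [hF, abs_neg, abs_of_nonneg hy.1]
    push_cast
    rw [Complex.cos]
    ring_nf
  rw [h1, intervalIntegral.integral_ofReal]
  congr 1
  have h2 : ∀ y ∈ Set.uIcc (0:ℝ) 1, HasDerivAt
      (fun y => 2 * (1 - y) * Real.sin (v * y) / v - 2 * Real.cos (v * y) / v ^ 2)
      (2 * (1 - y) * Real.cos (v * y)) y := by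
    intro y _
    have hl : HasDerivAt (fun y : ℝ => v * y) v y := by simpa using (hasDerivAt_id y).const_mul v
    have hs := hl.sin
    have hc := hl.cos
    have ha : HasDerivAt (fun y : ℝ => 2 * (1 - y)) (-2) y := by
      simpa using ((hasDerivAt_id y).const_sub 1).const_mul 2
    have := ((ha.mul hs).div_const v).sub ((hc.const_mul 2).div_const (v ^ 2))
    refine this.congr_deriv ?_
    field_simp
    ring
  rw [intervalIntegral.integral_eq_sub_of_hasDerivAt h2
    (Continuous.intervalIntegrable (by fun_prop) _ _)]
  simp [wiKern]
  ring

/-- Smoothed Tauberian statement -/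
theorem wi_smooth (g : ℝ → ℝ) (hgm : Measurable g) (C : ℝ) (hgC : ∀ t, |g t| ≤ C)
    (hg0 : ∀ t ≤ 0, g t = 0) (G : ℂ → ℂ) (hGc : ContinuousOn G {w | 0 ≤ w.re})
    (hG : ∀ w : ℂ, 0 < w.re → ∫ t, (g t : ℂ) * Complex.exp (-(w * t)) = G w)
    (l : ℝ) (hl : 0 < l) :
    Tendsto (fun u : ℝ => ∫ t, g t * wiKern (l * (u - t))) atTop (𝓝 0) := by
  have hC0 : 0 ≤ C := (abs_nonneg _).trans (hgC 0)
  -- step 1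
  have step1 : ∀ u δ : ℝ, 0 < δ → ∫ t, ((g t * Real.exp (-(δ * t)) * wiKern (l * (u - t)) : ℝ) : ℂ) =
      ∫ y in Set.Ioc (-1:ℝ) 1, (((1 - |y|) : ℝ) : ℂ) * Complex.exp (l * u * y * Complex.I) *
        G (δ + l * y * Complex.I) := by
    intro u δ hδ
    have hint1 : Integrable (fun t => ((g t * Real.exp (-(δ * t)) : ℝ) : ℂ)) := by
      suffices hh : Integrable (fun t => g t * Real.exp (-(δ * t))) from hh.ofReal
      have h0 : IntegrableOn (fun t => C * Real.exp (-δ * t)) (Set.Ioi 0) :=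
        (exp_neg_integrableOn_Ioi 0 hδ).const_mul C
      have h1 : Integrable (Set.indicator (Set.Ioi 0) (fun t => C * Real.exp (-δ * t))) :=
        h0.integrable_indicator measurableSet_Ioi
      refine h1.mono' (by fun_prop) (Eventually.of_forall fun t => ?_)
      by_cases ht : 0 < t
      · rw [Set.indicator_of_mem (Set.mem_Ioi.2 ht), norm_mul, Real.norm_eq_abs, Real.norm_eq_abs,
          Real.abs_exp, neg_mul]
        gcongr; exact hgC t
      · rw [hg0 t (not_lt.1 ht), zero_mul, norm_zero]
        exact Set.indicator_nonneg (fun t _ => by positivity) _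
    have hint2 : Integrable (fun y : ℝ => (((1 - |y|) : ℝ) : ℂ)) (volume.restrict (Set.Ioc (-1:ℝ) 1)) := by
      have : Continuous (fun y : ℝ => (((1 - |y|) : ℝ) : ℂ)) := by fun_prop
      exact (this.integrableOn_Icc).mono_set Set.Ioc_subset_Icc_self
    have hint3 : Integrable (Function.uncurry fun (t y : ℝ) =>
        (((g t * Real.exp (-(δ * t)) : ℝ) : ℂ) * (((1 - |y|) : ℝ) : ℂ)) *
          Complex.exp (((l * (u - t) * y : ℝ) : ℂ) * Complex.I))
        (volume.prod (volume.restrict (Set.Ioc (-1:ℝ) 1))) := by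
      refine (hint1.mul_prod hint2).mul_bdd (c := 1) ?_ (Eventually.of_forall fun z => ?_)
      · exact Continuous.aestronglyMeasurable (by fun_prop)
      · rw [Complex.norm_exp_ofReal_mul_I]
    have hsw := integral_integral_swap hint3
    have e1 : ∫ t, ((g t * Real.exp (-(δ * t)) * wiKern (l * (u - t)) : ℝ) : ℂ) =
        ∫ t, ∫ y in Set.Ioc (-1:ℝ) 1, (((g t * Real.exp (-(δ * t)) : ℝ) : ℂ) * (((1 - |y|) : ℝ) : ℂ)) *
          Complex.exp (((l * (u - t) * y : ℝ) : ℂ) * Complex.I) := by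
      refine integral_congr_ae ?_
      have : ∀ᵐ t : ℝ, t ≠ u := by simp [ae_iff]
      filter_upwards [this] with t ht
      have := wiKern_fourier (l * (u - t)) (mul_ne_zero hl.ne' (sub_ne_zero.2 ht.symm))
      rw [Complex.ofReal_mul, ← this, ← integral_const_mul]
      congr 1
      ext y
      push_cast
      ring
    rw [e1, hsw]
    refine integral_congr_ae (Eventually.of_forall fun y => ?_)
    simp only
    rw [← hG _ (by simpa using hδ), ← integral_const_mul]
    congr 1
    ext t
    push_cast
    have : Complex.exp (l * (u - t) * y * Complex.I) = Complex.exp (l * u * y * Complex.I) *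
        Complex.exp (- (l * y * Complex.I * t)) := by
      rw [← Complex.exp_add]; congr 1; ring
    rw [this]
    have : Complex.exp (-((δ + l * y * Complex.I) * t)) = Complex.exp (-(δ * t)) *
        Complex.exp (- (l * y * Complex.I * t)) := by
      rw [← Complex.exp_add]; congr 1; ring
    rw [this]; ring
  -- step 2 : limit
  have step2 : ∀ u : ℝ, ((∫ t, g t * wiKern (l * (u - t)) : ℝ) : ℂ) =
      ∫ y in Set.Ioc (-1:ℝ) 1, (((1 - |y|) : ℝ) : ℂ) * Complex.exp (l * u * y * Complex.I) *
        G (l * y * Complex.I) := by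
    intro u
    set δ : ℕ → ℝ := fun n => 1 / ((n:ℝ) + 1) with hδ
    have hδpos : ∀ n, 0 < δ n := fun n => by simp only [hδ]; positivity
    have hδle : ∀ n, δ n ≤ 1 := fun n => by
      simp only [hδ]
      rw [div_le_one (by positivity)]
      linarith [(Nat.cast_nonneg n : (0:ℝ) ≤ n)]
    have hδt : Tendsto δ atTop (𝓝 0) := tendsto_one_div_add_atTop_nhds_zero_nat
    have hk : Integrable (fun t => wiKern (l * (u - t))) := by
      have := (wiKern_integrable.comp_mul_left' hl.ne').comp_sub_left u
      exact this
    have t1 : Tendsto (fun n => ∫ t, ((g t * Real.exp (-(δ n * t)) * wiKern (l * (u - t)) : ℝ) : ℂ))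
        atTop (𝓝 (∫ t, ((g t * wiKern (l * (u - t)) : ℝ) : ℂ))) := by
      refine tendsto_integral_of_dominated_convergence (fun t => C * wiKern (l * (u - t)))
        (fun n => ?_) (hk.const_mul C) (fun n => Eventually.of_forall fun t => ?_)
        (Eventually.of_forall fun t => ?_)
      · have := wiKern_measurable
        exact (by fun_prop : Measurable _).aestronglyMeasurable
      · rw [Complex.norm_real, norm_mul, norm_mul, Real.norm_eq_abs, Real.norm_eq_abs,
          Real.norm_eq_abs, abs_of_nonneg (wiKern_nonneg _), Real.abs_exp]
        have hk0 := wiKern_nonneg (l * (u - t))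
        refine mul_le_mul_of_nonneg_right ?_ hk0
        by_cases ht : 0 < t
        · calc |g t| * Real.exp (-(δ n * t)) ≤ C * 1 := by
                gcongr
                · exact hgC t
                · rw [Real.exp_le_one_iff]
                  have := mul_pos (hδpos n) ht
                  linarith
            _ = C := mul_one _
        · rw [hg0 t (not_lt.1 ht)]; simpa using hC0
      · refine (Complex.continuous_ofReal.tendsto _).comp ?_
        refine Tendsto.mul_const _ ?_
        have : Tendsto (fun n => Real.exp (-(δ n * t))) atTop (𝓝 (Real.exp (-(0 * t)))) :=
          (Real.continuous_exp.tendsto _).comp ((hδt.mul_const t).neg)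
        simpa using this.const_mul (g t)
    have hcomp : IsCompact ((fun p : ℝ × ℝ => (p.1 + l * p.2 * Complex.I : ℂ)) ''
        (Set.Icc 0 1 ×ˢ Set.Icc (-1) 1)) :=
      (isCompact_Icc.prod isCompact_Icc).image (by fun_prop)
    have hsub : ((fun p : ℝ × ℝ => (p.1 + l * p.2 * Complex.I : ℂ)) ''
        (Set.Icc 0 1 ×ˢ Set.Icc (-1) 1)) ⊆ {w | 0 ≤ w.re} := by
      rintro _ ⟨p, hp, rfl⟩
      simpa using hp.1.1
    obtain ⟨D, hD⟩ := hcomp.exists_bound_of_continuousOn (hGc.mono hsub)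
    have hmemim : ∀ d y : ℝ, 0 ≤ d → d ≤ 1 → y ∈ Set.Ioc (-1:ℝ) 1 → ‖G (d + l * y * Complex.I)‖ ≤ D := by
      intro d y h1 h2 h3
      exact hD _ ⟨(d, y), ⟨⟨h1, h2⟩, ⟨h3.1.le, h3.2⟩⟩, rfl⟩
    have hGy : ∀ d : ℝ, 0 ≤ d → Continuous (fun y : ℝ => G (d + l * y * Complex.I)) := by
      intro d hd
      exact hGc.comp_continuous (by fun_prop) (fun y => by simpa using hd)
    have t2 : Tendsto (fun n => ∫ y in Set.Ioc (-1:ℝ) 1, (((1 - |y|) : ℝ) : ℂ) *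
        Complex.exp (l * u * y * Complex.I) * G (δ n + l * y * Complex.I)) atTop
        (𝓝 (∫ y in Set.Ioc (-1:ℝ) 1, (((1 - |y|) : ℝ) : ℂ) *
        Complex.exp (l * u * y * Complex.I) * G (l * y * Complex.I))) := by
      refine tendsto_integral_of_dominated_convergence (fun _ => D)
        (fun n => ?_) (integrable_const _) (fun n => ?_) (Eventually.of_forall fun y => ?_)
      · exact (Continuous.mul (by fun_prop) (hGy (δ n) (hδpos n).le)).aestronglyMeasurable
      · filter_upwards [ae_restrict_mem measurableSet_Ioc] with y hy
        rw [norm_mul, norm_mul]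
        have h1 : ‖Complex.exp (l * u * y * Complex.I)‖ = 1 := by
          have := Complex.norm_exp_ofReal_mul_I (l * u * y)
          push_cast at this; exact this
        have h2 : ‖(((1 - |y|) : ℝ) : ℂ)‖ ≤ 1 := by
          rw [Complex.norm_real, Real.norm_eq_abs, abs_le]
          have := abs_le.2 ⟨hy.1.le, hy.2⟩
          constructor <;> linarith [abs_nonneg y]
        rw [h1, mul_one]
        calc _ ≤ 1 * D := by
              gcongr
              exact hmemim _ _ (hδpos n).le (hδle n) hy
          _ = D := one_mul _
      · refine Tendsto.const_mul _ ?_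
        have h1 : ContinuousWithinAt G {w | 0 ≤ w.re} (l * y * Complex.I) := hGc _ (by simp)
        refine h1.tendsto.comp (tendsto_nhdsWithin_iff.2 ⟨?_, Eventually.of_forall fun n => ?_⟩)
        · have : Tendsto (fun n => ((δ n : ℝ) : ℂ) + l * y * Complex.I) atTop
              (𝓝 (((0:ℝ):ℂ) + l * y * Complex.I)) :=
            ((Complex.continuous_ofReal.tendsto _).comp hδt).add_const _
          simpa using this
        · simpa using (hδpos n).le
    have t3 := t2.congr (fun n => (step1 u (δ n) (hδpos n)).symm)
    rw [← tendsto_nhds_unique t1 t3]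
    exact integral_complex_ofReal.symm
  -- step 3 : Riemann-Lebesgue
  have hRL := Real.tendsto_integral_exp_smul_cocompact
    (Set.indicator (Set.Ioc (-1:ℝ) 1) (fun y : ℝ => (((1 - |y|) : ℝ) : ℂ) * G (l * y * Complex.I)))
  have hw : Tendsto (fun u : ℝ => -(l / (2 * Real.pi) * u)) atTop (cocompact ℝ) := by
    refine Tendsto.mono_right ?_ atBot_le_cocompact
    exact tendsto_neg_atTop_atBot.comp (tendsto_id.const_mul_atTop (by positivity))
  have h3 := hRL.comp hw
  have h4 : Tendsto (fun u : ℝ => ((∫ t, g t * wiKern (l * (u - t)) : ℝ) : ℂ)) atTop (𝓝 0) := by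
    refine h3.congr fun u => ?_
    rw [step2, ← integral_indicator measurableSet_Ioc]
    simp only [Function.comp]
    congr 1
    ext y
    by_cases hy : y ∈ Set.Ioc (-1:ℝ) 1
    · rw [Set.indicator_of_mem hy, Set.indicator_of_mem hy, Circle.smul_def, Real.fourierChar_apply,
        smul_eq_mul]
      have : ((2 * Real.pi * -(y * -(l / (2 * Real.pi) * u)) : ℝ) : ℂ) = l * u * y := by
        rw [← Complex.ofReal_mul, ← Complex.ofReal_mul]
        congr 1
        field_simp
      rw [this]; ring
    · rw [Set.indicator_of_notMem hy, Set.indicator_of_notMem hy, smul_zero]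
  have h5 := (Complex.continuous_re.tendsto _).comp h4
  simpa [Function.comp_def] using h5

end

section
open Filter Finset MeasureTheory Topology

theorem wi_taub (B : ℝ → ℝ) (hBm : Measurable B) (C A : ℝ) (hB0 : ∀ t, 0 ≤ B t) (hBC : ∀ t, B t ≤ C)
    (hBn : ∀ t ≤ 0, B t = 0) (hmono : ∀ s t, s ≤ t → B s * Real.exp s ≤ B t * Real.exp t)
    (G : ℂ → ℂ) (hGc : ContinuousOn G {w | 0 ≤ w.re})
    (hG : ∀ w : ℂ, 0 < w.re → ∫ t, ((B t - (if 0 < t then A else 0) : ℝ) : ℂ) *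
      Complex.exp (-(w * t)) = G w) :
    Tendsto B atTop (𝓝 A) := by
  set c := ∫ v, wiKern v with hc
  have hcpos : 0 < c := wiKern_int_pos
  have hmst : Measurable (fun t : ℝ => if 0 < t then A else 0) :=
    Measurable.ite measurableSet_Ioi measurable_const measurable_const
  have hJint : ∀ u l : ℝ, Integrable (fun v => B (u - v / l) * wiKern v) := by
    intro u l
    refine wiKern_integrable.bdd_mul (c := C) ?_ (Eventually.of_forall fun v => ?_)
    · exact (hBm.comp (by fun_prop)).aestronglyMeasurable
    · rw [Real.norm_eq_abs, abs_of_nonneg (hB0 _)]; exact hBC _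
  have hJ : ∀ l : ℝ, 0 < l → Tendsto (fun u => ∫ v, B (u - v / l) * wiKern v) atTop (𝓝 (A * c)) := by
    intro l hl
    have h1 := wi_smooth (fun t => B t - (if 0 < t then A else 0)) (hBm.sub hmst) (C + |A|)
      (fun t => by
        refine (abs_sub _ _).trans (add_le_add ?_ ?_)
        · rw [abs_of_nonneg (hB0 _)]; exact hBC _
        · split_ifs
          · exact le_rfl
          · simp)
      (fun t ht => by simp [hBn t ht, not_lt.2 ht]) G hGc hG l hl
    have h2 : ∀ u, ∫ t, (B t - (if 0 < t then A else 0)) * wiKern (l * (u - t)) =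
        l⁻¹ * ∫ v, (B (u - v / l) - (if 0 < u - v / l then A else 0)) * wiKern v := by
      intro u
      rw [← integral_sub_left_eq_self _ _ u]
      have := Measure.integral_comp_mul_left (fun v => (B (u - v / l) - (if 0 < u - v / l then A else 0)) * wiKern v) l
      rw [abs_of_pos (inv_pos.2 hl), smul_eq_mul] at this
      rw [← this]
      congr 1
      ext s
      rw [mul_div_cancel_left₀ _ hl.ne', sub_sub_cancel]
    have h3 : Tendsto (fun u => ∫ v, (if 0 < u - v / l then A else 0) * wiKern v) atTop (𝓝 (∫ v, A * wiKern v)) := by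
      refine tendsto_integral_filter_of_dominated_convergence (fun v => |A| * wiKern v)
        (Eventually.of_forall fun u => ?_) (Eventually.of_forall fun u => Eventually.of_forall fun v => ?_)
        (wiKern_integrable.const_mul _) (Eventually.of_forall fun v => ?_)
      · exact ((hmst.comp (by fun_prop : Measurable fun v : ℝ => u - v / l)).mul wiKern_measurable).aestronglyMeasurable
      · rw [norm_mul, Real.norm_eq_abs, Real.norm_eq_abs, abs_of_nonneg (wiKern_nonneg v)]
        refine mul_le_mul_of_nonneg_right ?_ (wiKern_nonneg v)
        split_ifs
        · exact le_rfl
        · simp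
      · refine tendsto_const_nhds.congr' ?_
        filter_upwards [eventually_gt_atTop (v / l)] with u hu
        rw [if_pos (by linarith)]
    have h4 : ∀ u, ∫ v, B (u - v / l) * wiKern v = l * (∫ t, (B t - (if 0 < t then A else 0)) * wiKern (l * (u - t)))
        + ∫ v, (if 0 < u - v / l then A else 0) * wiKern v := by
      intro u
      rw [h2, mul_inv_cancel_left₀ hl.ne', ← integral_add]
      · congr 1; ext v; ring
      · have hi : Integrable (fun v => (if 0 < u - v / l then A else 0) * wiKern v) := by
          refine wiKern_integrable.bdd_mul (c := |A|) ?_ (Eventually.of_forall fun v => ?_)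
          · exact ((hmst.comp (by fun_prop : Measurable fun v : ℝ => u - v / l))).aestronglyMeasurable
          · split_ifs
            · exact le_rfl
            · simp
        refine ((hJint u l).sub hi).congr (Eventually.of_forall fun v => ?_)
        simp only [Pi.sub_apply]; ring
      · refine wiKern_integrable.bdd_mul (c := |A|) ?_ (Eventually.of_forall fun v => ?_)
        · exact ((hmst.comp (by fun_prop : Measurable fun v : ℝ => u - v / l))).aestronglyMeasurable
        · split_ifs
          · exact le_rfl
          · simp
    simp_rw [h4]
    have := (h1.const_mul l).add h3
    rw [integral_const_mul, mul_zero, zero_add] at this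
    exact this
  set m : ℕ → ℝ := fun n => ∫ v in Set.Icc (-(n:ℝ)) n, wiKern v with hm
  have hm0 : ∀ n, 0 ≤ m n := fun n => integral_nonneg fun v => wiKern_nonneg v
  have hmt : Tendsto m atTop (𝓝 c) := by
    have : Tendsto (fun n : ℕ => ∫ v in Set.Icc (-(n:ℝ)) n, wiKern v) atTop
        (𝓝 (∫ v in ⋃ n : ℕ, Set.Icc (-(n:ℝ)) n, wiKern v)) := by
      refine tendsto_setIntegral_of_monotone (fun n => measurableSet_Icc) ?_ wiKern_integrable.integrableOn
      intro a b hab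
      have : (a:ℝ) ≤ b := by exact_mod_cast hab
      exact Set.Icc_subset_Icc (by linarith) this
    have hU : (⋃ n : ℕ, Set.Icc (-(n:ℝ)) n) = Set.univ := by
      refine Set.eq_univ_of_forall fun x => ?_
      obtain ⟨n, hn⟩ := exists_nat_ge |x|
      exact Set.mem_iUnion.2 ⟨n, abs_le.1 hn⟩
    rw [hU, setIntegral_univ] at this
    exact this
  have hwin : ∀ n : ℕ, 0 < n → ∀ v ∈ Set.Icc (-(n:ℝ)) n, v / (n:ℝ)^2 ∈ Set.Icc (-(1 / (n:ℝ))) (1 / n) := by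
    intro n hn v hv
    have hn' : (0:ℝ) < n := by exact_mod_cast hn
    constructor
    · rw [le_div_iff₀ (by positivity)]
      have : -(1 / (n:ℝ)) * n ^ 2 = -n := by field_simp
      rw [this]; exact hv.1
    · rw [div_le_iff₀ (by positivity)]
      have : (1 / (n:ℝ)) * n ^ 2 = n := by field_simp
      rw [this]; exact hv.2
  have hexp : ∀ s t h : ℝ, s ≤ t → t ≤ s + 2 * h → B s ≤ B t * Real.exp (2 * h) := by
    intro s t h hst hts
    have h1 := hmono s t hst
    have h2 : B t * Real.exp t ≤ B t * Real.exp (2 * h) * Real.exp s := by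
      rw [mul_assoc, ← Real.exp_add]
      exact mul_le_mul_of_nonneg_left (Real.exp_le_exp.2 (by linarith)) (hB0 t)
    exact le_of_mul_le_mul_right (h1.trans h2) (Real.exp_pos s)
  have hlow : ∀ n : ℕ, 0 < n → ∀ u : ℝ, B (u - 1 / n) * m n ≤ Real.exp (2 * (1 / n)) *
      ∫ v, B (u - v / (n:ℝ)^2) * wiKern v := by
    intro n hn u
    calc B (u - 1 / n) * m n = ∫ v in Set.Icc (-(n:ℝ)) n, B (u - 1 / n) * wiKern v := by
          rw [integral_const_mul]
      _ ≤ ∫ v in Set.Icc (-(n:ℝ)) n, Real.exp (2 * (1 / n)) * (B (u - v / (n:ℝ)^2) * wiKern v) := by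
          refine setIntegral_mono_on (wiKern_integrable.integrableOn.const_mul _)
            ((hJint _ _).integrableOn.const_mul _) measurableSet_Icc fun v hv => ?_
          rw [← mul_assoc]
          refine mul_le_mul_of_nonneg_right ?_ (wiKern_nonneg v)
          rw [mul_comm]
          have := hwin n hn v hv
          exact hexp _ _ _ (by linarith [this.2]) (by linarith [this.1])
      _ ≤ ∫ v, Real.exp (2 * (1 / n)) * (B (u - v / (n:ℝ)^2) * wiKern v) := by
          refine setIntegral_le_integral ((hJint _ _).const_mul _) (Eventually.of_forall fun v => ?_)
          have := hB0 (u - v / (n:ℝ)^2)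
          have := wiKern_nonneg v
          simp only [Pi.zero_apply]; positivity
      _ = _ := by rw [integral_const_mul]
  have hupp : ∀ n : ℕ, 0 < n → ∀ u : ℝ, ∫ v, B (u - v / (n:ℝ)^2) * wiKern v ≤
      B (u + 1 / n) * Real.exp (2 * (1 / n)) * m n + C * (c - m n) := by
    intro n hn u
    rw [← integral_add_compl (measurableSet_Icc (a := -(n:ℝ)) (b := n)) (hJint _ _)]
    refine add_le_add ?_ ?_
    · rw [hm]; simp only []
      rw [← integral_const_mul]
      refine setIntegral_mono_on (hJint _ _).integrableOn (wiKern_integrable.integrableOn.const_mul _)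
         measurableSet_Icc fun v hv => ?_
      refine mul_le_mul_of_nonneg_right ?_ (wiKern_nonneg v)
      have := hwin n hn v hv
      exact hexp _ _ _ (by linarith [this.1]) (by linarith [this.2])
    · have h1 : c - m n = ∫ v in (Set.Icc (-(n:ℝ)) n)ᶜ, wiKern v := by
        rw [hc, ← integral_add_compl (measurableSet_Icc (a := -(n:ℝ)) (b := n)) wiKern_integrable]
        simp [hm]
      rw [h1, ← integral_const_mul]
      refine setIntegral_mono_on (hJint _ _).integrableOn (wiKern_integrable.integrableOn.const_mul _)
         measurableSet_Icc.compl fun v hv => ?_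
      exact mul_le_mul_of_nonneg_right (hBC _) (wiKern_nonneg v)
  have hexpt : Tendsto (fun n : ℕ => Real.exp (2 * (1 / (n:ℝ)))) atTop (𝓝 1) := by
    have : Tendsto (fun n : ℕ => 2 * (1 / (n:ℝ))) atTop (𝓝 0) := by
      simpa using (tendsto_one_div_atTop_nhds_zero_nat (𝕜 := ℝ)).const_mul 2
    simpa [Function.comp_def] using (Real.continuous_exp.tendsto _).comp this
  rw [tendsto_order]
  constructor
  · intro b hb
    have ht : Tendsto (fun n : ℕ => b * Real.exp (2 * (1 / n)) * m n + C * (c - m n)) atTop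
        (𝓝 (b * 1 * c + C * (c - c))) :=
      ((hexpt.const_mul b).mul hmt).add ((hmt.const_sub c).const_mul C)
    have hlt : b * 1 * c + C * (c - c) < A * c := by
      have := mul_lt_mul_of_pos_right hb hcpos
      simpa using this
    obtain ⟨n, hn1, hn⟩ := ((ht.eventually_lt_const hlt).and (eventually_gt_atTop 0)).exists
    have hev := (hJ ((n:ℝ)^2) (by positivity)).eventually_const_lt hn1
    have hsh : Tendsto (fun u : ℝ => u - 1 / (n:ℝ)) atTop atTop := tendsto_atTop_add_const_right _ _ tendsto_id
    filter_upwards [hsh.eventually hev] with u hu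
    by_contra! hcon
    have h1 := hupp n hn (u - 1 / n)
    rw [sub_add_cancel] at h1
    have h2 : B u * Real.exp (2 * (1 / n)) * m n ≤ b * Real.exp (2 * (1 / n)) * m n := by
      have := hm0 n
      gcongr
    linarith
  · intro b hb
    have ht : Tendsto (fun n : ℕ => Real.exp (2 * (1 / n)) * (A * c) - b * m n) atTop
        (𝓝 (1 * (A * c) - b * c)) :=
      (hexpt.mul_const _).sub (hmt.const_mul b)
    have hlt : 1 * (A * c) - b * c < 0 := by
      have := mul_lt_mul_of_pos_right hb hcpos
      linarith
    obtain ⟨n, hn1, hn⟩ := ((ht.eventually_lt_const hlt).and (eventually_gt_atTop 0)).exists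
    have h2 := ((hJ ((n:ℝ)^2) (by positivity)).const_mul (Real.exp (2 * (1 / (n:ℝ)))))
    have hev := h2.eventually_lt_const (sub_neg.1 hn1)
    have hsh : Tendsto (fun u : ℝ => u + 1 / (n:ℝ)) atTop atTop := tendsto_atTop_add_const_right _ _ tendsto_id
    filter_upwards [hsh.eventually hev] with u hu
    have h1 := hlow n hn (u + 1 / n)
    rw [add_sub_cancel_right] at h1
    exact lt_of_mul_lt_mul_right (h1.trans_lt hu) (hm0 n)

end

section
open Filter Finset MeasureTheory Topology

theorem wi_main (f : ℕ → ℝ) (hf0 : ∀ n, 0 ≤ f n) (C : ℝ) (hC : ∀ n : ℕ, ∑ k ∈ Icc 1 n, f k ≤ C * n)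
    (A : ℝ) (F : ℂ → ℂ) (hFc : ContinuousOn F {s | 1 ≤ s.re})
    (hF : ∀ s : ℂ, 1 < s.re → F s = LSeries (fun n => (f n : ℂ)) s - A / (s - 1)) :
    Tendsto (fun N : ℕ => (∑ k ∈ Icc 1 N, f k) / N) atTop (𝓝 A) := by
  set S : ℝ → ℝ := fun x => ∑ k ∈ Icc 1 ⌊x⌋₊, f k with hS
  have hSmono : Monotone S := by
    intro x y hxy
    exact sum_le_sum_of_subset_of_nonneg (Icc_subset_Icc_right (Nat.floor_mono hxy)) fun i _ _ => hf0 i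
  have hS0 : ∀ x, 0 ≤ S x := fun x => sum_nonneg fun i _ => hf0 i
  have hC0 : 0 ≤ C := by
    have := hC 1
    have h2 : 0 ≤ ∑ k ∈ Icc 1 1, f k := sum_nonneg fun i _ => hf0 i
    push_cast at this; linarith
  have hSC : ∀ x, 0 ≤ x → S x ≤ C * x := fun x hx =>
    (hC _).trans (mul_le_mul_of_nonneg_left (Nat.floor_le hx) hC0)
  set B : ℝ → ℝ := fun t => if 0 < t then S (Real.exp t) * Real.exp (-t) else 0 with hB
  have hBm : Measurable B :=
    Measurable.ite measurableSet_Ioi ((hSmono.measurable.comp Real.measurable_exp).mul (by fun_prop))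
      measurable_const
  have hB0 : ∀ t, 0 ≤ B t := fun t => by
    simp only [hB]; split_ifs
    · exact mul_nonneg (hS0 _) (Real.exp_pos _).le
    · exact le_rfl
  have hBC : ∀ t, B t ≤ C := fun t => by
    simp only [hB]; split_ifs
    · rw [Real.exp_neg, ← div_eq_mul_inv, div_le_iff₀ (Real.exp_pos _)]
      exact hSC _ (Real.exp_pos _).le
    · exact hC0
  have hBn : ∀ t ≤ 0, B t = 0 := fun t ht => by simp [hB, not_lt.2 ht]
  have hBe : ∀ t, 0 < t → B t * Real.exp t = S (Real.exp t) := fun t ht => by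
    simp only [hB, if_pos ht]; rw [mul_assoc, ← Real.exp_add]; simp
  have hmono : ∀ s t, s ≤ t → B s * Real.exp s ≤ B t * Real.exp t := by
    intro s t hst
    by_cases hs : 0 < s
    · rw [hBe s hs, hBe t (hs.trans_le hst)]
      exact hSmono (Real.exp_le_exp.2 hst)
    · rw [hBn s (not_lt.1 hs), zero_mul]
      exact mul_nonneg (hB0 _) (Real.exp_pos _).le
  have key := wi_taub B hBm C A hB0 hBC hBn hmono (fun w => (F (1 + w) - A) / (1 + w))
    (by
      refine ContinuousOn.div ((hFc.comp (by fun_prop) fun w hw => ?_).sub continuousOn_const)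
        (by fun_prop) fun w hw => ?_
      · simpa using hw
      · intro h
        have := congrArg Complex.re h
        simp at this hw
        linarith)
    (by
      intro w hw
      have hexpi : IntegrableOn (fun t : ℝ => Complex.exp (-w * t)) (Set.Ioi 0) :=
        integrableOn_exp_mul_complex_Ioi (by simpa using hw) 0
      have hBi : IntegrableOn (fun t : ℝ => (B t : ℂ) * Complex.exp (-w * t)) (Set.Ioi 0) := by
        refine Integrable.bdd_mul (c := C) hexpi ?_ (Eventually.of_forall fun t => ?_)
        · exact (Complex.measurable_ofReal.comp hBm).aestronglyMeasurable
        · rw [Complex.norm_real, Real.norm_eq_abs, abs_of_nonneg (hB0 t)]; exact hBC t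
      have h1 : ∫ t, ((B t - (if 0 < t then A else 0) : ℝ) : ℂ) * Complex.exp (-(w * t)) =
          ∫ t in Set.Ioi 0, ((B t : ℂ) * Complex.exp (-w * t) - A * Complex.exp (-w * t)) := by
        rw [← integral_indicator measurableSet_Ioi]
        congr 1
        ext t
        by_cases ht : 0 < t
        · rw [Set.indicator_of_mem (Set.mem_Ioi.2 ht), if_pos ht]; push_cast; ring_nf
        · rw [Set.indicator_of_notMem (by simpa using ht), if_neg ht, hBn t (not_lt.1 ht)]; simp
      rw [h1, integral_sub hBi (hexpi.const_mul _), integral_const_mul,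
        integral_exp_mul_complex_Ioi (by simpa using hw)]
      have h2 : LSeries (fun n => (f n : ℂ)) (1 + w) = (1 + w) * ∫ t in Set.Ioi 0,
          ((B t : ℂ) * Complex.exp (-w * t)) := by
        rw [LSeries_eq_mul_integral_of_nonneg f (r := 1) zero_le_one (by simpa using hw) ?_ hf0]
        · congr 1
          have him : Real.exp '' Set.Ioi 0 = Set.Ioi 1 := by
            ext y
            constructor
            · rintro ⟨t, ht, rfl⟩
              exact Real.one_lt_exp_iff.2 ht
            · intro hy
              exact ⟨Real.log y, Real.log_pos hy, Real.exp_log (zero_lt_one.trans hy)⟩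
          rw [← him, integral_image_eq_integral_abs_deriv_smul measurableSet_Ioi
            (fun x _ => (Real.hasDerivAt_exp x).hasDerivWithinAt) Real.exp_injective.injOn]
          refine setIntegral_congr_fun measurableSet_Ioi fun t ht => ?_
          have h3 : (∑ k ∈ Icc 1 ⌊Real.exp t⌋₊, (f k : ℂ)) = ((S (Real.exp t) : ℝ) : ℂ) := by
            simp [hS]
          simp only [h3]
          rw [abs_of_pos (Real.exp_pos _), ← hBe t ht, Complex.real_smul, Complex.ofReal_exp]
          have h4 : Complex.exp t ^ (-(1 + w + 1)) = Complex.exp (t * (-(1 + w + 1))) := by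
            rw [Complex.cpow_def_of_ne_zero (Complex.exp_ne_zero _), ← Complex.ofReal_exp,
              ← Complex.ofReal_log (Real.exp_pos _).le, Real.log_exp]
          rw [h4, Complex.ofReal_mul, Complex.ofReal_exp]
          have h5 : Complex.exp (-w * t) = Complex.exp t * Complex.exp t *
              Complex.exp (t * (-(1 + w + 1))) := by
            rw [← Complex.exp_add, ← Complex.exp_add]; congr 1; ring
          rw [h5]; ring
        · refine Asymptotics.IsBigO.of_bound C (Eventually.of_forall fun n => ?_)
          rw [Real.norm_eq_abs, abs_of_nonneg (sum_nonneg fun i _ => hf0 i), Real.rpow_one,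
            Real.norm_natCast]
          exact hC n
      have hw0 : w ≠ 0 := by rintro rfl; simp at hw
      have hw1 : 1 + w ≠ 0 := by
        intro h
        have := congrArg Complex.re h
        simp at this
        linarith
      rw [hF (1 + w) (by simpa using hw), h2]
      simp only [add_sub_cancel_left, Complex.ofReal_zero, mul_zero, Complex.exp_zero]
      field_simp
      ring)
  have hlog : Tendsto (fun N : ℕ => Real.log N) atTop atTop :=
    Real.tendsto_log_atTop.comp tendsto_natCast_atTop_atTop
  refine (key.comp hlog).congr' ?_
  filter_upwards [eventually_gt_atTop 1] with N hN
  have hN' : (1:ℝ) < N := by exact_mod_cast hN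
  simp only [Function.comp, hB, if_pos (Real.log_pos hN')]
  rw [Real.exp_neg, Real.exp_log (by linarith), ← div_eq_mul_inv]
  simp [hS]

theorem wi_residue (q : ℕ) [NeZero q] (a : ZMod q) (ha : IsUnit a) :
    Tendsto (fun N : ℕ => (∑ k ∈ Icc 1 N, ArithmeticFunction.vonMangoldt.residueClass a k) / N)
      atTop (𝓝 ((q.totient : ℝ)⁻¹)) := by
  refine wi_main _ (fun n => ?_) (Real.log 4 + 4) (fun n => ?_) _
    (ArithmeticFunction.vonMangoldt.LFunctionResidueClassAux a)
    (ArithmeticFunction.vonMangoldt.continuousOn_LFunctionResidueClassAux a) (fun s hs => ?_)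
  · exact Set.indicator_nonneg (fun n _ => ArithmeticFunction.vonMangoldt_nonneg) _
  · have h := Chebyshev.psi_le_const_mul_self (Nat.cast_nonneg n : (0:ℝ) ≤ n)
    refine le_trans ?_ h
    rw [Chebyshev.psi, Nat.floor_natCast]
    exact sum_le_sum fun i _ => ArithmeticFunction.vonMangoldt.residueClass_le a i
  · rw [ArithmeticFunction.vonMangoldt.eqOn_LFunctionResidueClassAux ha hs]
    simp

end

section
open Filter Finset MeasureTheory Topology

/-- sum over pairs with product at most N -/
theorem na_hyp {E : Type*} [AddCommMonoid E] (F : ℕ → ℕ → E) (N : ℕ) :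
    ∑ n ∈ Ioc 0 N, ∑ x ∈ n.divisorsAntidiagonal, F x.1 x.2 =
      ∑ d ∈ Ioc 0 N, ∑ m ∈ Ioc 0 (N / d), F d m := by
  rw [sum_sigma', sum_sigma']
  refine sum_bij' (fun a _ => ⟨a.2.1, a.2.2⟩) (fun b _ => ⟨b.1 * b.2, (b.1, b.2)⟩) ?_ ?_ ?_ ?_ ?_
  · rintro ⟨n, d, m⟩ h
    simp only [mem_sigma, mem_Ioc, Nat.mem_divisorsAntidiagonal] at h ⊢
    obtain ⟨⟨h1, h2⟩, h3, h4⟩ := h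
    have hd : 0 < d := Nat.pos_of_ne_zero fun h => by simp [h] at h3; omega
    have hm : 0 < m := Nat.pos_of_ne_zero fun h => by simp [h] at h3; omega
    refine ⟨⟨hd, ?_⟩, hm, ?_⟩
    · exact (Nat.le_mul_of_pos_right d hm).trans (h3.le.trans h2)
    · rw [Nat.le_div_iff_mul_le hd, mul_comm]; omega
  · rintro ⟨d, m⟩ h
    simp only [mem_sigma, mem_Ioc, Nat.mem_divisorsAntidiagonal] at h ⊢
    obtain ⟨⟨h1, h2⟩, h3, h4⟩ := h
    rw [Nat.le_div_iff_mul_le h1, mul_comm] at h4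
    have := Nat.mul_pos h1 h3
    exact ⟨⟨this, h4⟩, trivial, this.ne'⟩
  · rintro ⟨n, d, m⟩ h
    simp only [mem_sigma, mem_Ioc, Nat.mem_divisorsAntidiagonal] at h ⊢
    obtain ⟨_, rfl, _⟩ := h
    rfl
  · rintro ⟨d, m⟩ h; rfl
  · rintro ⟨n, d, m⟩ h; rfl

open ArithmeticFunction in
/-- Selberg's function -/
noncomputable def lam2 : ArithmeticFunction ℝ :=
  pmul vonMangoldt log + vonMangoldt * vonMangoldt

open ArithmeticFunction in
theorem lam2_zeta : lam2 * zeta = pmul log log := by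
  have hd : ∀ f g : ArithmeticFunction ℝ, pmul log (f * g) = pmul log f * g + f * pmul log g := by
    intro f g
    ext n
    simp only [pmul_apply, mul_apply, ArithmeticFunction.add_apply, mul_sum, ← sum_add_distrib]
    refine sum_congr rfl fun x hx => ?_
    obtain ⟨h1, h2⟩ := Nat.mem_divisorsAntidiagonal.1 hx
    have h3 : x.1 ≠ 0 := fun h => h2 (by rw [← h1, h, zero_mul])
    have h4 : x.2 ≠ 0 := fun h => h2 (by rw [← h1, h, mul_zero])
    rw [← h1, log_apply, log_apply, log_apply, Nat.cast_mul,
      Real.log_mul (by exact_mod_cast h3) (by exact_mod_cast h4)]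
    ring
  have hz : pmul log (zeta : ArithmeticFunction ℝ) = log := pmul_zeta _
  calc lam2 * zeta = pmul log vonMangoldt * zeta + vonMangoldt * (vonMangoldt * zeta) := by
        rw [lam2, add_mul, mul_assoc, pmul_comm]
    _ = pmul log (vonMangoldt * zeta) := by rw [hd, hz, vonMangoldt_mul_zeta]
    _ = _ := by rw [vonMangoldt_mul_zeta]

open ArithmeticFunction in
theorem lam2_moebius : lam2 = ((moebius : ArithmeticFunction ℤ) : ArithmeticFunction ℝ) * pmul log log := by
  rw [← lam2_zeta, mul_comm lam2, ← mul_assoc, coe_moebius_mul_coe_zeta, one_mul]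

open ArithmeticFunction in
theorem lam2_nonneg (n : ℕ) : 0 ≤ lam2 n := by
  simp only [lam2, ArithmeticFunction.add_apply, pmul_apply, mul_apply, log_apply]
  refine add_nonneg (mul_nonneg vonMangoldt_nonneg (Real.log_natCast_nonneg n))
    (sum_nonneg fun x _ => mul_nonneg vonMangoldt_nonneg vonMangoldt_nonneg)

open ArithmeticFunction in
theorem vm_log_le_lam2 (n : ℕ) : vonMangoldt n * Real.log n ≤ lam2 n := by
  simp only [lam2, ArithmeticFunction.add_apply, pmul_apply, mul_apply, log_apply]
  have : 0 ≤ ∑ x ∈ n.divisorsAntidiagonal, vonMangoldt x.1 * vonMangoldt x.2 :=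
    sum_nonneg fun x _ => mul_nonneg vonMangoldt_nonneg vonMangoldt_nonneg
  linarith

/-- Chebyshev constant -/
noncomputable def chC : ℝ := Real.log 4 + 4

theorem chC_pos : 0 < chC := by
  unfold chC; have := Real.log_pos (by norm_num : (1:ℝ) < 4); linarith

open ArithmeticFunction in
theorem vm_sum_le (n : ℕ) : ∑ k ∈ Ioc 0 n, vonMangoldt k ≤ chC * n := by
  have h := Chebyshev.psi_le_const_mul_self (Nat.cast_nonneg n : (0:ℝ) ≤ n)
  rw [Chebyshev.psi, Nat.floor_natCast] at h
  exact h

open ArithmeticFunction in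
theorem vm_div_sum_le (n : ℕ) : ∑ k ∈ Ioc 0 n, vonMangoldt k / k ≤ Real.log n + chC := by
  rcases Nat.eq_zero_or_pos n with rfl | hn
  · simp [chC_pos.le]
  have hn' : (0:ℝ) < n := by exact_mod_cast hn
  have h1 : ∑ k ∈ Ioc 0 n, vonMangoldt k * ((n / k : ℕ) : ℝ) = ∑ k ∈ Ioc 0 n, Real.log k := by
    have := na_hyp (fun d _ => vonMangoldt d) n
    rw [sum_congr rfl (fun d _ => by rw [sum_const, Nat.card_Ioc, nsmul_eq_mul, mul_comm, Nat.sub_zero] :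
      ∀ d ∈ Ioc 0 n, ∑ m ∈ Ioc 0 (n / d), vonMangoldt d = vonMangoldt d * ((n / d : ℕ) : ℝ))] at this
    rw [← this]
    refine sum_congr rfl fun k _ => ?_
    rw [Nat.sum_divisorsAntidiagonal (fun d _ => vonMangoldt d), vonMangoldt_sum]
  have h2 : ∑ k ∈ Ioc 0 n, Real.log k ≤ n * Real.log n := by
    calc _ ≤ ∑ k ∈ Ioc 0 n, Real.log n := by
          refine sum_le_sum fun k hk => ?_
          rw [mem_Ioc] at hk
          exact Real.log_le_log (by exact_mod_cast hk.1) (by exact_mod_cast hk.2)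
      _ = _ := by simp
  have h3 : ∀ k ∈ Ioc 0 n, n * (vonMangoldt k / k) ≤ vonMangoldt k * ((n / k : ℕ) : ℝ) + vonMangoldt k := by
    intro k hk
    have h4 : (n:ℝ) / k ≤ ((n / k : ℕ) : ℝ) + 1 := by
      rw [← Nat.floor_div_eq_div (K := ℝ)]
      exact (Nat.lt_floor_add_one _).le
    have := mul_le_mul_of_nonneg_left h4 (vonMangoldt_nonneg (n := k))
    calc _ = vonMangoldt k * ((n:ℝ) / k) := by ring
      _ ≤ _ := this
      _ = _ := by ring
  have h5 := sum_le_sum h3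
  rw [← mul_sum, sum_add_distrib, h1] at h5
  have h6 := vm_sum_le n
  refine le_of_mul_le_mul_left ?_ hn'
  linarith

open ArithmeticFunction in
theorem lam2_sum_le (n : ℕ) : ∑ k ∈ Ioc 0 n, lam2 k ≤ (chC + chC ^ 2 + chC) * (n * (1 + Real.log n)) := by
  have hc := chC_pos
  have hl := Real.log_natCast_nonneg n
  have h1 : ∑ k ∈ Ioc 0 n, (pmul vonMangoldt log) k ≤ chC * n * Real.log n := by
    calc _ ≤ ∑ k ∈ Ioc 0 n, vonMangoldt k * Real.log n := by
          refine sum_le_sum fun k hk => ?_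
          rw [mem_Ioc] at hk
          rw [pmul_apply, log_apply]
          exact mul_le_mul_of_nonneg_left (Real.log_le_log (by exact_mod_cast hk.1) (by exact_mod_cast hk.2))
            vonMangoldt_nonneg
      _ ≤ _ := by rw [← sum_mul]; exact mul_le_mul_of_nonneg_right (vm_sum_le n) hl
  have h2 : ∑ k ∈ Ioc 0 n, (vonMangoldt * vonMangoldt) k ≤ chC * n * (Real.log n + chC) := by
    rw [sum_Ioc_mul_eq_sum_sum]
    calc _ ≤ ∑ k ∈ Ioc 0 n, chC * n * (vonMangoldt k / k) := by
          refine sum_le_sum fun k hk => ?_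
          rw [mem_Ioc] at hk
          have h3 := vm_sum_le (n / k)
          have h4 : ((n / k : ℕ) : ℝ) ≤ (n:ℝ) / k := Nat.cast_div_le
          calc _ ≤ vonMangoldt k * (chC * ((n:ℝ) / k)) :=
                mul_le_mul_of_nonneg_left (h3.trans (by gcongr)) vonMangoldt_nonneg
            _ = _ := by ring
      _ ≤ _ := by
        rw [← mul_sum]
        exact mul_le_mul_of_nonneg_left (vm_div_sum_le n) (by positivity)
  simp only [lam2, ArithmeticFunction.add_apply, sum_add_distrib]
  have h7 : (0:ℝ) ≤ n := Nat.cast_nonneg n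
  have h8 : 0 ≤ chC * n := by positivity
  have h9 : 0 ≤ chC ^ 2 * n * Real.log n := by positivity
  nlinarith

end

section
open Filter Finset MeasureTheory Topology

noncomputable def ee (t : ℝ) : ℂ := Complex.exp (((2 * Real.pi * t : ℝ) : ℂ) * Complex.I)

theorem norm_ee (t : ℝ) : ‖ee t‖ = 1 := Complex.norm_exp_ofReal_mul_I _

theorem ee_add (s t : ℝ) : ee (s + t) = ee s * ee t := by
  unfold ee; rw [← Complex.exp_add]; congr 1; push_cast; ring

theorem ee_zero : ee 0 = 1 := by simp [ee]

theorem ee_int (n : ℤ) : ee n = 1 := by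
  unfold ee
  rw [Complex.exp_eq_one_iff]
  exact ⟨n, by push_cast; ring⟩

theorem ee_pow (n : ℕ) (t : ℝ) : ee (n * t) = ee t ^ n := by
  unfold ee; rw [← Complex.exp_nat_mul]; congr 1; push_cast; ring

theorem ee_conj (t : ℝ) : (starRingEnd ℂ) (ee t) = ee (-t) := by
  unfold ee; rw [← Complex.exp_conj]; congr 1; rw [map_mul, Complex.conj_ofReal, Complex.conj_I]; push_cast; ring

theorem ee_add_int (t : ℝ) (n : ℤ) : ee (t + n) = ee t := by
  rw [ee_add, ee_int, mul_one]

theorem ee_sub_one_eq (t : ℝ) : ‖ee t - 1‖ = 2 * |Real.sin (Real.pi * t)| := by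
  unfold ee
  rw [mul_comm, Complex.norm_exp_I_mul_ofReal_sub_one, norm_mul, Real.norm_eq_abs, Real.norm_eq_abs,
    abs_of_pos (by norm_num : (0:ℝ) < 2)]
  congr 3; ring

theorem ee_sub_one_le (t : ℝ) : ‖ee t - 1‖ ≤ 2 * Real.pi * |t| := by
  rw [ee_sub_one_eq]
  have := Real.abs_sin_le_abs (x := Real.pi * t)
  rw [abs_mul, abs_of_pos Real.pi_pos] at this
  linarith

theorem ee_sub_le (s t : ℝ) : ‖ee s - ee t‖ ≤ 2 * Real.pi * |s - t| := by
  have : ee s - ee t = ee t * (ee (s - t) - 1) := by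
    rw [mul_sub, ← ee_add]; simp
  rw [this, norm_mul, norm_ee, one_mul]
  exact ee_sub_one_le _

theorem ee_sub_one_ge (t : ℝ) (ht : 0 ≤ t) (ht2 : t ≤ 1 / 2) : 4 * t ≤ ‖ee t - 1‖ := by
  rw [ee_sub_one_eq]
  have hp := Real.pi_pos
  have := Real.mul_le_sin (x := Real.pi * t) (by positivity) (by nlinarith)
  have h2 : 2 / Real.pi * (Real.pi * t) = 2 * t := by field_simp
  rw [h2] at this
  rw [abs_of_nonneg (by linarith)]
  linarith

theorem ee_neg_sub_one (t : ℝ) : ‖ee (-t) - 1‖ = ‖ee t - 1‖ := by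
  rw [ee_sub_one_eq, ee_sub_one_eq]; simp

theorem na_abel (w : ℕ → ℝ) (hw : Monotone w) (hw0 : 0 ≤ w 0) (z : ℂ) (hz : ‖z‖ = 1) (Y : ℕ) :
    ‖(z - 1) * ∑ m ∈ Ioc 0 Y, (w m : ℂ) * z ^ m‖ ≤ 2 * w Y := by
  have key : ‖(z - 1) * ∑ m ∈ Ioc 0 Y, (w m : ℂ) * z ^ m - w Y * z ^ (Y + 1)‖ ≤ w Y := by
    induction Y with
    | zero => simp [hz, abs_of_nonneg hw0]
    | succ Y ih =>
      rw [Finset.sum_Ioc_succ_top (by omega)]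
      have h1 := hw (Nat.le_succ Y)
      have : (z - 1) * (∑ m ∈ Ioc 0 Y, (w m : ℂ) * z ^ m + (w (Y + 1) : ℂ) * z ^ (Y + 1)) -
          w (Y + 1) * z ^ (Y + 1 + 1) =
          ((z - 1) * ∑ m ∈ Ioc 0 Y, (w m : ℂ) * z ^ m - w Y * z ^ (Y + 1)) +
          (((w Y - w (Y + 1) : ℝ) : ℂ) * z ^ (Y + 1)) := by push_cast; ring
      refine (congrArg norm this).le.trans ((norm_add_le _ _).trans ?_)
      rw [norm_mul, norm_pow, hz, one_pow, mul_one, Complex.norm_real, Real.norm_eq_abs,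
        abs_of_nonpos (by simpa using h1)]
      linarith
  have h0 : 0 ≤ w Y := hw0.trans (hw (Nat.zero_le _))
  calc _ = ‖((z - 1) * ∑ m ∈ Ioc 0 Y, (w m : ℂ) * z ^ m - w Y * z ^ (Y + 1)) + w Y * z ^ (Y + 1)‖ := by
        rw [sub_add_cancel]
    _ ≤ w Y + w Y := by
        refine (norm_add_le _ _).trans (add_le_add key ?_)
        rw [norm_mul, norm_pow, hz, one_pow, mul_one, Complex.norm_real, Real.norm_eq_abs, abs_of_nonneg h0]
    _ = _ := by ring

theorem inv_sum_Ioc_le (n : ℕ) : ∑ k ∈ Ioc 0 n, ((k:ℝ))⁻¹ ≤ 1 + Real.log n := by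
  have h := harmonic_le_one_add_log n
  rw [harmonic_eq_sum_Icc] at h
  push_cast at h
  exact h

theorem na_lat1 (q : ℕ) (hq : 0 < q) : ∑ j ∈ range q, ‖ee ((j:ℝ) / q) - 1‖⁻¹ ≤ q * (1 + Real.log q) := by
  have hq' : (0:ℝ) < q := by exact_mod_cast hq
  have h1 : ∀ j ∈ Ioc 0 (q - 1), ‖ee ((j:ℝ) / q) - 1‖⁻¹ ≤ q / 4 * ((j:ℝ)⁻¹ + (((q - j : ℕ)) : ℝ)⁻¹) := by
    intro j hj
    rw [mem_Ioc] at hj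
    have hjq : j < q := by omega
    have hj0 : (0:ℝ) < j := by exact_mod_cast hj.1
    have hjq0 : (0:ℝ) < ((q - j : ℕ) : ℝ) := by exact_mod_cast (by omega : 0 < q - j)
    have hsub : ((q - j : ℕ) : ℝ) = q - j := by rw [Nat.cast_sub hjq.le]
    rcases le_total ((j:ℝ) / q) (1 / 2) with h | h
    · have h2 := ee_sub_one_ge _ (by positivity) h
      calc _ ≤ (4 * ((j:ℝ) / q))⁻¹ := inv_anti₀ (by positivity) h2
        _ = q / 4 * (j:ℝ)⁻¹ := by field_simp
        _ ≤ _ := by gcongr; linarith [inv_pos.2 hjq0]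
    · have h2 := ee_sub_one_ge (((q - j : ℕ) : ℝ) / q) (by positivity) (by
        rw [hsub, sub_div, div_self hq'.ne']; linarith)
      have h3 : ee (((q - j : ℕ) : ℝ) / q) = ee (-((j:ℝ) / q)) := by
        rw [← ee_add_int (-((j:ℝ) / q)) 1, hsub, sub_div, div_self hq'.ne']; congr 1; push_cast; ring
      rw [h3, ee_neg_sub_one] at h2
      calc _ ≤ (4 * (((q - j : ℕ) : ℝ) / q))⁻¹ := inv_anti₀ (by positivity) h2
        _ = q / 4 * (((q - j : ℕ) : ℝ))⁻¹ := by field_simp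
        _ ≤ _ := by gcongr; linarith [inv_pos.2 hj0]
  have h2 : range q = insert 0 (Ioc 0 (q - 1)) := by
    ext j; simp only [mem_range, mem_insert, mem_Ioc]; omega
  rw [h2, sum_insert (by simp)]
  have h3 : ∑ j ∈ Ioc 0 (q - 1), (((q - j : ℕ)) : ℝ)⁻¹ = ∑ j ∈ Ioc 0 (q - 1), (j : ℝ)⁻¹ := by
    refine sum_nbij' (fun j => q - j) (fun j => q - j) ?_ ?_ ?_ ?_ ?_ <;>
      intro j hj <;> simp only [mem_Ioc] at hj ⊢ <;> omega
  have h4 := inv_sum_Ioc_le (q - 1)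
  have h5 : Real.log ((q - 1 : ℕ) : ℝ) ≤ Real.log q := by
    rcases Nat.eq_zero_or_pos (q - 1) with h | h
    · rw [h]; simpa using Real.log_natCast_nonneg q
    · exact Real.log_le_log (by exact_mod_cast h) (by exact_mod_cast Nat.sub_le _ _)
  have h6 := sum_le_sum h1
  rw [← mul_sum, sum_add_distrib, h3] at h6
  have h7 : ‖ee (((0:ℕ):ℝ) / q) - 1‖⁻¹ = 0 := by simp [ee_zero]
  rw [h7, zero_add]
  refine h6.trans ?_
  have h8 := Real.log_natCast_nonneg q
  nlinarith

theorem na_lat2 (q : ℕ) (hq : 0 < q) (a : ℤ) (ha : IsCoprime a (q:ℤ)) :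
    ∑ j ∈ range q, ‖ee ((j:ℝ) * a / q) - 1‖⁻¹ ≤ q * (1 + Real.log q) := by
  have hqz : (0:ℤ) < q := by exact_mod_cast hq
  have hq' : (q:ℝ) ≠ 0 := by exact_mod_cast hq.ne'
  set σ : ℕ → ℕ := fun j => ((j * a) % q).toNat with hσ
  have hσz : ∀ j, ((σ j : ℕ) : ℤ) = (j * a) % q := fun j => Int.toNat_of_nonneg (Int.emod_nonneg _ hqz.ne')
  have hmap : ∀ j ∈ range q, σ j ∈ range q := by
    intro j _
    rw [mem_range]
    have := Int.emod_lt_of_pos (j * a) hqz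
    rw [← hσz] at this
    exact_mod_cast this
  have hinj : Set.InjOn σ (range q : Set ℕ) := by
    intro i hi j hj hij
    simp only [coe_range, Set.mem_Iio] at hi hj
    have h1 : ((i:ℤ) * a) % q = (j * a) % q := by rw [← hσz, ← hσz, hij]
    have h2 : (q:ℤ) ∣ (i - j) * a := by
      rw [sub_mul]; exact Int.ModEq.dvd (show (j * a) ≡ (i * a) [ZMOD q] from h1.symm)
    have h3 : (q:ℤ) ∣ (i - j) := ha.symm.dvd_of_dvd_mul_right h2
    have h4 := Int.eq_zero_of_abs_lt_dvd h3 (by rw [abs_lt]; constructor <;> omega)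
    omega
  have himg : (range q).image σ = range q := by
    refine eq_of_subset_of_card_le (image_subset_iff.2 hmap) ?_
    rw [card_image_of_injOn hinj]
  calc _ = ∑ j ∈ range q, ‖ee ((σ j:ℝ) / q) - 1‖⁻¹ := by
        refine sum_congr rfl fun j _ => ?_
        have h1 : ((j:ℝ) * a / q) = (σ j : ℝ) / q + (((j * a) / q : ℤ) : ℝ) := by
          have h2 := Int.emod_add_mul_ediv (j * a) q
          rw [← hσz] at h2
          have h3 : ((σ j : ℝ)) + q * (((j * a) / q : ℤ) : ℝ) = j * a := by exact_mod_cast h2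
          rw [← h3]; field_simp
        rw [h1, ee_add_int]
    _ = ∑ j ∈ (range q).image σ, ‖ee ((j:ℝ) / q) - 1‖⁻¹ := by rw [sum_image hinj]
    _ ≤ _ := by rw [himg]; exact na_lat1 q hq

theorem na_lat3 (q : ℕ) (hq : 0 < q) (a : ℤ) (ha : IsCoprime a (q:ℤ)) (D : ℕ) :
    ∑ j ∈ Ioc 0 D, ‖ee ((j:ℝ) * a / q) - 1‖⁻¹ ≤ (D / q + 1) * (q * (1 + Real.log q)) := by
  have hq' : (q:ℝ) ≠ 0 := by exact_mod_cast hq.ne'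
  have key : ∀ k : ℕ, ∑ j ∈ range (k * q), ‖ee ((j:ℝ) * a / q) - 1‖⁻¹ ≤ k * (q * (1 + Real.log q)) := by
    intro k
    induction k with
    | zero => simp
    | succ k ih =>
      rw [Nat.succ_mul, sum_range_add]
      have : ∀ j ∈ range q, ‖ee (((k * q + j : ℕ):ℝ) * a / q) - 1‖⁻¹ = ‖ee ((j:ℝ) * a / q) - 1‖⁻¹ := by
        intro j _
        rw [← ee_add_int ((j:ℝ) * a / q) (k * a)]
        congr 4; push_cast; field_simp; ring
      rw [sum_congr rfl this]
      have := na_lat2 q hq a ha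
      push_cast; linarith
  have hsub : Ioc 0 D ⊆ range ((D / q + 1) * q) := by
    intro j hj
    rw [mem_Ioc] at hj
    rw [mem_range]
    exact hj.2.trans_lt (by rw [mul_comm]; exact Nat.lt_mul_div_succ D hq)
  refine (sum_le_sum_of_subset_of_nonneg hsub fun _ _ _ => by positivity).trans ((key _).trans ?_)
  have h8 := Real.log_natCast_nonneg q
  gcongr
  push_cast
  gcongr
  exact Nat.cast_div_le

end

section
open Filter Finset MeasureTheory Topology

theorem nc_split (q : ℕ) (hq : 0 < q) (k : ℕ) (hk : 0 < k) : ∃ k1 k2 : ℕ, k = k1 * k2 ∧ k2.Coprime q ∧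
    k1 ∈ Nat.factoredNumbers q.primeFactors := by
  induction k using Nat.strong_induction_on with
  | _ k ih =>
    by_cases hc : k.Coprime q
    · exact ⟨1, k, by simp, hc, by
        rw [Nat.mem_factoredNumbers']
        intro p hp h1
        exact absurd (Nat.dvd_one.1 h1) hp.one_lt.ne'⟩
    · obtain ⟨k', hk'⟩ := Nat.gcd_dvd_left k q
      have hg0 : 0 < k.gcd q := Nat.gcd_pos_of_pos_left _ hk
      have hg1 : 1 < k.gcd q := by
        have : k.gcd q ≠ 1 := hc
        omega
      have hk'0 : 0 < k' := Nat.pos_of_ne_zero fun h => by rw [h, mul_zero] at hk'; omega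
      have hlt : k' < k := by nlinarith
      obtain ⟨k1, k2, h1, h2, h3⟩ := ih k' hlt hk'0
      refine ⟨k.gcd q * k1, k2, by rw [mul_assoc, ← h1, ← hk'], h2, ?_⟩
      refine Nat.mul_mem_factoredNumbers ?_ h3
      rw [Nat.mem_factoredNumbers']
      intro p hp hpd
      exact Nat.mem_primeFactors.2 ⟨hp, hpd.trans (Nat.gcd_dvd_right _ _), hq.ne'⟩

open ArithmeticFunction in
noncomputable def ncM (q : ℕ) : ArithmeticFunction ℝ :=
  ⟨fun e => if e.Coprime q then ((moebius e : ℤ) : ℝ) else 0, by simp⟩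

open ArithmeticFunction in
noncomputable def ncH (q : ℕ) : ArithmeticFunction ℝ := ncM q * zeta

open ArithmeticFunction in
theorem ncH_apply (q : ℕ) (hq : 0 < q) (k : ℕ) (hk : 0 < k) :
    ncH q k = Set.indicator (Nat.factoredNumbers q.primeFactors) (fun _ => (1:ℝ)) k := by
  have h0 : ncH q k = ∑ e ∈ k.divisors, if e.Coprime q then ((moebius e : ℤ) : ℝ) else 0 := by
    rw [ncH, coe_mul_zeta_apply]; rfl
  obtain ⟨k1, k2, rfl, h2, h3⟩ := nc_split q hq k hk
  have hk2 : 0 < k2 := Nat.pos_of_mul_pos_left hk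
  have hcop : k2.Coprime k1 := by
    refine Nat.Coprime.symm (Nat.coprime_of_dvd fun p hp hp1 hp2 => ?_)
    have := (Nat.mem_factoredNumbers'.1 h3) p hp hp1
    exact hp.one_lt.ne' (Nat.eq_one_of_dvd_coprimes h2 hp2 (Nat.dvd_of_mem_primeFactors this))
  have h4 : (k1 * k2).divisors.filter (fun e => e.Coprime q) = k2.divisors := by
    ext e
    simp only [mem_filter, Nat.mem_divisors]
    constructor
    · rintro ⟨⟨h5, _⟩, h6⟩
      refine ⟨Nat.Coprime.dvd_of_dvd_mul_left ?_ h5, hk2.ne'⟩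
      refine Nat.coprime_of_dvd fun p hp hp1 hp2 => ?_
      have := (Nat.mem_factoredNumbers'.1 h3) p hp hp2
      exact hp.one_lt.ne' (Nat.eq_one_of_dvd_coprimes h6 hp1 (Nat.dvd_of_mem_primeFactors this))
    · rintro ⟨h5, _⟩
      exact ⟨⟨h5.mul_left _, hk.ne'⟩, Nat.Coprime.coprime_dvd_left h5 h2⟩
  rw [h0, ← sum_filter, h4]
  have h5 : ∑ e ∈ k2.divisors, ((moebius e : ℤ) : ℝ) = if k2 = 1 then 1 else 0 := by
    have := congrArg (fun f : ArithmeticFunction ℤ => f k2) moebius_mul_coe_zeta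
    simp only [coe_mul_zeta_apply, one_apply] at this
    rw [← Int.cast_sum, this]; split_ifs <;> simp
  rw [h5]
  by_cases h6 : k2 = 1
  · rw [if_pos h6, h6, mul_one, Set.indicator_of_mem h3]
  · rw [if_neg h6, Set.indicator_of_notMem]
    intro h7
    obtain ⟨p, hp, hpd⟩ := Nat.exists_prime_and_dvd h6
    have := (Nat.mem_factoredNumbers'.1 h7) p hp (hpd.mul_left _)
    exact hp.one_lt.ne' (Nat.eq_one_of_dvd_coprimes h2 hpd (Nat.dvd_of_mem_primeFactors this))

theorem ncH_nonneg (q : ℕ) (hq : 0 < q) (k : ℕ) : 0 ≤ ncH q k := by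
  rcases Nat.eq_zero_or_pos k with rfl | hk
  · simp
  · rw [ncH_apply q hq k hk]; exact Set.indicator_nonneg (fun _ _ => zero_le_one) _

theorem ncH_sum (q : ℕ) (hq : 0 < q) (Y : ℕ) : ∑ k ∈ Ioc 0 Y, ncH q k / k ≤ q / q.totient := by
  have h1 := EulerProduct.summable_and_hasSum_factoredNumbers_prod_filter_prime_geometric
    (f := { toFun := fun n : ℕ => ((n:ℝ))⁻¹, map_one' := by simp,
            map_mul' := fun a b => by push_cast; rw [mul_inv] } ) (F := ℝ) (fun {p} hp => by
      simp only [MonoidHom.coe_mk, OneHom.coe_mk, norm_inv, Real.norm_natCast]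
      exact inv_lt_one_of_one_lt₀ (by exact_mod_cast hp.one_lt)) q.primeFactors
  have h2 := h1.2
  simp only [MonoidHom.coe_mk, OneHom.coe_mk] at h2
  have h3 : ∏ p ∈ q.primeFactors with Nat.Prime p, (1 - (p:ℝ)⁻¹)⁻¹ = q / q.totient := by
    have h4 := Nat.totient_eq_mul_prod_factors q
    have h5 : (q.totient : ℝ) = q * ∏ p ∈ q.primeFactors, (1 - (p:ℝ)⁻¹) := by
      have h4' := congrArg (fun x : ℚ => (x:ℝ)) h4
      push_cast at h4'
      exact h4'
    rw [filter_true_of_mem (fun p hp => Nat.prime_of_mem_primeFactors hp), h5, prod_inv_distrib]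
    have hq' : (q:ℝ) ≠ 0 := by exact_mod_cast hq.ne'
    rw [← div_div, div_self hq', one_div]
  rw [h3] at h2
  have h6 : HasSum (Set.indicator (Nat.factoredNumbers q.primeFactors) (fun n : ℕ => (n:ℝ)⁻¹)) (q / q.totient) :=
    (hasSum_subtype_iff_indicator (f := fun n : ℕ => (n:ℝ)⁻¹)).1 h2
  rw [← h6.tsum_eq]
  calc _ = ∑ k ∈ Ioc 0 Y, Set.indicator (Nat.factoredNumbers q.primeFactors) (fun n : ℕ => (n:ℝ)⁻¹) k := by
        refine sum_congr rfl fun k hk => ?_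
        rw [ncH_apply q hq k (mem_Ioc.1 hk).1]
        by_cases h : k ∈ Nat.factoredNumbers q.primeFactors
        · rw [Set.indicator_of_mem h, Set.indicator_of_mem h, one_div]
        · rw [Set.indicator_of_notMem h, Set.indicator_of_notMem h, zero_div]
    _ ≤ _ := h6.summable.sum_le_tsum _ fun k _ => Set.indicator_nonneg (fun _ _ => by positivity) _

theorem nc_phi1 (S : Finset ℕ) : (∀ p ∈ S, 2 ≤ p) → ∏ p ∈ S, (1 - (p:ℝ)⁻¹)⁻¹ ≤ S.card + 1 := by
  induction S using Finset.induction_on_max with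
  | empty => simp
  | insert a s ha ih =>
    intro h
    have ha2 : 2 ≤ a := h a (mem_insert_self _ _)
    have hs2 : ∀ p ∈ s, 2 ≤ p := fun p hp => h p (mem_insert_of_mem hp)
    have hna : a ∉ s := fun h => lt_irrefl _ (ha a h)
    rw [prod_insert hna, card_insert_of_notMem hna]
    have hcard : s.card + 2 ≤ a := by
      have : s ⊆ Ico 2 a := fun p hp => mem_Ico.2 ⟨hs2 p hp, ha p hp⟩
      have := card_le_card this
      rw [Nat.card_Ico] at this
      omega
    have hcard' : (s.card : ℝ) + 2 ≤ a := by exact_mod_cast hcard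
    have ha2' : (2:ℝ) ≤ a := by exact_mod_cast ha2
    have h1 : (1 - (a:ℝ)⁻¹)⁻¹ ≤ (s.card + 2) / (s.card + 1) := by
      have : (1 - (a:ℝ)⁻¹)⁻¹ = a / (a - 1) := by
        have h0 : (a:ℝ) ≠ 0 := by linarith
        have h1 : (a:ℝ) - 1 ≠ 0 := by linarith
        have h2 : 1 - (a:ℝ)⁻¹ = (a - 1) / a := by field_simp
        rw [h2, inv_div]
      rw [this, div_le_div_iff₀ (by linarith) (by positivity)]
      nlinarith
    calc _ ≤ ((s.card : ℝ) + 2) / (s.card + 1) * (s.card + 1) :=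
          mul_le_mul h1 (ih hs2) (prod_nonneg fun p hp => by
            have : (2:ℝ) ≤ p := by exact_mod_cast hs2 p hp
            have : (p:ℝ)⁻¹ ≤ 1 := inv_le_one_of_one_le₀ (by linarith)
            exact inv_nonneg.2 (by linarith)) (by positivity)
      _ = _ := by rw [div_mul_cancel₀ _ (by positivity)]; push_cast; ring

theorem nc_phi2 (ε : ℝ) (hε : 0 < ε) : ∃ R : ℕ, ∀ q : ℕ, R ≤ q → 0 < q ∧ ((q.totient : ℝ))⁻¹ ≤ ε := by
  have h1 : Tendsto (fun q : ℕ => (Real.log q / Real.log 2 + 1) / q) atTop (𝓝 0) := by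
    have h2 : Tendsto (fun q : ℕ => Real.log q / q) atTop (𝓝 0) := by
      have := Real.isLittleO_log_id_atTop.tendsto_div_nhds_zero.comp (tendsto_natCast_atTop_atTop (R := ℝ))
      simpa [Function.comp_def] using this
    have h3 := (h2.div_const (Real.log 2)).add (tendsto_one_div_atTop_nhds_zero_nat (𝕜 := ℝ))
    rw [zero_div, zero_add] at h3
    refine h3.congr fun q => ?_
    ring
  obtain ⟨R, hR⟩ := eventually_atTop.1 ((h1.eventually_le_const hε).and (eventually_gt_atTop 0))
  refine ⟨R, fun q hq => ⟨(hR q hq).2, ?_⟩⟩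
  have hq0 := (hR q hq).2
  have hq' : (0:ℝ) < q := by exact_mod_cast hq0
  refine le_trans ?_ (hR q hq).1
  have h4 := Nat.totient_eq_mul_prod_factors q
  have h5 : (q.totient : ℝ) = q * ∏ p ∈ q.primeFactors, (1 - (p:ℝ)⁻¹) := by
    have h4' := congrArg (fun x : ℚ => (x:ℝ)) h4
    push_cast at h4'
    exact h4'
  rw [h5, mul_inv, ← prod_inv_distrib, mul_comm, ← div_eq_mul_inv]
  gcongr
  refine (nc_phi1 _ fun p hp => (Nat.prime_of_mem_primeFactors hp).two_le).trans ?_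
  gcongr
  rw [le_div_iff₀ (Real.log_pos (by norm_num)), ← Real.log_pow]
  refine Real.log_le_log (by positivity) ?_
  have h6 : 2 ^ q.primeFactors.card ≤ ∏ p ∈ q.primeFactors, p :=
    Finset.pow_card_le_prod _ _ _ fun p hp => (Nat.prime_of_mem_primeFactors hp).two_le
  exact_mod_cast h6.trans (Nat.le_of_dvd hq0 (Nat.prod_primeFactors_dvd q))

open ArithmeticFunction in
theorem nc_main (q : ℕ) (hq : 0 < q) (X : ℕ) (γ : ℝ) :
    ‖∑ d ∈ (Ioc 0 X).filter (fun d => q ∣ d), ((moebius d : ℤ) : ℂ) * ∑ m ∈ Ioc 0 (X / d),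
      ((Real.log m ^ 2 : ℝ) : ℂ) * ee (d * γ) ^ m‖ ≤
      (chC + chC ^ 2 + chC) * (X * (1 + Real.log X)) * (q.totient : ℝ)⁻¹ := by
  have hq' : (0:ℝ) < q := by exact_mod_cast hq
  have hc := chC_pos
  set F : ℕ → ℕ → ℂ := fun e m => ((moebius (q * e) : ℤ) : ℂ) * (((Real.log m ^ 2 : ℝ) : ℂ) *
    ee ((q * (e * m : ℕ) : ℝ) * γ)) with hF
  have h1 : ∑ d ∈ (Ioc 0 X).filter (fun d => q ∣ d), ((moebius d : ℤ) : ℂ) * ∑ m ∈ Ioc 0 (X / d),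
      ((Real.log m ^ 2 : ℝ) : ℂ) * ee (d * γ) ^ m = ∑ e ∈ Ioc 0 (X / q), ∑ m ∈ Ioc 0 (X / q / e), F e m := by
    symm
    refine sum_nbij' (fun e => q * e) (fun d => d / q) ?_ ?_ ?_ ?_ ?_
    · intro e he
      rw [mem_Ioc, Nat.le_div_iff_mul_le hq] at he
      rw [mem_filter, mem_Ioc]
      exact ⟨⟨Nat.mul_pos hq he.1, by rw [mul_comm]; exact he.2⟩, Dvd.intro _ rfl⟩
    · intro d hd
      rw [mem_filter, mem_Ioc] at hd
      rw [mem_Ioc]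
      exact ⟨Nat.div_pos (Nat.le_of_dvd hd.1.1 hd.2) hq, Nat.div_le_div_right hd.1.2⟩
    · intro e he; exact Nat.mul_div_cancel_left _ hq
    · intro d hd; exact Nat.mul_div_cancel' (mem_filter.1 hd).2
    · intro e he
      rw [mul_sum, Nat.div_div_eq_div_mul]
      refine sum_congr rfl fun m _ => ?_
      simp only [hF]
      rw [← ee_pow]
      congr 3; push_cast; ring
  have h2 : ∀ e, ((moebius (q * e) : ℤ) : ℝ) = moebius q * ncM q e := by
    intro e
    change _ = ((moebius q : ℤ) : ℝ) * (if e.Coprime q then ((moebius e : ℤ) : ℝ) else 0)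
    split_ifs with h
    · rw [isMultiplicative_moebius.map_mul_of_coprime (Nat.Coprime.symm h)]; push_cast; rfl
    · rw [moebius_eq_zero_of_not_squarefree]
      · simp
      · intro hs
        exact h ((Nat.squarefree_mul_iff.1 hs).1).symm
  have h3 : ncM q * pmul log log = ncH q * lam2 := by
    rw [lam2_moebius, ncH, mul_assoc, ← mul_assoc (zeta : ArithmeticFunction ℝ), coe_zeta_mul_coe_moebius, one_mul]
  have h4 : ∀ j, ‖∑ x ∈ j.divisorsAntidiagonal, F x.1 x.2‖ ≤ (ncH q * lam2) j := by
    intro j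
    have : ∑ x ∈ j.divisorsAntidiagonal, F x.1 x.2 =
        ((moebius q * (ncH q * lam2) j : ℝ) : ℂ) * ee ((q * j : ℝ) * γ) := by
      rw [← h3, mul_apply, mul_sum, Complex.ofReal_sum, sum_mul]
      refine sum_congr rfl fun x hx => ?_
      rw [← mul_assoc, ← h2, pmul_apply, log_apply]
      simp only [hF]
      rw [(Nat.mem_divisorsAntidiagonal.1 hx).1]
      push_cast; ring
    rw [this, norm_mul, norm_ee, mul_one, Complex.norm_real, norm_mul]
    have hn : 0 ≤ (ncH q * lam2) j := by
      rw [mul_apply]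
      exact sum_nonneg fun x _ => mul_nonneg (ncH_nonneg q hq _) (lam2_nonneg _)
    rw [Real.norm_of_nonneg hn]
    refine mul_le_of_le_one_left hn ?_
    rw [Real.norm_eq_abs]
    exact_mod_cast abs_moebius_le_one
  rw [h1, ← na_hyp F]
  have hX : (0:ℝ) ≤ 1 + Real.log X := by linarith [Real.log_natCast_nonneg X]
  calc _ ≤ ∑ j ∈ Ioc 0 (X / q), (ncH q * lam2) j := norm_sum_le_of_le _ fun j _ => h4 j
    _ = ∑ k ∈ Ioc 0 (X / q), ncH q k * ∑ m ∈ Ioc 0 (X / q / k), lam2 m := sum_Ioc_mul_eq_sum_sum _ _ _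
    _ ≤ ∑ k ∈ Ioc 0 (X / q), (chC + chC ^ 2 + chC) * (X / q * (1 + Real.log X)) * (ncH q k / k) := by
        refine sum_le_sum fun k hk => ?_
        rw [mem_Ioc] at hk
        have h5 := lam2_sum_le (X / q / k)
        have h6 : ((X / q / k : ℕ) : ℝ) ≤ X / q / k :=
          Nat.cast_div_le.trans (by gcongr; exact Nat.cast_div_le)
        have h7 : Real.log ((X / q / k : ℕ) : ℝ) ≤ Real.log X := by
          rcases Nat.eq_zero_or_pos (X / q / k) with h | h
          · rw [h]; simpa using Real.log_natCast_nonneg X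
          · exact Real.log_le_log (by exact_mod_cast h)
              (by exact_mod_cast (Nat.div_le_self _ _).trans (Nat.div_le_self _ _))
        have h8 := Real.log_natCast_nonneg (X / q / k)
        calc _ ≤ ncH q k * ((chC + chC ^ 2 + chC) * ((X / q / k : ℝ) * (1 + Real.log X))) := by
              refine mul_le_mul_of_nonneg_left (h5.trans ?_) (ncH_nonneg q hq k)
              gcongr
          _ = _ := by ring
    _ ≤ (chC + chC ^ 2 + chC) * (X / q * (1 + Real.log X)) * (q / q.totient) := by
        rw [← mul_sum]
        exact mul_le_mul_of_nonneg_left (ncH_sum q hq _) (by positivity)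
    _ = _ := by field_simp

end

section
open Filter Finset MeasureTheory Topology

theorem nd_low (q : ℕ) (hq : 0 < q) (b : ℤ) (hb : ¬ (q:ℤ) ∣ b) : 4 / (q:ℝ) ≤ ‖ee ((b:ℝ) / q) - 1‖ := by
  have hq' : (0:ℝ) < q := by exact_mod_cast hq
  have hqz : (0:ℤ) < q := by exact_mod_cast hq
  set j := b % q with hj
  have hj0 : 0 ≤ j := Int.emod_nonneg _ hqz.ne'
  have hj1 : j < q := Int.emod_lt_of_pos _ hqz
  have hj2 : j ≠ 0 := fun h => hb (Int.dvd_of_emod_eq_zero h)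
  have h1 : (b:ℝ) / q = (j:ℝ) / q + (b / q : ℤ) := by
    have : (b:ℝ) = (j:ℝ) + q * (b / q : ℤ) := by
      have := Int.emod_add_mul_ediv b q
      exact_mod_cast this.symm
    rw [eq_comm, div_add' _ _ _ hq'.ne', this]; ring
  rw [h1, ee_add_int]
  have hjr1 : (1:ℝ) ≤ j := by exact_mod_cast (by omega : (1:ℤ) ≤ j)
  have hjr2 : (j:ℝ) + 1 ≤ q := by exact_mod_cast (by omega : j + 1 ≤ (q:ℤ))
  rcases le_total ((j:ℝ) / q) (1/2) with h | h
  · refine le_trans ?_ (ee_sub_one_ge _ (by positivity) h)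
    rw [← mul_div_assoc]; gcongr; linarith
  · have h2 : ‖ee ((j:ℝ)/q) - 1‖ = ‖ee (1 - (j:ℝ)/q) - 1‖ := by
      rw [← ee_neg_sub_one]
      congr 2
      have := ee_add_int (-((j:ℝ)/q)) 1
      rw [← this]; congr 1; push_cast; ring
    rw [h2]
    have h3 : (j:ℝ)/q ≤ 1 := by rw [div_le_one hq']; linarith
    refine le_trans ?_ (ee_sub_one_ge _ (by linarith) (by linarith))
    have h4 : 1 - (j:ℝ)/q = (q - j)/q := by field_simp
    rw [h4, ← mul_div_assoc]; gcongr; linarith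

noncomputable def ndW (X : ℕ) (γ : ℝ) (d : ℕ) : ℂ := ∑ m ∈ Ioc 0 (X / d), ((Real.log m ^ 2 : ℝ) : ℂ) * ee (d * γ) ^ m

open ArithmeticFunction in
theorem nd_expand (X : ℕ) (γ : ℝ) : ∑ n ∈ Ioc 0 X, (lam2 n : ℂ) * ee (n * γ) =
    ∑ d ∈ Ioc 0 X, ((moebius d : ℤ) : ℂ) * ndW X γ d := by
  have h := na_hyp (fun d m => ((moebius d : ℤ) : ℂ) * (((Real.log m ^ 2 : ℝ) : ℂ) * ee (d * γ) ^ m)) X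
  simp only [ndW, mul_sum]
  rw [← h]
  refine sum_congr rfl fun n _ => ?_
  rw [lam2_moebius, ArithmeticFunction.mul_apply, Complex.ofReal_sum, sum_mul]
  refine sum_congr rfl fun x hx => ?_
  have hx' := (Nat.mem_divisorsAntidiagonal.1 hx).1
  have : ee (n * γ) = ee (x.1 * γ) ^ x.2 := by
    rw [← ee_pow, ← hx']; congr 1; push_cast; ring
  rw [this]
  simp [pmul_apply, log_apply]
  ring

theorem ndW_le1 (X : ℕ) (γ : ℝ) (d : ℕ) (c : ℝ) (hc : 0 < c) (h : c ≤ ‖ee (d * γ) - 1‖) :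
    ‖ndW X γ d‖ ≤ 2 * Real.log X ^ 2 * c⁻¹ := by
  have hm : Monotone (fun m : ℕ => Real.log m ^ 2) := by
    intro a b hab
    rcases Nat.eq_zero_or_pos a with rfl | ha
    · simp; positivity
    · have : (0:ℝ) < a := by exact_mod_cast ha
      have h1 : Real.log a ≤ Real.log b := Real.log_le_log this (by exact_mod_cast hab)
      exact pow_le_pow_left₀ (Real.log_natCast_nonneg a) h1 2
  have h1 := na_abel _ hm (by simp) (ee (d*γ)) (norm_ee _) (X / d)
  rw [norm_mul] at h1
  have h2 : c * ‖ndW X γ d‖ ≤ 2 * Real.log X ^ 2 := by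
    calc _ ≤ ‖ee (d * γ) - 1‖ * ‖ndW X γ d‖ := by gcongr
      _ ≤ _ := h1
      _ ≤ _ := by
        have := hm (Nat.div_le_self X d)
        simpa using this
  rw [← div_eq_mul_inv, le_div_iff₀ hc]; linarith

theorem nd_b (X : ℕ) (γ : ℝ) (D Q q : ℕ) (hq : 0 < q) (a : ℤ) (ha : IsCoprime a (q:ℤ))
    (hγ : |γ - a / q| ≤ 1 / ((Q + 1) * q)) (hDQ : 4 * D ≤ Q) :
    ∑ d ∈ (Ioc 0 D).filter (fun d => ¬ q ∣ d), ‖ndW X γ d‖ ≤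
      4 * Real.log X ^ 2 * ((D + q) * (1 + Real.log q)) := by
  have hq' : (0:ℝ) < q := by exact_mod_cast hq
  calc _ ≤ ∑ d ∈ (Ioc 0 D).filter (fun d => ¬ q ∣ d), 4 * Real.log X ^ 2 * ‖ee ((d:ℝ)*a/q)-1‖⁻¹ := by
        refine sum_le_sum fun d hd => ?_
        rw [mem_filter, mem_Ioc] at hd
        have h1 : 4 / (q:ℝ) ≤ ‖ee ((d:ℝ)*a/q) - 1‖ := by
          have := nd_low q hq (d * a) (fun h => hd.2 (by
            have := ha.symm.dvd_of_dvd_mul_right h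
            exact_mod_cast this))
          push_cast at this; exact this
        have h2 : ‖ee (d * γ) - ee ((d:ℝ)*a/q)‖ ≤ 2 / q := by
          refine (ee_sub_le _ _).trans ?_
          have : (d:ℝ) * γ - d * a / q = d * (γ - a/q) := by ring
          rw [this, abs_mul, Nat.abs_cast]
          have hdD : (d:ℝ) ≤ D := by exact_mod_cast hd.1.2
          have hDQ' : (4:ℝ) * D ≤ Q := by exact_mod_cast hDQ
          calc 2 * Real.pi * (d * |γ - a/q|) ≤ 2 * Real.pi * (D * (1 / ((Q + 1) * q))) := by gcongr
            _ = (2 / q) * (Real.pi * D / (Q + 1)) := by field_simp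
            _ ≤ (2 / q) * 1 := by
                gcongr
                rw [div_le_one (by positivity)]
                nlinarith [Real.pi_lt_four, Real.pi_pos, (Nat.cast_nonneg D : (0:ℝ) ≤ D)]
            _ = _ := by ring
        have h3 : ‖ee ((d:ℝ)*a/q) - 1‖ ≤ ‖ee (d * γ) - 1‖ + ‖ee (d * γ) - ee ((d:ℝ)*a/q)‖ := by
          have := norm_sub_le (ee (d * γ) - 1) (ee (d * γ) - ee ((d:ℝ)*a/q))
          simpa using this
        have h0 : 0 < 4 / (q:ℝ) := by positivity
        have h4 : 2 / (q:ℝ) = (4 / q) / 2 := by ring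
        refine (ndW_le1 X γ d (‖ee ((d:ℝ)*a/q) - 1‖ / 2) (by linarith) (by linarith)).trans (le_of_eq ?_)
        rw [inv_div]; ring
    _ ≤ ∑ d ∈ Ioc 0 D, 4 * Real.log X ^ 2 * ‖ee ((d:ℝ)*a/q)-1‖⁻¹ :=
        sum_le_sum_of_subset_of_nonneg (filter_subset _ _) fun _ _ _ => by positivity
    _ ≤ _ := by
        rw [← mul_sum]
        gcongr
        refine (na_lat3 q hq a ha D).trans (le_of_eq ?_)
        field_simp

theorem nd_c (X : ℕ) (γ : ℝ) (K : ℕ) (hK : 0 < K) :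
    ∑ d ∈ Ioc (X / K) X, ‖ndW X γ d‖ ≤ X * (Real.log K ^ 2 * (1 + Real.log K)) := by
  calc _ ≤ ∑ d ∈ Ioc (X / K) X, ∑ m ∈ Ioc 0 (X / d), Real.log K ^ 2 := by
        refine sum_le_sum fun d hd => ?_
        rw [mem_Ioc] at hd
        refine (norm_sum_le _ _).trans (sum_le_sum fun m hm => ?_)
        rw [mem_Ioc, Nat.le_div_iff_mul_le ((Nat.zero_le _).trans_lt hd.1)] at hm
        rw [norm_mul, norm_pow, norm_ee, one_pow, mul_one, Complex.norm_real, Real.norm_of_nonneg (by positivity)]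
        have hmK : m ≤ K := by
          by_contra h
          push Not at h
          have h1 := Nat.lt_mul_div_succ X hK
          have : K * (X / K + 1) ≤ m * d := Nat.mul_le_mul h.le hd.1
          omega
        have hm0 : (0:ℝ) < m := by exact_mod_cast hm.1
        have : Real.log m ≤ Real.log K := Real.log_le_log hm0 (by exact_mod_cast hmK)
        exact pow_le_pow_left₀ (Real.log_natCast_nonneg m) this 2
    _ = ∑ m ∈ Ioc 0 K, ∑ d ∈ (Ioc (X / K) X).filter (fun d => m * d ≤ X), Real.log K ^ 2 := by
        refine sum_comm' fun d m => ?_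
        simp only [mem_Ioc, mem_filter]
        constructor
        · rintro ⟨⟨h1, h2⟩, h3, h4⟩
          rw [Nat.le_div_iff_mul_le ((Nat.zero_le _).trans_lt h1)] at h4
          refine ⟨⟨⟨h1, h2⟩, h4⟩, h3, ?_⟩
          by_contra h
          push Not at h
          have h1' := Nat.lt_mul_div_succ X hK
          have : K * (X / K + 1) ≤ m * d := Nat.mul_le_mul h.le h1
          omega
        · rintro ⟨⟨⟨h1, h2⟩, h4⟩, h3, h5⟩
          exact ⟨⟨h1, h2⟩, h3, by rwa [Nat.le_div_iff_mul_le ((Nat.zero_le _).trans_lt h1)]⟩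
    _ ≤ ∑ m ∈ Ioc 0 K, X * Real.log K ^ 2 * (m:ℝ)⁻¹ := by
        refine sum_le_sum fun m hm => ?_
        rw [mem_Ioc] at hm
        have hm0 : (0:ℝ) < m := by exact_mod_cast hm.1
        rw [sum_const, nsmul_eq_mul]
        have h1 : (((Ioc (X / K) X).filter (fun d => m * d ≤ X)).card : ℝ) ≤ X * (m:ℝ)⁻¹ := by
          have h2 : (Ioc (X / K) X).filter (fun d => m * d ≤ X) ⊆ Ioc 0 (X / m) := by
            intro d hd
            rw [mem_filter, mem_Ioc] at hd
            rw [mem_Ioc, Nat.le_div_iff_mul_le hm.1]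
            exact ⟨(Nat.zero_le _).trans_lt hd.1.1, by rw [mul_comm]; exact hd.2⟩
          have h3 := card_le_card h2
          rw [Nat.card_Ioc, Nat.sub_zero] at h3
          rw [← div_eq_mul_inv]
          exact (Nat.cast_le.2 h3).trans Nat.cast_div_le
        calc _ ≤ (X * (m:ℝ)⁻¹) * Real.log K ^ 2 := by gcongr
          _ = _ := by ring
    _ ≤ _ := by
        rw [← mul_sum, mul_assoc]
        gcongr
        exact inv_sum_Ioc_le K

theorem nd_ev (ε : ℝ) (hε : 0 < ε) (B : ℕ) : ∃ X0 : ℕ, ∀ X : ℕ, X0 ≤ X → ∃ K : ℕ, 4 ≤ K ∧ B * K ≤ X ∧ 1 ≤ Real.log X ∧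
    20 * (1 + Real.log X) * Real.log X ≤ ε * K ∧ Real.log K ^ 2 * (1 + Real.log K) ≤ ε * Real.log X := by
  have hl : Tendsto (fun X : ℕ => Real.log X) atTop atTop := Real.tendsto_log_atTop.comp tendsto_natCast_atTop_atTop
  have e1 : ∀ᶠ X : ℕ in atTop, (B:ℝ) * (2 * Real.log X ^ 3) ≤ X := by
    have h1 : (fun x : ℝ => Real.log x ^ 3) =o[atTop] (fun x => x) := by
      exact Real.isLittleO_pow_log_id_atTop (n := 3)
    have h2 := (h1.comp_tendsto (tendsto_natCast_atTop_atTop (R := ℝ))).bound (c := 1 / (2 * (B + 1))) (by positivity)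
    filter_upwards [h2] with X hX
    simp only [Function.comp, Real.norm_eq_abs, Nat.abs_cast] at hX
    have h3 := (le_abs_self _).trans hX
    rw [one_div, inv_mul_eq_div, le_div_iff₀ (by positivity)] at h3
    have : 0 ≤ Real.log X ^ 3 := pow_nonneg (Real.log_natCast_nonneg X) 3
    nlinarith
  have e2 : ∀ᶠ L : ℝ in atTop, (2 + 3 * Real.log L) ^ 3 ≤ ε * L := by
    have h1 : (fun x : ℝ => (2 + 3 * Real.log x) ^ 3) =o[atTop] (fun x => x) := by
      have h2 : (fun x : ℝ => (2 + 3 * Real.log x)) =O[atTop] (fun x => Real.log x) := by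
        refine Asymptotics.IsBigO.of_bound 5 ?_
        filter_upwards [Real.tendsto_log_atTop.eventually_ge_atTop 1] with x hx
        rw [Real.norm_of_nonneg (by linarith), Real.norm_of_nonneg (by linarith)]
        linarith
      refine (h2.pow 3).trans_isLittleO ?_
      exact Real.isLittleO_pow_log_id_atTop (n := 3)
    filter_upwards [h1.bound hε, eventually_gt_atTop 0] with L hL h0
    rw [Real.norm_of_nonneg h0.le] at hL
    exact (le_abs_self _).trans hL
  have e3 := hl.eventually (e2.and (eventually_ge_atTop (max 4 (40 / ε))))
  obtain ⟨X0, h0⟩ := eventually_atTop.1 (e1.and e3)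
  refine ⟨X0, fun X hX => ?_⟩
  obtain ⟨h1, h2, h3⟩ := h0 X hX
  set L := Real.log X
  have h4 : 4 ≤ L := (le_max_left _ _).trans h3
  have h5 : 40 ≤ ε * L := by
    have := (le_max_right _ _).trans h3
    rwa [div_le_iff₀ hε, mul_comm] at this
  have hK1 := Nat.le_ceil (L ^ 3)
  have hK2 := (Nat.ceil_lt_add_one (a := L ^ 3) (by positivity)).le
  set K := ⌈L ^ 3⌉₊
  have h64 : 4 ^ 3 ≤ L ^ 3 := pow_le_pow_left₀ (by norm_num) h4 3
  have hK3 : (K:ℝ) ≤ 2 * L ^ 3 := by linarith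
  have hK4 : (64:ℝ) ≤ K := by linarith
  refine ⟨K, ?_, ?_, by linarith, ?_, ?_⟩
  · have : (4:ℝ) ≤ K := by linarith
    exact_mod_cast this
  · have : (B:ℝ) * K ≤ X := le_trans (by gcongr) h1
    exact_mod_cast this
  · calc 20 * (1 + L) * L ≤ 40 * L * L := by nlinarith
      _ ≤ (ε * L) * L * L := by gcongr
      _ = ε * L ^ 3 := by ring
      _ ≤ _ := by gcongr
  · have h6 : Real.log K ≤ 1 + 3 * Real.log L := by
      have := Real.log_le_log (by linarith) hK3
      rw [Real.log_mul (by norm_num) (by positivity), Real.log_pow] at this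
      have h7 : Real.log 2 ≤ 1 := by linarith [Real.log_two_lt_d9]
      push_cast at this; linarith
    have h7 : 0 ≤ Real.log K := Real.log_natCast_nonneg K
    refine le_trans ?_ h2
    calc _ ≤ (2 + 3 * Real.log L) ^ 2 * (2 + 3 * Real.log L) := by
          have h8 : Real.log K ≤ 2 + 3 * Real.log L := by linarith
          have h9 : 1 + Real.log K ≤ 2 + 3 * Real.log L := by linarith
          exact mul_le_mul (pow_le_pow_left₀ h7 h8 2) h9 (by linarith) (by positivity)
      _ = _ := by ring

theorem nd_typeI (ε : ℝ) (hε : 0 < ε) : ∃ R : ℕ, ∀ η : ℝ, 0 < η → ∃ X0 : ℕ, ∀ X : ℕ, X0 ≤ X → ∀ γ : ℝ,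
    ‖∑ n ∈ Ioc 0 X, (lam2 n : ℂ) * ee (n * γ)‖ ≤ ε * (X * Real.log X) ∨
    ∃ r : ℕ, 1 ≤ r ∧ r < R ∧ ‖ee (r * γ) - 1‖ ≤ η := by
  have hc := chC_pos
  set C := chC + chC ^ 2 + chC with hC
  have hC0 : 0 < C := by positivity
  obtain ⟨R, hR⟩ := nc_phi2 (ε / (6 * C)) (by positivity)
  refine ⟨R, fun η hη => ?_⟩
  obtain ⟨B, hB⟩ := exists_nat_ge (2 * Real.pi / η)
  obtain ⟨X0, h0⟩ := nd_ev (ε / 3) (by positivity) (B + 1)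
  refine ⟨X0, fun X hX γ => ?_⟩
  obtain ⟨K, hK4, hBK, hL, hk1, hk2⟩ := h0 X hX
  have hK0 : 0 < K := by omega
  set D := X / K with hD
  have hDB : B + 1 ≤ D := (Nat.le_div_iff_mul_le hK0).2 hBK
  obtain ⟨r, hr1, hr2⟩ := Real.exists_rat_abs_sub_le_and_den_le γ (n := 4 * D) (by omega)
  set q := r.den with hqd
  have hq : 0 < q := r.den_pos
  have hq' : (0:ℝ) < q := by exact_mod_cast hq
  have hrq : (r:ℝ) = r.num / q := by
    rw [hqd]; exact Rat.cast_def r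
  rw [hrq] at hr1
  by_cases hqR : q < R
  · right
    refine ⟨q, hq, hqR, ?_⟩
    have h1 : ee (q * γ) = ee (q * (γ - r.num / q)) := by
      rw [← ee_add_int (q * (γ - r.num / q)) r.num]
      congr 1; field_simp; ring
    rw [h1]
    refine (ee_sub_one_le _).trans ?_
    rw [abs_mul, Nat.abs_cast]
    have hDB' : (B:ℝ) + 1 ≤ D := by exact_mod_cast hDB
    calc _ ≤ 2 * Real.pi * (q * (1 / ((((4 * D : ℕ) : ℝ) + 1) * q))) := by gcongr
      _ = 2 * Real.pi / (((4 * D : ℕ) : ℝ) + 1) := by field_simp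
      _ ≤ η := by
        rw [div_le_iff₀ (by positivity)]
        rw [div_le_iff₀ hη] at hB
        push_cast
        nlinarith
  · left
    obtain ⟨-, hphi⟩ := hR q (not_lt.1 hqR)
    rw [nd_expand, ← sum_filter_add_sum_filter_not _ (fun d => q ∣ d)]
    have hXpos : (0:ℝ) < X := by
      rcases Nat.eq_zero_or_pos X with h | h
      · rw [h] at hL; norm_num at hL
      · exact_mod_cast h
    set L := Real.log X
    have ta := nc_main q hq X γ
    have hDX : D ≤ X := Nat.div_le_self _ _
    have tb := nd_b X γ D (4 * D) q hq r.num (Int.isCoprime_iff_gcd_eq_one.2 r.reduced) hr1 le_rfl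
    have tc := nd_c X γ K hK0
    have hmu : ∀ d : ℕ, ‖((ArithmeticFunction.moebius d : ℤ) : ℂ) * ndW X γ d‖ ≤ ‖ndW X γ d‖ := by
      intro d
      rw [norm_mul]
      have : ‖((ArithmeticFunction.moebius d : ℤ) : ℂ)‖ ≤ 1 := by
        rw [Complex.norm_intCast]
        exact_mod_cast ArithmeticFunction.abs_moebius_le_one
      exact mul_le_of_le_one_left (norm_nonneg _) this
    have tbc : ‖∑ d ∈ (Ioc 0 X).filter (fun d => ¬ q ∣ d), ((ArithmeticFunction.moebius d : ℤ) : ℂ) * ndW X γ d‖ ≤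
        4 * L ^ 2 * ((D + q) * (1 + Real.log q)) + X * (Real.log K ^ 2 * (1 + Real.log K)) := by
      refine (norm_sum_le _ _).trans ((sum_le_sum fun d _ => hmu d).trans ?_)
      have hs : (Ioc 0 X).filter (fun d => ¬ q ∣ d) ⊆ (Ioc 0 D).filter (fun d => ¬ q ∣ d) ∪ Ioc D X := by
        intro d hd
        simp only [mem_union, mem_filter, mem_Ioc] at hd ⊢
        rcases le_or_gt d D with h | h
        · exact Or.inl ⟨⟨hd.1.1, h⟩, hd.2⟩
        · exact Or.inr ⟨h, hd.1.2⟩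
      refine (sum_le_sum_of_subset_of_nonneg hs fun _ _ _ => norm_nonneg _).trans ?_
      have hdis : Disjoint ((Ioc 0 D).filter (fun d => ¬ q ∣ d)) (Ioc D X) := by
        rw [Finset.disjoint_left]
        intro d h1 h2
        rw [mem_filter, mem_Ioc] at h1
        rw [mem_Ioc] at h2
        exact absurd h2.1 (not_lt.2 h1.1.2)
      rw [sum_union hdis]
      exact add_le_add tb tc
    refine (norm_add_le _ _).trans ((add_le_add ta tbc).trans ?_)
    have f1 : C * (X * (1 + L)) * (q.totient : ℝ)⁻¹ ≤ ε / 3 * (X * L) := by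
      calc _ ≤ C * (X * (1 + L)) * (ε / (6 * C)) := by gcongr
        _ = ε / 6 * (X * (1 + L)) := by field_simp
        _ ≤ ε / 6 * (X * (L + L)) := by gcongr
        _ = _ := by ring
    have hqX : q ≤ X := by
      have : K * D ≤ X := Nat.mul_div_le X K
      have : 4 * D ≤ K * D := Nat.mul_le_mul_right _ hK4
      omega
    have hlq : Real.log q ≤ L := Real.log_le_log hq' (by exact_mod_cast hqX)
    have hDr : (D:ℝ) * K ≤ X := by exact_mod_cast Nat.div_mul_le_self X K
    have hqD : (q:ℝ) ≤ 4 * D := by exact_mod_cast hr2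
    have f2 : 4 * L ^ 2 * ((D + q) * (1 + Real.log q)) ≤ ε / 3 * (X * L) := by
      calc _ ≤ 4 * L ^ 2 * ((D + 4 * D) * (1 + L)) := by
            gcongr
        _ = D * L * (20 * (1 + L) * L) := by ring
        _ ≤ D * L * (ε / 3 * K) := by gcongr
        _ = ε / 3 * L * (D * K) := by ring
        _ ≤ ε / 3 * L * X := by gcongr
        _ = _ := by ring
    have f3 : X * (Real.log K ^ 2 * (1 + Real.log K)) ≤ ε / 3 * (X * L) := by
      calc _ ≤ X * (ε / 3 * L) := by gcongr
        _ = _ := by ring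
    linarith

end

section
open Filter Finset MeasureTheory Topology

theorem ee_ne_one (t : ℝ) (ht : Irrational t) : ee t ≠ 1 := by
  intro h
  have h1 := ee_sub_one_eq t
  rw [h, sub_self, norm_zero] at h1
  have h2 : Real.sin (Real.pi * t) = 0 := by
    rw [← abs_eq_zero]; linarith
  obtain ⟨n, hn⟩ := Real.sin_eq_zero_iff.1 h2
  have : t = n := by
    have := Real.pi_ne_zero
    rw [mul_comm] at hn
    exact (mul_left_cancel₀ this hn).symm
  exact ht.ne_int n this

theorem ne_irr (α : ℝ) (hα : Irrational α) (ε : ℝ) (hε : 0 < ε) :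
    ∀ᶠ X : ℕ in atTop, ‖∑ n ∈ Ioc 0 X, (lam2 n : ℂ) * ee (n * α)‖ ≤ ε * (X * Real.log X) := by
  obtain ⟨R, hR⟩ := nd_typeI ε hε
  have h1 : ∀ᶠ η : ℝ in 𝓝[>] 0, ∀ r ∈ Ico 1 R, η < ‖ee ((r:ℕ) * α) - 1‖ := by
    rw [eventually_all_finset]
    intro r hr
    have : (0:ℝ) < ‖ee ((r:ℕ) * α) - 1‖ := by
      rw [norm_pos_iff, sub_ne_zero]
      refine ee_ne_one _ (hα.natCast_mul ?_)
      rw [mem_Ico] at hr; omega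
    exact (eventually_lt_nhds this).filter_mono nhdsWithin_le_nhds
  obtain ⟨η, hη1, hη2⟩ := (h1.and self_mem_nhdsWithin).exists
  obtain ⟨X0, h0⟩ := hR η hη2
  filter_upwards [eventually_ge_atTop X0] with X hX
  rcases h0 X hX α with h | ⟨r, hr1, hr2, hr3⟩
  · exact h
  · exact absurd hr3 (not_le.2 (hη1 r (mem_Ico.2 ⟨hr1, hr2⟩)))

theorem ne_geom (t : ℝ) (L : ℕ) (hL : 0 < L) (h : ‖ee t - 1‖ ≤ 1 / (2 * L)) :
    1 ≤ 4 / (L:ℝ) ^ 2 * ‖∑ l ∈ range L, ee (l * t)‖ ^ 2 := by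
  have hL' : (0:ℝ) < L := by exact_mod_cast hL
  have h1 : ∀ l ∈ range L, ‖ee (l * t) - 1‖ ≤ 1 / 2 := by
    intro l hl
    have h2 : ∀ k : ℕ, ‖ee (k * t) - 1‖ ≤ k * ‖ee t - 1‖ := by
      intro k
      induction k with
      | zero => simp [ee_zero]
      | succ k ih =>
        have : ee ((k + 1 : ℕ) * t) - 1 = ee t * (ee (k * t) - 1) + (ee t - 1) := by
          have : ((k + 1 : ℕ) : ℝ) * t = t + k * t := by push_cast; ring
          rw [this, ee_add]; ring
        rw [this]
        refine (norm_add_le _ _).trans ?_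
        rw [norm_mul, norm_ee]; push_cast; linarith
    have hlL : (l:ℝ) ≤ L := by exact_mod_cast (mem_range.1 hl).le
    calc _ ≤ l * ‖ee t - 1‖ := h2 l
      _ ≤ L * (1 / (2 * L)) := by gcongr
      _ = 1 / 2 := by field_simp
  have h3 : (L:ℝ) / 2 ≤ ‖∑ l ∈ range L, ee (l * t)‖ := by
    have h4 : ‖∑ l ∈ range L, (ee (l * t) - 1)‖ ≤ L * (1 / 2) := by
      refine (norm_sum_le_of_le _ h1).trans ?_
      simp
    rw [sum_sub_distrib, sum_const, card_range, nsmul_eq_mul, mul_one] at h4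
    have h5 := norm_sub_le (∑ l ∈ range L, ee (l * t)) (∑ l ∈ range L, ee (l * t) - (L:ℂ))
    rw [sub_sub_cancel, Complex.norm_natCast] at h5
    linarith
  have h6 : ((L:ℝ) / 2) ^ 2 ≤ ‖∑ l ∈ range L, ee (l * t)‖ ^ 2 := pow_le_pow_left₀ (by positivity) h3 2
  calc (1:ℝ) = 4 / (L:ℝ) ^ 2 * (L / 2) ^ 2 := by field_simp; norm_num
    _ ≤ _ := by gcongr

theorem norm_sq_sum {ι : Type*} (s : Finset ι) (f : ι → ℂ) :
    ((‖∑ i ∈ s, f i‖ ^ 2 : ℝ) : ℂ) = ∑ i ∈ s, ∑ j ∈ s, f i * (starRingEnd ℂ) (f j) := by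
  rw [Complex.ofReal_pow, ← Complex.mul_conj', map_sum, sum_mul_sum]

theorem ne_kernel (s : Finset ℕ) (w : ℕ → ℝ) (β : ℝ) (L : ℕ) :
    ∑ m ∈ s, ∑ m' ∈ s, w m * w m' * ‖∑ l ∈ range L, ee (l * (((m:ℝ) - m') * β))‖ ^ 2 =
    ∑ l ∈ range L, ∑ l' ∈ range L, ‖∑ m ∈ s, (w m : ℂ) * ee (m * (((l:ℝ) - l') * β))‖ ^ 2 := by
  apply Complex.ofReal_injective
  push_cast [-Complex.ofReal_pow]
  simp only [norm_sq_sum, mul_sum]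
  have h1 : ∀ m m' l l' : ℕ, (w m : ℂ) * w m' * (ee (l * (((m:ℝ) - m') * β)) * (starRingEnd ℂ) (ee (l' * (((m:ℝ) - m') * β)))) =
      (w m : ℂ) * ee (m * (((l:ℝ) - l') * β)) * (starRingEnd ℂ) ((w m' : ℂ) * ee (m' * (((l:ℝ) - l') * β))) := by
    intro m m' l l'
    rw [map_mul, Complex.conj_ofReal, ee_conj, ee_conj]
    have : ee (l * (((m:ℝ) - m') * β)) * ee (-(l' * (((m:ℝ) - m') * β))) =
      ee (m * (((l:ℝ) - l') * β)) * ee (-(m' * (((l:ℝ) - l') * β))) := by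
      rw [← ee_add, ← ee_add]; congr 1; ring
    linear_combination (w m : ℂ) * w m' * this
  simp only [h1]
  calc _ = ∑ m ∈ s, ∑ l ∈ range L, ∑ m' ∈ s, ∑ l' ∈ range L, (w m : ℂ) * ee (m * (((l:ℝ) - l') * β)) * (starRingEnd ℂ) ((w m' : ℂ) * ee (m' * (((l:ℝ) - l') * β))) :=
        sum_congr rfl fun m _ => sum_comm
    _ = ∑ l ∈ range L, ∑ m ∈ s, ∑ m' ∈ s, ∑ l' ∈ range L, _ := sum_comm
    _ = ∑ l ∈ range L, ∑ m ∈ s, ∑ l' ∈ range L, ∑ m' ∈ s, _ :=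
        sum_congr rfl fun l _ => sum_congr rfl fun m _ => sum_comm
    _ = _ := sum_congr rfl fun l _ => sum_comm

open Classical in
theorem ne_bad1 (s : Finset ℕ) (w : ℕ → ℝ) (hw : ∀ m, 0 ≤ w m) (β : ℝ) (L : ℕ) (hL : 0 < L) :
    ∑ m ∈ s, ∑ m' ∈ s, w m * w m' * (if ‖ee (((m:ℝ) - m') * β) - 1‖ ≤ 1 / (2 * L) then 1 else 0) ≤
    4 / (L:ℝ) ^ 2 * ∑ l ∈ range L, ∑ l' ∈ range L, ‖∑ m ∈ s, (w m : ℂ) * ee (m * (((l:ℝ) - l') * β))‖ ^ 2 := by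
  rw [← ne_kernel, mul_sum]
  refine sum_le_sum fun m _ => ?_
  rw [mul_sum]
  refine sum_le_sum fun m' _ => ?_
  have h0 : 0 ≤ w m * w m' := mul_nonneg (hw _) (hw _)
  have : (if ‖ee (((m:ℝ) - m') * β) - 1‖ ≤ 1 / (2 * L) then (1:ℝ) else 0) ≤ 4 / (L:ℝ) ^ 2 * ‖∑ l ∈ range L, ee (l * (((m:ℝ) - m') * β))‖ ^ 2 := by
    split_ifs with h
    · exact ne_geom _ L hL h
    · positivity
  calc _ ≤ w m * w m' * (4 / (L:ℝ) ^ 2 * ‖∑ l ∈ range L, ee (l * (((m:ℝ) - m') * β))‖ ^ 2) := by gcongr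
    _ = _ := by ring

theorem ne_dy (α : ℝ) (hα : Irrational α) (δ : ℝ) (hδ : 0 < δ) :
    ∀ᶠ M : ℕ in atTop, ‖∑ m ∈ Ioc M (2 * M), (lam2 m : ℂ) * ee (m * α)‖ ≤ δ * (5 * (M * Real.log M)) := by
  have h1 := ne_irr α hα δ hδ
  have h2 : Tendsto (fun M : ℕ => 2 * M) atTop atTop := tendsto_id.const_mul_atTop' (by norm_num)
  have hl : Tendsto (fun X : ℕ => Real.log X) atTop atTop := Real.tendsto_log_atTop.comp tendsto_natCast_atTop_atTop
  filter_upwards [h1, h2.eventually h1, hl.eventually_ge_atTop 1, eventually_gt_atTop 0] with M a b c d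
  have h3 : ∑ m ∈ Ioc M (2 * M), (lam2 m : ℂ) * ee (m * α) = ∑ m ∈ Ioc 0 (2 * M), (lam2 m : ℂ) * ee (m * α) - ∑ m ∈ Ioc 0 M, (lam2 m : ℂ) * ee (m * α) := by
    rw [eq_sub_iff_add_eq, add_comm, sum_Ioc_consecutive _ (by omega) (by omega)]
  rw [h3]
  refine (norm_sub_le _ _).trans ((add_le_add b a).trans ?_)
  have hM : (0:ℝ) < M := by exact_mod_cast d
  push_cast
  rw [Real.log_mul (by norm_num) hM.ne', ← mul_add]
  have h7 : Real.log 2 ≤ 1 := by linarith [Real.log_two_lt_d9]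
  refine mul_le_mul_of_nonneg_left ?_ hδ.le
  nlinarith

open Classical in
theorem ne_bad2 (ε : ℝ) (hε : 0 < ε) : ∃ L : ℕ, 0 < L ∧ ∀ α : ℝ, Irrational α → ∀ᶠ M : ℕ in atTop,
    ∑ m ∈ Ioc M (2 * M), ∑ m' ∈ Ioc M (2 * M), ArithmeticFunction.vonMangoldt m * ArithmeticFunction.vonMangoldt m' *
     (if ‖ee (((m:ℝ) - m') * α) - 1‖ ≤ 1 / (2 * L) then 1 else 0) ≤ ε * M ^ 2 := by
  have hc := chC_pos
  set C := chC + chC ^ 2 + chC with hC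
  have hC0 : 0 < C := by positivity
  obtain ⟨L, hL⟩ := exists_nat_gt (128 * C ^ 2 / ε)
  have hL0 : (0:ℝ) < L := lt_trans (by positivity) hL
  refine ⟨L, by exact_mod_cast hL0, fun α hα => ?_⟩
  set δ := Real.sqrt (ε / 200) with hδ
  have hδ2 : δ ^ 2 = ε / 200 := Real.sq_sqrt (by positivity)
  have hδ0 : 0 < δ := Real.sqrt_pos.2 (by positivity)
  have h1 : ∀ᶠ M : ℕ in atTop, ∀ l ∈ range L, ∀ l' ∈ range L, l ≠ l' →
      ‖∑ m ∈ Ioc M (2 * M), (lam2 m : ℂ) * ee (m * (((l:ℝ) - l') * α))‖ ≤ δ * (5 * (M * Real.log M)) := by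
    rw [eventually_all_finset]
    intro l _
    rw [eventually_all_finset]
    intro l' _
    by_cases hll : l = l'
    · exact Eventually.of_forall fun _ h => absurd hll h
    · have h2 : Irrational (((l:ℝ) - l') * α) := by
        have h3 : (l:ℤ) - l' ≠ 0 := by omega
        have := hα.intCast_mul h3
        push_cast at this; exact this
      filter_upwards [ne_dy _ h2 δ hδ0] with M hM _ using hM
  have hl : Tendsto (fun X : ℕ => Real.log X) atTop atTop := Real.tendsto_log_atTop.comp tendsto_natCast_atTop_atTop
  filter_upwards [h1, hl.eventually_ge_atTop 2, eventually_gt_atTop 0] with M h1 h2 h3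
  have hM : (0:ℝ) < M := by exact_mod_cast h3
  set w : ℕ → ℝ := fun m => lam2 m / Real.log M with hw
  have hw0 : ∀ m, 0 ≤ w m := fun m => div_nonneg (lam2_nonneg m) (by linarith)
  have hwm : ∀ m ∈ Ioc M (2 * M), ArithmeticFunction.vonMangoldt m ≤ w m := by
    intro m hm
    rw [mem_Ioc] at hm
    rw [hw]; simp only
    rw [le_div_iff₀ (by linarith)]
    refine le_trans ?_ (vm_log_le_lam2 m)
    have : Real.log M ≤ Real.log m := Real.log_le_log hM (by exact_mod_cast hm.1.le)
    exact mul_le_mul_of_nonneg_left this ArithmeticFunction.vonMangoldt_nonneg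
  have hsum : ∑ m ∈ Ioc M (2 * M), w m ≤ 4 * C * M := by
    rw [hw]; simp only
    rw [← sum_div, div_le_iff₀ (by linarith)]
    calc _ ≤ ∑ m ∈ Ioc 0 (2 * M), lam2 m :=
          sum_le_sum_of_subset_of_nonneg (Ioc_subset_Ioc_left (by omega)) fun _ _ _ => lam2_nonneg _
      _ ≤ _ := lam2_sum_le (2 * M)
      _ ≤ _ := by
        push_cast
        rw [Real.log_mul (by norm_num) hM.ne', ← hC]
        have h7 : Real.log 2 ≤ 1 := by linarith [Real.log_two_lt_d9]
        calc _ ≤ C * (2 * M * (2 * Real.log M)) := by gcongr; linarith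
          _ = _ := by ring
  have hnorm : ∀ t : ℝ, ‖∑ m ∈ Ioc M (2 * M), (w m : ℂ) * ee (m * t)‖ = ‖∑ m ∈ Ioc M (2 * M), (lam2 m : ℂ) * ee (m * t)‖ / Real.log M := by
    intro t
    have : ∑ m ∈ Ioc M (2 * M), (w m : ℂ) * ee (m * t) = (∑ m ∈ Ioc M (2 * M), (lam2 m : ℂ) * ee (m * t)) / (Real.log M : ℂ) := by
      rw [sum_div]
      refine sum_congr rfl fun m _ => ?_
      simp only [hw]; push_cast; ring
    rw [this, norm_div, Complex.norm_real, Real.norm_of_nonneg (by linarith)]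
  calc _ ≤ ∑ m ∈ Ioc M (2 * M), ∑ m' ∈ Ioc M (2 * M), w m * w m' *
     (if ‖ee (((m:ℝ) - m') * α) - 1‖ ≤ 1 / (2 * L) then 1 else 0) := by
        refine sum_le_sum fun m hm => sum_le_sum fun m' hm' => ?_
        have : (0:ℝ) ≤ if ‖ee (((m:ℝ) - m') * α) - 1‖ ≤ 1 / (2 * L) then 1 else 0 := by split_ifs <;> norm_num
        exact mul_le_mul_of_nonneg_right (mul_le_mul (hwm m hm) (hwm m' hm') ArithmeticFunction.vonMangoldt_nonneg (hw0 _)) this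
    _ ≤ _ := ne_bad1 _ w hw0 α L (by exact_mod_cast hL0)
    _ ≤ 4 / (L:ℝ) ^ 2 * ∑ l ∈ range L, ∑ l' ∈ range L, ((if l = l' then (4 * C * M) ^ 2 else 0) + (5 * δ * M) ^ 2) := by
        gcongr with l hl' l' hl''
        by_cases hll : l = l'
        · rw [if_pos hll]
          have : ‖∑ m ∈ Ioc M (2 * M), (w m : ℂ) * ee (m * (((l:ℝ) - l') * α))‖ ≤ 4 * C * M := by
            refine (norm_sum_le _ _).trans (le_trans (le_of_eq ?_) hsum)
            refine sum_congr rfl fun m _ => ?_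
            rw [norm_mul, norm_ee, mul_one, Complex.norm_real, Real.norm_of_nonneg (hw0 m)]
          have := pow_le_pow_left₀ (norm_nonneg _) this 2
          have : 0 ≤ (5 * δ * M) ^ 2 := by positivity
          linarith
        · rw [if_neg hll, zero_add]
          refine pow_le_pow_left₀ (norm_nonneg _) ?_ 2
          rw [hnorm, div_le_iff₀ (by linarith)]
          refine (h1 l hl' l' hl'' hll).trans (le_of_eq (by ring))
    _ = 4 / (L:ℝ) ^ 2 * (L * (4 * C * M) ^ 2 + L ^ 2 * (5 * δ * M) ^ 2) := by
        congr 1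
        simp only [sum_add_distrib, sum_ite_eq, sum_const, card_range, nsmul_eq_mul]
        rw [sum_ite_mem, inter_self]
        simp; ring
    _ = (64 * C ^ 2 / L + 100 * δ ^ 2) * M ^ 2 := by field_simp; ring
    _ ≤ _ := by
        gcongr
        rw [hδ2]
        have : 64 * C ^ 2 / L ≤ ε / 2 := by
          rw [div_le_iff₀ hL0]
          rw [div_lt_iff₀ hε] at hL
          linarith
        linarith

open Classical in
theorem ne_bad (α : ℝ) (hα : Irrational α) (R : ℕ) (ε : ℝ) (hε : 0 < ε) : ∃ η : ℝ, 0 < η ∧ ∀ᶠ M : ℕ in atTop,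
    ∑ m ∈ Ioc M (2 * M), ∑ m' ∈ Ioc M (2 * M), ArithmeticFunction.vonMangoldt m * ArithmeticFunction.vonMangoldt m' *
     (if ∃ r : ℕ, 1 ≤ r ∧ r < R ∧ ‖ee (r * (((m:ℝ) - m') * α)) - 1‖ ≤ η then 1 else 0) ≤ ε * M ^ 2 := by
  obtain ⟨L, hL, h⟩ := ne_bad2 (ε / (R + 1)) (by positivity)
  refine ⟨1 / (2 * L), by positivity, ?_⟩
  have h1 : ∀ᶠ M : ℕ in atTop, ∀ r ∈ Ico 1 R, ∑ m ∈ Ioc M (2 * M), ∑ m' ∈ Ioc M (2 * M), ArithmeticFunction.vonMangoldt m * ArithmeticFunction.vonMangoldt m' *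
     (if ‖ee (((m:ℝ) - m') * ((r:ℕ) * α)) - 1‖ ≤ 1 / (2 * L) then 1 else 0) ≤ ε / (R + 1) * M ^ 2 := by
    rw [eventually_all_finset]
    intro r hr
    rw [mem_Ico] at hr
    exact h _ (hα.natCast_mul (by omega))
  filter_upwards [h1] with M hM
  calc _ ≤ ∑ m ∈ Ioc M (2 * M), ∑ m' ∈ Ioc M (2 * M), ∑ r ∈ Ico 1 R, ArithmeticFunction.vonMangoldt m * ArithmeticFunction.vonMangoldt m' *
     (if ‖ee (((m:ℝ) - m') * ((r:ℕ) * α)) - 1‖ ≤ 1 / (2 * L) then 1 else 0) := by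
        refine sum_le_sum fun m hm => sum_le_sum fun m' hm' => ?_
        rw [← mul_sum]
        refine mul_le_mul_of_nonneg_left ?_ (mul_nonneg ArithmeticFunction.vonMangoldt_nonneg ArithmeticFunction.vonMangoldt_nonneg)
        have hnn : ∀ r ∈ Ico 1 R, (0:ℝ) ≤ (if ‖ee (((m:ℝ) - m') * ((r:ℕ) * α)) - 1‖ ≤ 1 / (2 * L) then 1 else 0) := by
          intro r _; split_ifs <;> norm_num
        split_ifs with h2
        · obtain ⟨r, hr1, hr2, hr3⟩ := h2
          refine le_trans ?_ (single_le_sum hnn (mem_Ico.2 ⟨hr1, hr2⟩))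
          rw [if_pos]
          rw [show ((m:ℝ) - m') * (r * α) = r * (((m:ℝ) - m') * α) by ring]
          exact hr3
        · exact sum_nonneg hnn
    _ = ∑ r ∈ Ico 1 R, ∑ m ∈ Ioc M (2 * M), ∑ m' ∈ Ioc M (2 * M), ArithmeticFunction.vonMangoldt m * ArithmeticFunction.vonMangoldt m' *
     (if ‖ee (((m:ℝ) - m') * ((r:ℕ) * α)) - 1‖ ≤ 1 / (2 * L) then 1 else 0) := by
        rw [sum_comm]
        simp_rw [sum_comm (s := Ico 1 R)]
        rw [sum_comm]
    _ ≤ ∑ r ∈ Ico 1 R, ε / (R + 1) * M ^ 2 := sum_le_sum hM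
    _ ≤ _ := by
        rw [sum_const, nsmul_eq_mul, Nat.card_Ico]
        have : ((R - 1 : ℕ) : ℝ) ≤ R + 1 := by
          have : R - 1 ≤ R + 1 := by omega
          exact_mod_cast this
        calc _ ≤ ((R:ℝ) + 1) * (ε / (R + 1) * M ^ 2) := by gcongr
          _ = _ := by field_simp

end

section
open Filter Finset MeasureTheory Topology

open scoped ArithmeticFunction.vonMangoldt

noncomputable def nfB (α : ℝ) (N M : ℕ) : ℂ :=
  ∑ m ∈ Ioc M (2 * M), ∑ n ∈ Ioc 0 (N / m), (Λ m : ℂ) * ((Λ n : ℂ) * ee (n * (m * α)))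

noncomputable def nfG (α : ℝ) (N M n : ℕ) : ℂ :=
  ∑ m ∈ Ioc M (2 * M), (if m * n ≤ N then (Λ m : ℂ) * ee (n * (m * α)) else 0)

theorem vm_nn (n : ℕ) : 0 ≤ Λ n := ArithmeticFunction.vonMangoldt_nonneg

theorem nf_sum2 (M : ℕ) : ∑ m ∈ Ioc M (2 * M), Λ m ≤ 2 * chC * M := by
  calc _ ≤ ∑ m ∈ Ioc 0 (2 * M), Λ m :=
        sum_le_sum_of_subset_of_nonneg (Ioc_subset_Ioc_left (by omega)) fun _ _ _ => vm_nn _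
    _ ≤ _ := vm_sum_le _
    _ = _ := by push_cast; ring

theorem nf_filter (N M m : ℕ) (hM : 0 < M) (hm : M < m) :
    (Ioc 0 (N / M)).filter (fun n => m * n ≤ N) = Ioc 0 (N / m) := by
  ext n
  rw [mem_filter, mem_Ioc, mem_Ioc, Nat.le_div_iff_mul_le hM, Nat.le_div_iff_mul_le (hM.trans hm)]
  constructor
  · rintro ⟨⟨a, b⟩, c⟩; exact ⟨a, by rw [mul_comm]; exact c⟩
  · rintro ⟨a, b⟩
    exact ⟨⟨a, (Nat.mul_le_mul_left n hm.le).trans b⟩, by rw [mul_comm]; exact b⟩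

theorem nf_sw (α : ℝ) (N M : ℕ) (hM : 0 < M) : nfB α N M = ∑ n ∈ Ioc 0 (N / M), (Λ n : ℂ) * nfG α N M n := by
  simp only [nfB, nfG, mul_sum]
  rw [sum_comm]
  refine sum_congr rfl fun m hm => ?_
  rw [mem_Ioc] at hm
  rw [← nf_filter N M m hM hm.1, sum_filter]
  refine sum_congr rfl fun n _ => ?_
  split_ifs
  · ring
  · simp

theorem nfG_le (α : ℝ) (N M n : ℕ) : ‖nfG α N M n‖ ≤ 2 * chC * M := by
  refine (norm_sum_le _ _).trans (le_trans (sum_le_sum fun m _ => ?_) (nf_sum2 M))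
  split_ifs
  · rw [norm_mul, norm_ee, mul_one, Complex.norm_real, Real.norm_of_nonneg (vm_nn m)]
  · rw [norm_zero]; exact vm_nn m

theorem nf_filter2 (N M m m' : ℕ) (hM : 0 < M) (hm : M < m) (hm' : M < m') :
    (Ioc 0 (N / M)).filter (fun n => m * n ≤ N ∧ m' * n ≤ N) = Ioc 0 (min (N / m) (N / m')) := by
  rw [filter_and, nf_filter N M m hM hm, nf_filter N M m' hM hm']
  ext n
  simp only [mem_inter, mem_Ioc, le_min_iff]
  tauto

theorem nf_moment (α : ℝ) (N M : ℕ) (hM : 0 < M) (V : ℕ → ℕ → ℝ)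
    (hV : ∀ m ∈ Ioc M (2 * M), ∀ m' ∈ Ioc M (2 * M),
      ‖∑ n ∈ Ioc 0 (min (N / m) (N / m')), (lam2 n : ℂ) * ee (n * (((m:ℝ) - m') * α))‖ ≤ V m m') :
    ∑ n ∈ Ioc 0 (N / M), lam2 n * ‖nfG α N M n‖ ^ 2 ≤
      ∑ m ∈ Ioc M (2 * M), ∑ m' ∈ Ioc M (2 * M), Λ m * Λ m' * V m m' := by
  have h1 : ((∑ n ∈ Ioc 0 (N / M), lam2 n * ‖nfG α N M n‖ ^ 2 : ℝ) : ℂ) =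
      ∑ m ∈ Ioc M (2 * M), ∑ m' ∈ Ioc M (2 * M), (Λ m : ℂ) * Λ m' *
        ∑ n ∈ Ioc 0 (min (N / m) (N / m')), (lam2 n : ℂ) * ee (n * (((m:ℝ) - m') * α)) := by
    push_cast [-Complex.ofReal_pow]
    simp only [nfG, norm_sq_sum, mul_sum]
    rw [sum_comm]
    refine sum_congr rfl fun m hm => ?_
    rw [sum_comm]
    refine sum_congr rfl fun m' hm' => ?_
    rw [mem_Ioc] at hm hm'
    rw [← nf_filter2 N M m m' hM hm.1 hm'.1, sum_filter]
    refine sum_congr rfl fun n _ => ?_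
    by_cases c1 : m * n ≤ N
    · by_cases c2 : m' * n ≤ N
      · rw [if_pos c1, if_pos c2, if_pos ⟨c1, c2⟩, map_mul, Complex.conj_ofReal, ee_conj]
        have : ee (n * (((m:ℝ) - m') * α)) = ee (n * (m * α)) * ee (-(n * (m' * α))) := by
          rw [← ee_add]; congr 1; ring
        rw [this]; ring
      · simp [c2]
    · simp [c1]
  have h2 : ∑ n ∈ Ioc 0 (N / M), lam2 n * ‖nfG α N M n‖ ^ 2 ≤ ‖((∑ n ∈ Ioc 0 (N / M), lam2 n * ‖nfG α N M n‖ ^ 2 : ℝ) : ℂ)‖ := by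
    rw [Complex.norm_real]; exact le_abs_self _
  refine h2.trans ?_
  rw [h1]
  refine norm_sum_le_of_le _ fun m hm => norm_sum_le_of_le _ fun m' hm' => ?_
  rw [norm_mul, norm_mul, Complex.norm_real, Complex.norm_real, Real.norm_of_nonneg (vm_nn m), Real.norm_of_nonneg (vm_nn m')]
  exact mul_le_mul_of_nonneg_left (hV m hm m' hm') (mul_nonneg (vm_nn _) (vm_nn _))

theorem nf_cs (α : ℝ) (N M X Y : ℕ) (hX : X = N / M) (hY : Y = Nat.sqrt X) (hM : 0 < M) (hX1 : 1 ≤ Real.log X) :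
    ‖nfB α N M‖ ≤ 2 * chC ^ 2 * (M * Y) +
      Real.sqrt (chC * X * (2 / Real.log X * ∑ n ∈ Ioc 0 X, lam2 n * ‖nfG α N M n‖ ^ 2)) := by
  have hc := chC_pos
  rw [nf_sw α N M hM, ← hX]
  have hYX : Y ≤ X := by rw [hY]; exact Nat.sqrt_le_self X
  rw [← sum_Ioc_consecutive _ (Nat.zero_le Y) hYX]
  refine (norm_add_le _ _).trans (add_le_add ?_ ?_)
  · calc _ ≤ ∑ n ∈ Ioc 0 Y, Λ n * (2 * chC * M) := by
          refine norm_sum_le_of_le _ fun n _ => ?_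
          rw [norm_mul, Complex.norm_real, Real.norm_of_nonneg (vm_nn n)]
          exact mul_le_mul_of_nonneg_left (nfG_le _ _ _ _) (vm_nn n)
      _ ≤ chC * Y * (2 * chC * M) := by
          rw [← sum_mul]
          exact mul_le_mul_of_nonneg_right (vm_sum_le Y) (by positivity)
      _ = _ := by ring
  · apply Real.le_sqrt_of_sq_le
    have h1 : ‖∑ n ∈ Ioc Y X, (Λ n : ℂ) * nfG α N M n‖ ≤ ∑ n ∈ Ioc Y X, Real.sqrt (Λ n) * (Real.sqrt (Λ n) * ‖nfG α N M n‖) := by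
      refine norm_sum_le_of_le _ fun n _ => ?_
      rw [norm_mul, Complex.norm_real, Real.norm_of_nonneg (vm_nn n), ← mul_assoc, Real.mul_self_sqrt (vm_nn n)]
    have h2 := pow_le_pow_left₀ (norm_nonneg _) h1 2
    refine h2.trans ((sum_mul_sq_le_sq_mul_sq _ _ _).trans ?_)
    refine mul_le_mul ?_ ?_ (by positivity) (by positivity)
    · calc _ = ∑ n ∈ Ioc Y X, Λ n := sum_congr rfl fun n _ => Real.sq_sqrt (vm_nn n)
        _ ≤ ∑ n ∈ Ioc 0 X, Λ n := sum_le_sum_of_subset_of_nonneg (Ioc_subset_Ioc_left (by omega)) fun _ _ _ => vm_nn _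
        _ ≤ _ := vm_sum_le X
    · rw [mul_sum]
      refine le_trans (sum_le_sum fun n hn => ?_) (sum_le_sum_of_subset_of_nonneg (Ioc_subset_Ioc_left (Nat.zero_le Y)) fun n _ _ => ?_)
      · rw [mul_pow, Real.sq_sqrt (vm_nn n), ← mul_assoc]
        refine mul_le_mul_of_nonneg_right ?_ (by positivity)
        rw [mem_Ioc] at hn
        have h3 : X < n * n := lt_of_lt_of_le (Nat.lt_succ_sqrt X) (by
          rw [← hY]; exact Nat.mul_le_mul hn.1 hn.1)
        have hX0 : (0:ℝ) < X := by
          rcases Nat.eq_zero_or_pos X with h | h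
          · rw [h] at hX1; norm_num at hX1
          · exact_mod_cast h
        have hn0 : (n:ℝ) ≠ 0 := by
          have : 0 < n := by omega
          exact_mod_cast this.ne'
        have h4 : Real.log X ≤ 2 * Real.log n := by
          have : Real.log X ≤ Real.log (n * n) := Real.log_le_log hX0 (by exact_mod_cast h3.le)
          rw [Real.log_mul hn0 hn0] at this; linarith
        rw [div_mul_eq_mul_div, le_div_iff₀ (by linarith)]
        have := vm_log_le_lam2 n
        nlinarith [vm_nn n]
      · have := lam2_nonneg n; positivity

open Classical in
theorem nf_dyadic (α : ℝ) (hα : Irrational α) (ε : ℝ) (hε : 0 < ε) : ∃ M0 X0 : ℕ, 0 < M0 ∧ 0 < X0 ∧ ∀ M N : ℕ, M0 ≤ M →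
    2 * X0 * M ≤ N → ‖nfB α N M‖ ≤ ε * N := by
  have hc := chC_pos
  set C := chC + chC ^ 2 + chC with hC
  have hC0 : 0 < C := by positivity
  set ε1 := ε ^ 2 / (8 * chC * (4 * chC ^ 2 + 2 * C)) with hε1
  have hε10 : 0 < ε1 := by positivity
  obtain ⟨R, hR⟩ := nd_typeI ε1 hε10
  obtain ⟨η, hη, hbad⟩ := ne_bad α hα R ε1 hε10
  obtain ⟨X1, hX1⟩ := hR η hη
  obtain ⟨M1, hM1⟩ := eventually_atTop.1 hbad
  obtain ⟨y0, hy0⟩ := exists_nat_ge (4 * chC ^ 2 / ε)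
  refine ⟨M1 + 1, X1 + y0 * y0 + 3, by omega, by omega, fun M N hMM hN => ?_⟩
  set X0 := X1 + y0 * y0 + 3 with hX0
  have hM0 : 0 < M := by omega
  have hMr : (0:ℝ) < M := by exact_mod_cast hM0
  set X := N / M with hX
  have hXX : 2 * X0 ≤ X := (Nat.le_div_iff_mul_le hM0).2 hN
  have hX3 : 3 ≤ X := by omega
  have hX3r : (3:ℝ) ≤ X := by exact_mod_cast hX3
  have hlog : 1 ≤ Real.log X := by
    rw [Real.le_log_iff_exp_le (by linarith)]
    linarith [Real.exp_one_lt_d9]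
  have hXM : (X:ℝ) * M ≤ N := by exact_mod_cast Nat.div_mul_le_self N M
  set Y := Nat.sqrt X with hY
  have h1 := nf_cs α N M X Y hX hY hM0 hlog
  have h2 : 2 * chC ^ 2 * (M * Y) ≤ ε / 2 * N := by
    have hYy : y0 ≤ Y := by
      rw [hY, Nat.le_sqrt]; omega
    have hYy' : (y0:ℝ) ≤ Y := by exact_mod_cast hYy
    have hYX : (Y:ℝ) * Y ≤ X := by exact_mod_cast Nat.sqrt_le X
    have h3 : 4 * chC ^ 2 ≤ ε * Y := by
      rw [div_le_iff₀ hε] at hy0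
      nlinarith
    calc 2 * chC ^ 2 * (M * Y) = 4 * chC ^ 2 * (M * Y) / 2 := by ring
      _ ≤ (ε * Y) * (M * Y) / 2 := by gcongr
      _ = ε / 2 * (Y * Y * M) := by ring
      _ ≤ ε / 2 * (X * M) := by gcongr
      _ ≤ _ := by gcongr
  set bad : ℕ → ℕ → ℝ := fun m m' => if ∃ r : ℕ, 1 ≤ r ∧ r < R ∧ ‖ee (r * (((m:ℝ) - m') * α)) - 1‖ ≤ η then 1 else 0 with hbd
  have h3 : ∑ n ∈ Ioc 0 X, lam2 n * ‖nfG α N M n‖ ^ 2 ≤ ε1 * (4 * chC ^ 2 + 2 * C) * (X * Real.log X) * M ^ 2 := by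
    refine (nf_moment α N M hM0 (fun m m' => ε1 * (X * Real.log X) + C * (X * (1 + Real.log X)) * bad m m') ?_).trans ?_
    · intro m hm m' hm'
      rw [mem_Ioc] at hm hm'
      set Z := min (N / m) (N / m') with hZ
      have hZX : Z ≤ X := (min_le_left _ _).trans (Nat.div_le_div_left hm.1.le hM0)
      have hgen : ∀ k, k ≤ 2 * M → M < k → X0 ≤ N / k := by
        intro k hk hk'
        refine (Nat.le_div_iff_mul_le (by omega)).2 (le_trans ?_ hN)
        calc X0 * k ≤ X0 * (2 * M) := Nat.mul_le_mul_left _ hk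
          _ = _ := by ring
      have hXZ : X0 ≤ Z := le_min (hgen m hm.2 hm.1) (hgen m' hm'.2 hm'.1)
      have hZ0 : (0:ℝ) < Z := by
        have : 0 < Z := by omega
        exact_mod_cast this
      have hZXr : (Z:ℝ) ≤ X := by exact_mod_cast hZX
      have hlZ : Real.log Z ≤ Real.log X := Real.log_le_log hZ0 hZXr
      have hlZ0 : 0 ≤ Real.log Z := Real.log_natCast_nonneg Z
      rcases hX1 Z (by omega) (((m:ℝ) - m') * α) with h | h
      · refine h.trans ?_
        have hb : 0 ≤ bad m m' := by simp only [hbd]; split_ifs <;> norm_num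
        calc _ ≤ ε1 * (X * Real.log X) := by gcongr
          _ ≤ _ := le_add_of_nonneg_right (by positivity)
      · have hb : bad m m' = 1 := by simp only [hbd]; rw [if_pos h]
        rw [hb, mul_one]
        calc _ ≤ ∑ n ∈ Ioc 0 Z, lam2 n := by
              refine norm_sum_le_of_le _ fun n _ => ?_
              rw [norm_mul, norm_ee, mul_one, Complex.norm_real, Real.norm_of_nonneg (lam2_nonneg n)]
          _ ≤ C * (Z * (1 + Real.log Z)) := lam2_sum_le Z
          _ ≤ C * (X * (1 + Real.log X)) := by gcongr
          _ ≤ _ := le_add_of_nonneg_left (by positivity)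
    · have e1 : ∑ m ∈ Ioc M (2 * M), ∑ m' ∈ Ioc M (2 * M), Λ m * Λ m' * (ε1 * (X * Real.log X) + C * (X * (1 + Real.log X)) * bad m m') =
          ε1 * (X * Real.log X) * ((∑ m ∈ Ioc M (2 * M), Λ m) * (∑ m ∈ Ioc M (2 * M), Λ m)) + C * (X * (1 + Real.log X)) * ∑ m ∈ Ioc M (2 * M), ∑ m' ∈ Ioc M (2 * M), Λ m * Λ m' * bad m m' := by
        rw [sum_mul_sum, mul_sum, mul_sum, ← sum_add_distrib]
        refine sum_congr rfl fun m _ => ?_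
        rw [mul_sum, mul_sum, ← sum_add_distrib]
        refine sum_congr rfl fun m' _ => ?_
        ring
      rw [e1]
      have e2 := nf_sum2 M
      have e3 : 0 ≤ ∑ m ∈ Ioc M (2 * M), Λ m := sum_nonneg fun _ _ => vm_nn _
      have e4 := hM1 M (by omega)
      calc _ ≤ ε1 * (X * Real.log X) * ((2 * chC * M) * (2 * chC * M)) + C * (X * (Real.log X + Real.log X)) * (ε1 * M ^ 2) := by
            gcongr
        _ = _ := by ring
  have h4 : Real.sqrt (chC * X * (2 / Real.log X * ∑ n ∈ Ioc 0 X, lam2 n * ‖nfG α N M n‖ ^ 2)) ≤ ε / 2 * N := by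
    apply Real.sqrt_le_iff.2 ⟨by positivity, ?_⟩
    calc _ ≤ chC * X * (2 / Real.log X * (ε1 * (4 * chC ^ 2 + 2 * C) * (X * Real.log X) * M ^ 2)) := by gcongr
      _ = (ε / 2) ^ 2 * (X * M) ^ 2 := by
        rw [hε1]
        field_simp
        ring
      _ ≤ (ε / 2) ^ 2 * N ^ 2 := by gcongr
      _ = _ := by ring
  linarith

end

section
open Filter Finset MeasureTheory Topology

open scoped ArithmeticFunction.vonMangoldt

noncomputable def ngF (α : ℝ) (N m : ℕ) : ℂ := ∑ n ∈ Ioc 0 (N / m), (Λ m : ℂ) * ((Λ n : ℂ) * ee (n * (m * α)))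

theorem ng_triv (K N : ℕ) : ∑ m ∈ Ioc 0 K, ∑ n ∈ Ioc 0 (N / m), Λ m * Λ n ≤ chC * N * (Real.log K + chC) := by
  have hc := chC_pos
  calc _ ≤ ∑ m ∈ Ioc 0 K, chC * N * (Λ m / m) := by
        refine sum_le_sum fun m hm => ?_
        rw [← mul_sum]
        have h1 := (vm_sum_le (N / m)).trans (mul_le_mul_of_nonneg_left (Nat.cast_div_le (m := N) (n := m) (α := ℝ)) hc.le)
        calc _ ≤ Λ m * (chC * (N / m)) := mul_le_mul_of_nonneg_left h1 (vm_nn m)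
          _ = _ := by ring
    _ ≤ _ := by
        rw [← mul_sum]
        exact mul_le_mul_of_nonneg_left (vm_div_sum_le K) (by positivity)

theorem ngF_le (α : ℝ) (N m : ℕ) : ‖ngF α N m‖ ≤ ∑ n ∈ Ioc 0 (N / m), Λ m * Λ n := by
  refine norm_sum_le_of_le _ fun n _ => ?_
  rw [norm_mul, norm_mul, norm_ee, Complex.norm_real, Complex.norm_real, Real.norm_of_nonneg (vm_nn m), Real.norm_of_nonneg (vm_nn n), mul_one]

theorem ng_tail (α : ℝ) (N W K : ℕ) (h : N < K * W) : ‖∑ m ∈ Ioc W N, ngF α N m‖ ≤ chC * N * (Real.log K + chC) := by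
  refine (norm_sum_le_of_le _ fun m _ => ngF_le α N m).trans (le_trans ?_ (ng_triv K N))
  rw [sum_comm' (s' := fun n => (Ioc W N).filter (fun m => n * m ≤ N)) (t' := Ioc 0 K)]
  · refine sum_le_sum fun n hn => ?_
    rw [mem_Ioc] at hn
    calc _ = ∑ m ∈ (Ioc W N).filter (fun m => n * m ≤ N), Λ n * Λ m := sum_congr rfl fun _ _ => mul_comm _ _
      _ ≤ _ := by
        refine sum_le_sum_of_subset_of_nonneg ?_ fun _ _ _ => mul_nonneg (vm_nn _) (vm_nn _)
        intro m hm
        rw [mem_filter, mem_Ioc] at hm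
        rw [mem_Ioc, Nat.le_div_iff_mul_le hn.1, mul_comm]
        exact ⟨by omega, hm.2⟩
  · intro m n
    simp only [mem_Ioc, mem_filter]
    constructor
    · rintro ⟨⟨h1, h2⟩, h3, h4⟩
      rw [Nat.le_div_iff_mul_le (by omega)] at h4
      refine ⟨⟨⟨h1, h2⟩, h4⟩, h3, ?_⟩
      by_contra hh
      push Not at hh
      have : K * W ≤ n * m := Nat.mul_le_mul hh.le h1.le
      omega
    · rintro ⟨⟨⟨h1, h2⟩, h3⟩, h4, h5⟩
      exact ⟨⟨h1, h2⟩, h4, by rw [Nat.le_div_iff_mul_le (by omega)]; exact h3⟩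

theorem ng_dy (α : ℝ) (N M0 I : ℕ) : ∑ m ∈ Ioc M0 (M0 * 2 ^ I), ngF α N m = ∑ i ∈ range I, nfB α N (M0 * 2 ^ i) := by
  induction I with
  | zero => simp
  | succ I ih =>
    rw [sum_range_succ, ← ih, nfB]
    have : M0 * 2 ^ (I + 1) = 2 * (M0 * 2 ^ I) := by ring
    rw [this]
    exact (sum_Ioc_consecutive _ (Nat.le_mul_of_pos_right _ (by positivity)) (by omega)).symm

theorem ng_bil (α : ℝ) (hα : Irrational α) (ε : ℝ) (hε : 0 < ε) :
    ∀ᶠ N : ℕ in atTop, ‖∑ m ∈ Ioc 0 N, ngF α N m‖ ≤ ε * (N * Real.log N) := by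
  have hc := chC_pos
  obtain ⟨M0, X0, hM0, hX0, h⟩ := nf_dyadic α hα (ε / 4) (by positivity)
  have hl : Tendsto (fun X : ℕ => Real.log X) atTop atTop := Real.tendsto_log_atTop.comp tendsto_natCast_atTop_atTop
  set c := chC * (Real.log M0 + chC) + chC * (Real.log (2 * X0 : ℕ) + chC) with hcc
  filter_upwards [hl.eventually_ge_atTop (4 * c / ε), hl.eventually_ge_atTop 1, eventually_ge_atTop (2 * X0 * M0)] with N h1 h2 h3
  set A := N / (2 * X0 * M0) with hA
  have hpos : 0 < 2 * X0 * M0 := by positivity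
  have hA1 : 1 ≤ A := (Nat.le_div_iff_mul_le hpos).2 (by omega)
  have hNr : (0:ℝ) ≤ N := Nat.cast_nonneg N
  set J := Nat.log 2 A with hJ
  have hJ1 : 2 ^ J ≤ A := Nat.pow_log_le_self 2 (by omega)
  have hJ2 : A < 2 ^ (J + 1) := Nat.lt_pow_succ_log_self (by norm_num) A
  have hAN : A * (2 * X0 * M0) ≤ N := Nat.div_mul_le_self _ _
  set W := M0 * 2 ^ (J + 1) with hW
  have hWN : W ≤ N := by
    calc W = 2 ^ J * (2 * 1 * M0) := by rw [hW]; ring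
      _ ≤ A * (2 * X0 * M0) := by gcongr; omega
      _ ≤ N := hAN
  have hW2 : N < 2 * X0 * W := by
    have := Nat.lt_mul_div_succ N hpos
    calc N < 2 * X0 * M0 * (A + 1) := this
      _ ≤ 2 * X0 * M0 * 2 ^ (J + 1) := by gcongr; omega
      _ = _ := by rw [hW]; ring
  have hM0W : M0 ≤ W := Nat.le_mul_of_pos_right _ (by positivity)
  rw [← sum_Ioc_consecutive _ (Nat.zero_le M0) (hM0W.trans hWN), ← sum_Ioc_consecutive _ hM0W hWN]
  have t1 : ‖∑ m ∈ Ioc 0 M0, ngF α N m‖ ≤ chC * N * (Real.log M0 + chC) :=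
    (norm_sum_le_of_le _ fun m _ => ngF_le α N m).trans (ng_triv M0 N)
  have t3 := ng_tail α N W (2 * X0) hW2
  have t2 : ‖∑ m ∈ Ioc M0 W, ngF α N m‖ ≤ (J + 1) * (ε / 4 * N) := by
    rw [hW, ng_dy]
    calc _ ≤ ∑ i ∈ range (J + 1), ε / 4 * N := by
          refine norm_sum_le_of_le _ fun i hi => h _ N (Nat.le_mul_of_pos_right _ (by positivity)) ?_
          rw [mem_range] at hi
          calc 2 * X0 * (M0 * 2 ^ i) ≤ 2 * X0 * (M0 * 2 ^ J) := by gcongr; · norm_num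
                                                                   · omega
            _ = 2 ^ J * (2 * X0 * M0) := by ring
            _ ≤ A * (2 * X0 * M0) := by gcongr
            _ ≤ N := hAN
      _ = _ := by simp
  have hJl : (J:ℝ) ≤ 2 * Real.log N := by
    have e1 : (2:ℝ) ^ J ≤ N := by
      have : 2 ^ J ≤ N := hJ1.trans (Nat.div_le_self _ _)
      exact_mod_cast this
    have e2 := Real.log_le_log (by positivity) e1
    rw [Real.log_pow] at e2
    have e3 : (1:ℝ)/2 ≤ Real.log 2 := by linarith [Real.log_two_gt_d9]
    nlinarith [(Nat.cast_nonneg J : (0:ℝ) ≤ J)]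
  refine (norm_add_le _ _).trans ?_
  have h4 := norm_add_le (∑ m ∈ Ioc M0 W, ngF α N m) (∑ m ∈ Ioc W N, ngF α N m)
  have h5 : c * N ≤ ε / 4 * (N * Real.log N) := by
    rw [div_le_iff₀ hε] at h1
    nlinarith
  have h6 : (J + 1) * (ε / 4 * N) ≤ 3 * (ε / 4 * (N * Real.log N)) := by
    calc _ ≤ (2 * Real.log N + Real.log N) * (ε / 4 * N) := by gcongr
      _ = _ := by ring
  have h7 : c * N = chC * N * (Real.log M0 + chC) + chC * N * (Real.log (2 * X0 : ℕ) + chC) := by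
    rw [hcc]; ring
  linarith

theorem ng_T (α : ℝ) (N : ℕ) : ∑ n ∈ Ioc 0 N, ((Λ n * Real.log n : ℝ) : ℂ) * ee (n * α) =
    ∑ n ∈ Ioc 0 N, (lam2 n : ℂ) * ee (n * α) - ∑ m ∈ Ioc 0 N, ngF α N m := by
  have h := na_hyp (fun m n => (Λ m : ℂ) * ((Λ n : ℂ) * ee (n * (m * α)))) N
  simp only [ngF]
  rw [← h, ← sum_sub_distrib]
  refine sum_congr rfl fun n _ => ?_
  have h1 : ∑ x ∈ n.divisorsAntidiagonal, (Λ x.1 : ℂ) * ((Λ x.2 : ℂ) * ee (x.2 * (x.1 * α))) = (((Λ * Λ : ArithmeticFunction ℝ) n : ℝ) : ℂ) * ee (n * α) := by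
    rw [ArithmeticFunction.mul_apply, Complex.ofReal_sum, sum_mul]
    refine sum_congr rfl fun x hx => ?_
    have hx' := (Nat.mem_divisorsAntidiagonal.1 hx).1
    have : ee (n * α) = ee (x.2 * (x.1 * α)) := by
      rw [← hx']; congr 1; push_cast; ring
    rw [this]; push_cast; ring
  rw [h1, lam2, ArithmeticFunction.add_apply, ArithmeticFunction.pmul_apply, ArithmeticFunction.log_apply]
  push_cast; ring

theorem ng_main (α : ℝ) (hα : Irrational α) (ε : ℝ) (hε : 0 < ε) :
    ∀ᶠ N : ℕ in atTop, ‖∑ n ∈ Ioc 0 N, (Λ n : ℂ) * ee (n * α)‖ ≤ ε * N := by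
  have hc := chC_pos
  obtain ⟨k, hk⟩ := exists_nat_gt (4 * chC / ε)
  have hk0 : (0:ℝ) < k := lt_trans (by positivity) hk
  have hk0' : 0 < k := by exact_mod_cast hk0
  have hl : Tendsto (fun X : ℕ => Real.log X) atTop atTop := Real.tendsto_log_atTop.comp tendsto_natCast_atTop_atTop
  filter_upwards [ng_bil α hα (ε/4) (by positivity), ne_irr α hα (ε/4) (by positivity), hl.eventually_ge_atTop 1,
    hl.eventually_ge_atTop (4 * chC * Real.log k / ε), eventually_gt_atTop 0] with N h1 h2 h3 h4 h5
  have hN : (0:ℝ) < N := by exact_mod_cast h5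
  set S := ∑ n ∈ Ioc 0 N, (Λ n : ℂ) * ee (n * α) with hS
  set T := ∑ n ∈ Ioc 0 N, ((Λ n * Real.log n : ℝ) : ℂ) * ee (n * α) with hT
  have hTn : ‖T‖ ≤ ε / 2 * (N * Real.log N) := by
    rw [hT, ng_T]
    refine (norm_sub_le _ _).trans ?_
    linarith
  have hD : ‖(Real.log N : ℂ) * S - T‖ ≤ ∑ n ∈ Ioc 0 N, Λ n * (Real.log N - Real.log n) := by
    rw [hS, hT, mul_sum, ← sum_sub_distrib]
    refine norm_sum_le_of_le _ fun n hn => ?_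
    rw [mem_Ioc] at hn
    have e0 : Real.log n ≤ Real.log N := Real.log_le_log (by exact_mod_cast hn.1) (by exact_mod_cast hn.2)
    have : (Real.log N : ℂ) * ((Λ n : ℂ) * ee (n * α)) - ((Λ n * Real.log n : ℝ) : ℂ) * ee (n * α) =
      ((Λ n * (Real.log N - Real.log n) : ℝ) : ℂ) * ee (n * α) := by push_cast; ring
    rw [this, norm_mul, norm_ee, mul_one, Complex.norm_real, Real.norm_of_nonneg (mul_nonneg (vm_nn n) (by linarith))]
  set Y := N / k with hY
  have hYN : Y ≤ N := Nat.div_le_self _ _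
  have hE : ∑ n ∈ Ioc 0 N, Λ n * (Real.log N - Real.log n) ≤ ε / 2 * (N * Real.log N) := by
    rw [← sum_Ioc_consecutive _ (Nat.zero_le Y) hYN]
    have a1 : ∑ n ∈ Ioc 0 Y, Λ n * (Real.log N - Real.log n) ≤ ε / 4 * (N * Real.log N) := by
      calc _ ≤ ∑ n ∈ Ioc 0 Y, Λ n * Real.log N := by
            refine sum_le_sum fun n _ => mul_le_mul_of_nonneg_left ?_ (vm_nn n)
            linarith [Real.log_natCast_nonneg n]
        _ ≤ chC * Y * Real.log N := by
            rw [← sum_mul]; exact mul_le_mul_of_nonneg_right (vm_sum_le Y) (by linarith)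
        _ ≤ chC * (N / k) * Real.log N := by
            gcongr; exact Nat.cast_div_le
        _ = (chC / k) * (N * Real.log N) := by ring
        _ ≤ _ := by
            refine mul_le_mul_of_nonneg_right ?_ (by positivity)
            rw [div_le_iff₀ hk0]
            rw [div_lt_iff₀ hε] at hk
            linarith
    have a2 : ∑ n ∈ Ioc Y N, Λ n * (Real.log N - Real.log n) ≤ ε / 4 * (N * Real.log N) := by
      calc _ ≤ ∑ n ∈ Ioc Y N, Λ n * Real.log k := by
            refine sum_le_sum fun n hn => mul_le_mul_of_nonneg_left ?_ (vm_nn n)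
            rw [mem_Ioc] at hn
            have b1 : N ≤ k * n := by
              have := Nat.lt_mul_div_succ N hk0'
              exact this.le.trans (Nat.mul_le_mul_left _ hn.1)
            have hn0 : (0:ℝ) < n := by
              have : 0 < n := (Nat.zero_le _).trans_lt hn.1
              exact_mod_cast this
            have b2 : Real.log N ≤ Real.log (k * n) := Real.log_le_log hN (by exact_mod_cast b1)
            rw [Real.log_mul hk0.ne' hn0.ne'] at b2
            linarith
        _ ≤ ∑ n ∈ Ioc 0 N, Λ n * Real.log k :=
            sum_le_sum_of_subset_of_nonneg (Ioc_subset_Ioc_left (Nat.zero_le _)) fun n _ _ => mul_nonneg (vm_nn _) (Real.log_natCast_nonneg k)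
        _ ≤ chC * N * Real.log k := by
            rw [← sum_mul]; exact mul_le_mul_of_nonneg_right (vm_sum_le N) (Real.log_natCast_nonneg k)
        _ ≤ _ := by
            rw [div_le_iff₀ hε] at h4
            nlinarith
    linarith
  have hfin : Real.log N * ‖S‖ ≤ Real.log N * (ε * N) := by
    have : ‖(Real.log N : ℂ) * S‖ = Real.log N * ‖S‖ := by
      rw [norm_mul, Complex.norm_real, Real.norm_of_nonneg (by linarith)]
    rw [← this]
    have h8 := norm_add_le ((Real.log N : ℂ) * S - T) T
    rw [sub_add_cancel] at h8
    linarith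
  exact le_of_mul_le_mul_left hfin (by linarith)

end

section
open Filter Finset MeasureTheory Topology

open scoped ArithmeticFunction.vonMangoldt

noncomputable def npl (n : ℕ) : ℝ := if n.Prime then Real.log n else 0

theorem npl_nn (n : ℕ) : 0 ≤ npl n := by
  unfold npl; split_ifs
  · exact Real.log_natCast_nonneg n
  · exact le_rfl

theorem npl_le (n : ℕ) : npl n ≤ Λ n := by
  unfold npl; split_ifs with h
  · rw [ArithmeticFunction.vonMangoldt_apply_prime h]
  · exact vm_nn n

theorem nh_err : Tendsto (fun N : ℕ => (∑ n ∈ Ioc 0 N, (Λ n - npl n)) / N) atTop (𝓝 0) := by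
  obtain ⟨C, hC⟩ := Chebyshev.psi_sub_theta_le_mul_sqrt
  have h1 : ∀ N : ℕ, ∑ n ∈ Ioc 0 N, (Λ n - npl n) ≤ C * Real.sqrt N := by
    intro N
    refine le_trans (le_of_eq ?_) (hC N)
    rw [Chebyshev.psi, Chebyshev.theta, Nat.floor_natCast, sum_filter, ← sum_sub_distrib]
    rfl
  have h2 : Tendsto (fun N : ℕ => C * (Real.sqrt N)⁻¹) atTop (𝓝 0) := by
    have : Tendsto (fun N : ℕ => Real.sqrt N) atTop atTop := Real.tendsto_sqrt_atTop.comp tendsto_natCast_atTop_atTop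
    simpa using this.inv_tendsto_atTop.const_mul C
  refine squeeze_zero (fun N => div_nonneg (sum_nonneg fun n _ => sub_nonneg.2 (npl_le n)) (Nat.cast_nonneg N)) (fun N => ?_) h2
  calc _ ≤ C * Real.sqrt N / N := by gcongr; exact h1 N
    _ = C * (Real.sqrt N / N) := by ring
    _ = _ := by rw [Real.sqrt_div_self', one_div]

theorem nh_transfer (g : ℕ → ℂ) (hg : ∀ n, ‖g n‖ ≤ 1) (P : ℂ)
    (h : Tendsto (fun N : ℕ => (∑ n ∈ Ioc 0 N, (Λ n : ℂ) * g n) / N) atTop (𝓝 P)) :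
    Tendsto (fun N : ℕ => (∑ n ∈ Ioc 0 N, (npl n : ℂ) * g n) / N) atTop (𝓝 P) := by
  have h1 : Tendsto (fun N : ℕ => (∑ n ∈ Ioc 0 N, ((Λ n - npl n : ℝ) : ℂ) * g n) / N) atTop (𝓝 0) := by
    refine squeeze_zero_norm (fun N => ?_) nh_err
    rw [norm_div, Complex.norm_natCast]
    gcongr
    refine norm_sum_le_of_le _ fun n _ => ?_
    have := sub_nonneg.2 (npl_le n)
    rw [norm_mul, Complex.norm_real, Real.norm_of_nonneg this]
    exact mul_le_of_le_one_right this (hg n)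
  have h2 := h.sub h1
  rw [sub_zero] at h2
  refine h2.congr fun N => ?_
  rw [← sub_div, ← sum_sub_distrib]
  congr 1
  refine sum_congr rfl fun n _ => ?_
  push_cast; ring

theorem nh_irr (α : ℝ) (hα : Irrational α) : Tendsto (fun N : ℕ => (∑ n ∈ Ioc 0 N, (npl n : ℂ) * ee (n * α)) / N) atTop (𝓝 0) := by
  refine nh_transfer _ (fun n => (norm_ee _).le) 0 ?_
  rw [tendsto_zero_iff_norm_tendsto_zero, Metric.tendsto_atTop]
  intro ε hε
  obtain ⟨N0, h0⟩ := eventually_atTop.1 (ng_main α hα (ε/2) (by positivity))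
  refine ⟨N0 + 1, fun N hN => ?_⟩
  have hN' : (0:ℝ) < N := by exact_mod_cast (by omega : 0 < N)
  rw [dist_zero_right, norm_norm, norm_div, Complex.norm_natCast, div_lt_iff₀ hN']
  have := h0 N (by omega)
  nlinarith

open Classical in
theorem nh_class (q : ℕ) [NeZero q] (b : ZMod q) : ∃ c : ℂ, Tendsto (fun N : ℕ =>
    (∑ n ∈ Ioc 0 N, (npl n : ℂ) * (if (n : ZMod q) = b then 1 else 0)) / N) atTop (𝓝 c) := by
  by_cases hb : IsUnit b
  · refine ⟨(((q.totient:ℝ)⁻¹ : ℝ) : ℂ), nh_transfer _ (fun n => by split_ifs <;> simp) _ ?_⟩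
    have h1 := (Complex.continuous_ofReal.tendsto _).comp (wi_residue q b hb)
    refine h1.congr fun N => ?_
    simp only [Function.comp]
    push_cast
    congr 1
    rw [show Icc 1 N = Ioc 0 N from rfl]
    refine sum_congr rfl fun n _ => ?_
    by_cases hn : (n : ZMod q) = b
    · rw [if_pos hn, mul_one]
      congr 1
      exact Set.indicator_of_mem (s := {n : ℕ | (n : ZMod q) = b}) hn _
    · rw [if_neg hn, mul_zero]
      rw [Complex.ofReal_eq_zero]
      exact Set.indicator_of_notMem (s := {n : ℕ | (n : ZMod q) = b}) hn _
  · refine ⟨0, ?_⟩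
    have hq : 0 < q := Nat.pos_of_ne_zero (NeZero.ne q)
    have h1 : Tendsto (fun N : ℕ => (∑ n ∈ Ioc 0 q, npl n) / (N:ℝ)) atTop (𝓝 0) :=
      tendsto_const_div_atTop_nhds_zero_nat _
    refine squeeze_zero_norm (fun N => ?_) h1
    rw [norm_div, Complex.norm_natCast]
    gcongr
    have h2 : ∀ n ∈ Ioc 0 N, ‖(npl n : ℂ) * (if (n : ZMod q) = b then 1 else 0)‖ ≤ if n ∈ Ioc 0 q then npl n else 0 := by
      intro n hn
      split_ifs with h3 h4 h4
      · simp [abs_of_nonneg (npl_nn n)]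
      · have : npl n = 0 := by
          unfold npl
          rw [if_neg]
          intro hp
          apply hb
          rw [← h3, ZMod.isUnit_iff_coprime, hp.coprime_iff_not_dvd]
          intro hd
          exact h4 (mem_Ioc.2 ⟨hp.pos, Nat.le_of_dvd hq hd⟩)
        simp [this]
      · simp [npl_nn n]
      · simp
    refine (norm_sum_le_of_le _ h2).trans ?_
    rw [← sum_filter]
    refine sum_le_sum_of_subset_of_nonneg (fun n hn => (mem_filter.1 hn).2) fun _ _ _ => npl_nn _

theorem nh_rat (α : ℚ) : ∃ P : ℂ, Tendsto (fun N : ℕ => (∑ n ∈ Ioc 0 N, (npl n : ℂ) * ee (n * (α:ℝ))) / N) atTop (𝓝 P) := by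
  classical
  set q := α.den with hq
  have hq0 : 0 < q := α.den_pos
  have : NeZero q := ⟨hq0.ne'⟩
  choose c hc using nh_class q
  have hper : ∀ n : ℕ, ee (n * (α:ℝ)) = ee (((n : ZMod q).val : ℝ) * α) := by
    intro n
    rw [ZMod.val_natCast]
    have h1 : (n:ℝ) * α = ((n % q : ℕ) : ℝ) * α + ((n / q : ℕ) * α.num : ℤ) := by
      have h2 : (n:ℝ) = ((n % q : ℕ) : ℝ) + q * ((n / q : ℕ) : ℝ) := by exact_mod_cast (Nat.mod_add_div n q).symm
      have h3 : (q:ℝ) * α = α.num := by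
        have : (α:ℝ) = α.num / q := by rw [hq]; exact Rat.cast_def α
        rw [this]; field_simp
      calc (n:ℝ) * α = (((n % q : ℕ) : ℝ) + q * ((n / q : ℕ) : ℝ)) * α := by rw [← h2]
        _ = ((n % q : ℕ) : ℝ) * α + ((n / q : ℕ) : ℝ) * (q * α) := by ring
        _ = _ := by rw [h3, Int.cast_mul, Int.cast_natCast]
    rw [h1, ee_add_int]
  refine ⟨∑ b : ZMod q, ee ((b.val : ℝ) * α) * c b, ?_⟩
  have h4 := tendsto_finsetSum (univ : Finset (ZMod q)) fun b _ => (hc b).const_mul (ee ((b.val : ℝ) * α))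
  refine h4.congr fun N => ?_
  simp only [← mul_div_assoc]
  rw [← sum_div]
  congr 1
  simp only [mul_sum]
  rw [sum_comm]
  refine sum_congr rfl fun n _ => ?_
  rw [hper n]
  simp only [mul_ite, mul_one, mul_zero, sum_ite_eq, mem_univ, if_true]
  ring

theorem nh_all (α : ℝ) : ∃ P : ℂ, Tendsto (fun N : ℕ => (∑ n ∈ Ioc 0 N, (npl n : ℂ) * ee (n * α)) / N) atTop (𝓝 P) := by
  by_cases h : Irrational α
  · exact ⟨0, nh_irr α h⟩
  · obtain ⟨r, rfl⟩ := exists_rat_of_not_irrational h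
    exact nh_rat r

end

section
open Filter Finset MeasureTheory Topology

open scoped ArithmeticFunction.vonMangoldt

theorem ni_reindex {H : Type*} [AddCommMonoid H] (F : ℕ → H) (N : ℕ) :
    ∑ j ∈ range (Nat.count Nat.Prime N), F (Nat.nth Nat.Prime j) = ∑ n ∈ range N, if n.Prime then F n else 0 := by
  induction N with
  | zero => simp
  | succ N ih =>
    rw [Nat.count_succ, sum_range_succ _ N, ← ih]
    split_ifs with h
    · rw [sum_range_succ, Nat.nth_count h]
    · simp

theorem ni_pi {H : Type*} [AddCommMonoid H] (F : ℕ → H) (N : ℕ) :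
    ∑ j ∈ range (Nat.primeCounting N), F (Nat.nth Nat.Prime j) = ∑ n ∈ range (N+1), if n.Prime then F n else 0 :=
  ni_reindex F (N+1)

theorem ni_shift {H : Type*} [AddCommMonoid H] (F : ℕ → H) (h : F 0 = 0) (N : ℕ) :
    ∑ n ∈ range (N+1), F n = ∑ n ∈ Ioc 0 N, F n := by
  symm
  refine sum_subset (fun n hn => by simp at hn ⊢; omega) fun n hn hn' => ?_
  have : n = 0 := by simp at hn hn'; omega
  rw [this, h]

theorem npl_zero : npl 0 = 0 := by simp [npl]

theorem ni_theta (N : ℕ) : Chebyshev.theta N = ∑ n ∈ range (N+1), npl n := by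
  rw [ni_shift _ npl_zero, Chebyshev.theta, Nat.floor_natCast, sum_filter]; rfl

theorem ni_log {H : Type*} [NormedAddCommGroup H] [InnerProductSpace ℝ H] [CompleteSpace H]
    (T : H →L[ℝ] H) (hT : ‖T‖ ≤ 1) (x : H) : ∃ z : H, Tendsto (fun N : ℕ =>
        (N : ℝ)⁻¹ • ∑ n ∈ range (N+1), npl n • (T ^ n) x) atTop (𝓝 z) := by
  choose P hP using nh_all
  have hb1 : ∀ N : ℕ, ∑ n ∈ range (N+1), |if n < N + 1 then npl n / (N:ℝ) else 0| ≤ Real.log 4 := by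
    intro N
    have h1 : ∑ n ∈ range (N+1), |if n < N + 1 then npl n / (N:ℝ) else 0| = Chebyshev.theta N / N := by
      rw [ni_theta, sum_div]
      refine sum_congr rfl fun n hn => ?_
      rw [if_pos (mem_range.1 hn), abs_of_nonneg (div_nonneg (npl_nn n) (Nat.cast_nonneg N))]
    rw [h1]
    exact div_le_of_le_mul₀ (Nat.cast_nonneg N) (Real.log_nonneg (by norm_num))
      (Chebyshev.theta_le_log4_mul_x (Nat.cast_nonneg N))
  have hb2 : ∀ t : ℝ, Tendsto (fun N : ℕ => ∑ n ∈ range (N+1), ((if n < N + 1 then npl n / (N:ℝ) else 0 : ℝ) : ℂ) * Complex.exp (n * t * Complex.I)) atTop (𝓝 (P (t / (2 * Real.pi)))) := by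
    intro t
    refine (hP _).congr fun N => ?_
    rw [← ni_shift (fun n => (npl n : ℂ) * ee (n * (t / (2 * Real.pi)))) (by simp [npl_zero]), sum_div]
    refine sum_congr rfl fun n hn => ?_
    rw [if_pos (mem_range.1 hn)]
    have : ee (n * (t / (2 * Real.pi))) = Complex.exp (n * t * Complex.I) := by
      unfold ee
      congr 2
      have : 2 * Real.pi * (n * (t / (2 * Real.pi))) = n * t := by
        have := Real.pi_pos
        field_simp
      rw [this]; push_cast; rfl
    rw [this]
    push_cast; ring
  obtain ⟨z, hz⟩ := hb_main T hT x (fun N n => if n < N + 1 then npl n / N else 0) (fun N => N+1)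
    (fun N n h => if_neg (by omega)) (Real.log 4) (fun N => hb1 N) (fun t => P (t / (2 * Real.pi))) (fun t => hb2 t)
  refine ⟨z, hz.congr fun N => ?_⟩
  rw [smul_sum]
  refine sum_congr rfl fun n hn => ?_
  rw [if_pos (mem_range.1 hn), smul_smul, div_eq_inv_mul]

theorem ni_pnt : Tendsto (fun N : ℕ => Chebyshev.theta N / N) atTop (𝓝 1) := by
  have h1 := (wi_residue 1 1 isUnit_one).sub nh_err
  simp only [Nat.totient_one, Nat.cast_one, inv_one, sub_zero] at h1
  refine h1.congr fun N => ?_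
  rw [← sub_div, ni_theta, ni_shift _ npl_zero, show Icc 1 N = Ioc 0 N from rfl, ← sum_sub_distrib]
  congr 1
  refine sum_congr rfl fun n _ => ?_
  have : ArithmeticFunction.vonMangoldt.residueClass (1 : ZMod 1) n = Λ n :=
    Set.indicator_of_mem (s := {n : ℕ | (n : ZMod 1) = 1}) (Subsingleton.elim _ _) _
  rw [this]; ring

theorem ni_diff : Tendsto (fun N : ℕ => (Nat.primeCounting N * Real.log N - Chebyshev.theta N) / N) atTop (𝓝 0) := by
  have h1 := Chebyshev.primeCounting_sub_theta_div_log_isBigO.mul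
    (Asymptotics.isBigO_refl (fun x : ℝ => Real.log x / x) atTop)
  have h2 : Tendsto (fun x : ℝ => x / Real.log x ^ 2 * (Real.log x / x)) atTop (𝓝 0) := by
    refine Real.tendsto_log_atTop.inv_tendsto_atTop.congr' ?_
    filter_upwards [eventually_gt_atTop 1] with x hx
    have := Real.log_pos hx
    simp only [Pi.inv_apply]
    field_simp
  have h3 := (h1.trans_tendsto h2).comp tendsto_natCast_atTop_atTop (α := ℕ)
  refine h3.congr' ?_
  filter_upwards [eventually_gt_atTop 1] with N hN
  have : 0 < Real.log N := Real.log_pos (by exact_mod_cast hN)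
  simp only [Function.comp, Nat.floor_natCast]
  field_simp

theorem ni_pi_log : Tendsto (fun N : ℕ => Nat.primeCounting N * Real.log N / N) atTop (𝓝 1) := by
  have h := ni_diff.add ni_pnt
  rw [zero_add] at h
  exact h.congr fun N => by ring

theorem ni_norm_pow {H : Type*} [NormedAddCommGroup H] [InnerProductSpace ℝ H]
    (T : H →L[ℝ] H) (hT : ‖T‖ ≤ 1) (x : H) (n : ℕ) : ‖(T ^ n) x‖ ≤ ‖x‖ := by
  induction n with
  | zero => simp
  | succ n ih =>
    rw [pow_succ']
    calc ‖T ((T ^ n) x)‖ ≤ ‖T‖ * ‖(T ^ n) x‖ := T.le_opNorm _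
      _ ≤ 1 * ‖x‖ := by gcongr
      _ = _ := one_mul _

theorem ni_first {H : Type*} [NormedAddCommGroup H] [InnerProductSpace ℝ H]
    (T : H →L[ℝ] H) (hT : ‖T‖ ≤ 1) (x z : H) (hz : Tendsto (fun N : ℕ =>
        (N : ℝ)⁻¹ • ∑ n ∈ range (N+1), npl n • (T ^ n) x) atTop (𝓝 z)) :
    Tendsto (fun n : ℕ =>
        (n : ℝ)⁻¹ • ∑ j ∈ range n, (T ^ (Nat.nth Nat.Prime j)) x) atTop (𝓝 z) := by
  set S : ℕ → H := fun N => ∑ n ∈ range (N+1), if n.Prime then (T ^ n) x else 0 with hS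
  have h1 : Tendsto (fun N : ℕ => (N:ℝ)⁻¹ • (Real.log N • S N - ∑ n ∈ range (N+1), npl n • (T ^ n) x)) atTop (𝓝 0) := by
    have h2 := ni_diff.mul_const ‖x‖
    rw [zero_mul] at h2
    refine squeeze_zero_norm (fun N => ?_) h2
    rw [norm_smul, norm_inv, Real.norm_natCast, div_eq_inv_mul, mul_assoc]
    gcongr
    have hc : (Nat.primeCounting N : ℝ) = ∑ n ∈ range (N+1), if n.Prime then (1:ℝ) else 0 := by
      rw [← ni_pi (fun _ => (1:ℝ))]; simp
    rw [hS, smul_sum, ← sum_sub_distrib, ni_theta, hc, sum_mul, ← sum_sub_distrib, sum_mul]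
    refine norm_sum_le_of_le _ fun n hn => ?_
    unfold npl
    split_ifs with hp
    · have : Real.log n ≤ Real.log N := Real.log_le_log (by exact_mod_cast hp.pos)
        (by exact_mod_cast Nat.lt_succ_iff.1 (mem_range.1 hn))
      rw [← sub_smul, norm_smul, Real.norm_of_nonneg (sub_nonneg.2 this), one_mul]
      exact mul_le_mul_of_nonneg_left (ni_norm_pow T hT x n) (sub_nonneg.2 this)
    · simp
  have h3 := h1.add hz
  rw [zero_add] at h3
  have h4 := (ni_pi_log.inv₀ one_ne_zero).smul h3
  rw [inv_one, one_smul] at h4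
  have h5 : Tendsto (fun N : ℕ => (Nat.primeCounting N : ℝ)⁻¹ • S N) atTop (𝓝 z) := by
    refine h4.congr' ?_
    filter_upwards [eventually_gt_atTop 1] with N hN
    have : 0 < Real.log N := Real.log_pos (by exact_mod_cast hN)
    have hN' : (0:ℝ) < N := by exact_mod_cast (by omega : 0 < N)
    rw [← smul_add, sub_add_cancel, smul_smul, smul_smul]
    congr 1
    rw [inv_div]
    field_simp
  have h6 : Tendsto (fun n : ℕ => Nat.nth Nat.Prime n - 1) atTop atTop :=
    tendsto_atTop_mono (fun n => by have := Nat.add_two_le_nth_prime n; show n ≤ _; omega) tendsto_id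
  refine (h5.comp h6).congr fun n => ?_
  simp only [Function.comp]
  have h7 : Nat.primeCounting (Nat.nth Nat.Prime n - 1) = n := by
    rw [Nat.primeCounting_sub_one, Nat.primeCounting'_nth_eq]
  rw [hS]
  simp only
  rw [← ni_pi (fun n => (T ^ n) x), h7]

theorem ni_second {H : Type*} [NormedAddCommGroup H] [InnerProductSpace ℝ H]
    (T : H →L[ℝ] H) (x : H) (N : ℕ) : ∑ j ∈ range (Nat.primeCounting N),
          Real.log (Nat.nth Nat.Prime j) • (T ^ (Nat.nth Nat.Prime j)) x = ∑ n ∈ range (N+1), npl n • (T ^ n) x := by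
  rw [ni_pi (fun n => Real.log n • (T ^ n) x)]
  refine sum_congr rfl fun n _ => ?_
  unfold npl
  split_ifs <;> simp

end

open Filter Finset

/-- Let `T` be a contraction on a real Hilbert space `H`. Then for every
`x ∈ H`, both `(1/n) ∑_{j=1}^n T^{p_j} x` and `(1/N) ∑_{j=1}^{π(N)} (log p_j) T^{p_j} x`
converge in norm. -/
theorem stmt14 {H : Type*} [NormedAddCommGroup H] [InnerProductSpace ℝ H] [CompleteSpace H]
    (T : H →L[ℝ] H) (hT : ‖T‖ ≤ 1) (x : H) :
    (∃ y : H, Tendsto (fun n : ℕ =>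
        (n : ℝ)⁻¹ • ∑ j ∈ range n, (T ^ (Nat.nth Nat.Prime j)) x) atTop (nhds y)) ∧
    (∃ z : H, Tendsto (fun N : ℕ =>
        (N : ℝ)⁻¹ • ∑ j ∈ range (Nat.primeCounting N),
          Real.log (Nat.nth Nat.Prime j) • (T ^ (Nat.nth Nat.Prime j)) x) atTop (nhds z)) := by
  obtain ⟨z, hz⟩ := ni_log T hT x
  refine ⟨⟨z, ni_first T hT x z hz⟩, ⟨z, hz.congr fun N => ?_⟩⟩
  rw [ni_second]
end

section
/- Let (a_n)_{n≥1} be a complex sequence such that sup_n (1/n)∑_{k=1}^n |a_k| φ(|a_k|) < ∞ for some strictly increasing function φ: ℝ⁺ → ℝ⁺ with φ(x) → ∞. Then limsup_{N→∞} (1/N)∑_{n=1}^N |a_n − Λ'(n)| ≥ 1/2. -/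
open Filter Finset

/-- The modified von Mangoldt function `Λ'(n) = log n` if `n` is prime, `0` otherwise. -/
noncomputable def LambdaPrime (n : ℕ) : ℝ := if n.Prime then Real.log n else 0

lemma sum_lp (N : ℕ) : ∑ n ∈ Icc 1 N, LambdaPrime n = Chebyshev.theta N := by
  rw [Chebyshev.theta, Nat.floor_natCast, Finset.sum_filter]
  rfl

lemma lp_nonneg (n : ℕ) : 0 ≤ LambdaPrime n := by
  unfold LambdaPrime
  split_ifs
  · exact Real.log_natCast_nonneg n
  · exact le_rfl

lemma aux_small : ∀ᶠ n : ℕ in atTop,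
    Real.log (n + 1) + 2 * √(n:ℝ) * Real.log n ≤ (n:ℝ) / 20 := by
  have h := (isLittleO_log_rpow_atTop (r := 1/2) (by norm_num)).bound (c := 1/100) (by norm_num)
  have h1 := (tendsto_natCast_atTop_atTop (R := ℝ)).eventually h
  filter_upwards [h1, eventually_ge_atTop 100] with n hn h2
  have hn1 : (100:ℝ) ≤ n := by exact_mod_cast h2
  rw [Real.norm_of_nonneg (Real.log_nonneg (by linarith)), Real.norm_of_nonneg (by positivity),
    ← Real.sqrt_eq_rpow] at hn
  have e : Real.log (n + 1) ≤ 1 + Real.log n := by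
    have : Real.log (n+1) ≤ Real.log (2 * n) := Real.log_le_log (by positivity) (by linarith)
    rw [Real.log_mul (by norm_num) (by positivity)] at this
    linarith [Real.log_two_lt_d9]
  have hs : √(n:ℝ) * √(n:ℝ) = n := Real.mul_self_sqrt (by positivity)
  have h0 : 0 ≤ √(n:ℝ) := Real.sqrt_nonneg _
  have h3 : √(n:ℝ) * Real.log n ≤ n / 100 := by nlinarith
  have h4 : 1 ≤ √(n:ℝ) := Real.one_le_sqrt.2 (by linarith)
  nlinarith

lemma aux_card (K : ℝ) (hK : 0 ≤ K) : ∀ᶠ n : ℕ in atTop,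
    K * (#{p ∈ Icc 1 n | p.Prime} : ℝ) ≤ (n:ℝ) / 20 := by
  have h1 := (tendsto_natCast_atTop_atTop (R := ℝ)).eventually
    (Chebyshev.eventually_primeCounting_le one_pos)
  have h2 := (Real.tendsto_log_atTop.comp (tendsto_natCast_atTop_atTop (R := ℝ))).eventually
    (eventually_ge_atTop (20 * K * (Real.log 4 + 1) + 1))
  filter_upwards [h1, h2] with n h1 h2
  simp only [Nat.floor_natCast, Function.comp] at h1 h2
  have hc : (#{p ∈ Icc 1 n | p.Prime} : ℝ) ≤ Nat.primeCounting n := by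
    norm_cast
    rw [Nat.primeCounting, Nat.primeCounting', Nat.count_eq_card_filter_range]
    apply Finset.card_le_card
    intro p
    simp only [Finset.mem_filter, Finset.mem_Icc, Finset.mem_range]
    rintro ⟨h, h'⟩
    exact ⟨by omega, h'⟩
  have h4 : 0 ≤ Real.log 4 := Real.log_nonneg (by norm_num)
  have hp : 0 ≤ 20 * K * (Real.log 4 + 1) := by positivity
  have hl : 0 < Real.log n := by linarith
  calc _ ≤ K * ((Real.log 4 + 1) * n / Real.log n) := by gcongr; exact hc.trans h1
    _ ≤ _ := by
      rw [← mul_div_assoc, div_le_iff₀ hl]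
      have : (0:ℝ) ≤ n := by positivity
      nlinarith

/-- Let `(a_n)` be a complex sequence with
`sup_n (1/n) ∑_{k=1}^n |a_k| φ(|a_k|) < ∞` for some strictly increasing `φ : ℝ⁺ → ℝ⁺` with
`φ(x) → ∞`. Then `limsup_N (1/N) ∑_{n=1}^N |a_n − Λ'(n)| ≥ 1/2`. -/
theorem stmt16 (a : ℕ → ℂ) (φ : ℝ → ℝ) (hφ_pos : ∀ t, 0 ≤ t → 0 ≤ φ t)
    (hφ_mono : StrictMonoOn φ (Set.Ici (0 : ℝ)))
    (hφ_top : Tendsto φ atTop atTop)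
    (ha : ∃ s : ℝ, ∀ n : ℕ, (n : ℝ)⁻¹ * ∑ k ∈ Icc 1 n, ‖a k‖ * φ ‖a k‖ ≤ s) :
    (1 : ℝ) / 2 ≤
      Filter.limsup (fun N : ℕ => (N : ℝ)⁻¹ * ∑ n ∈ Icc 1 N, ‖a n - (LambdaPrime n : ℂ)‖)
        atTop := by
  obtain ⟨s, hs⟩ := ha
  have hs0 : 0 ≤ s := by simpa using hs 0
  obtain ⟨K, hK0, hK⟩ : ∃ K, 0 ≤ K ∧ 20 * s + 1 ≤ φ K :=
    ((eventually_ge_atTop (0:ℝ)).and (hφ_top.eventually (eventually_ge_atTop (20 * s + 1)))).exists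
  have hφK : 0 < φ K := by linarith
  have hnn (k : ℕ) : 0 ≤ ‖a k‖ * φ ‖a k‖ := mul_nonneg (norm_nonneg _) (hφ_pos _ (norm_nonneg _))
  have hpt (k : ℕ) : ‖a k‖ ≤ K + (φ K)⁻¹ * (‖a k‖ * φ ‖a k‖) := by
    rcases le_total ‖a k‖ K with h | h
    · have := mul_nonneg (inv_nonneg.2 hφK.le) (hnn k)
      linarith
    · have h1 : φ K ≤ φ ‖a k‖ := hφ_mono.monotoneOn hK0 (norm_nonneg _) h
      have h2 : ‖a k‖ ≤ (φ K)⁻¹ * (‖a k‖ * φ ‖a k‖) := by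
        rw [inv_mul_eq_div, le_div_iff₀ hφK]
        exact mul_le_mul_of_nonneg_left h1 (norm_nonneg _)
      linarith
  have hsum (N : ℕ) : (φ K)⁻¹ * ∑ k ∈ Icc 1 N, ‖a k‖ * φ ‖a k‖ ≤ (N:ℝ) / 20 := by
    rcases N.eq_zero_or_pos with rfl | hN
    · simp
    have hN' : (0:ℝ) < N := by exact_mod_cast hN
    have := hs N
    rw [inv_mul_le_iff₀ hN'] at this
    rw [inv_mul_le_iff₀ hφK]
    nlinarith
  apply le_limsup_of_frequently_le
  · apply Eventually.frequently
    filter_upwards [aux_small, aux_card K hK0, eventually_gt_atTop 0] with N h1 h2 h3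
    have hN : (0:ℝ) < N := by exact_mod_cast h3
    rw [← div_eq_inv_mul, le_div_iff₀ hN]
    have hb : ∑ n ∈ Icc 1 N, (LambdaPrime n - (if n.Prime then K else 0)
        - (φ K)⁻¹ * (‖a n‖ * φ ‖a n‖)) ≤ ∑ n ∈ Icc 1 N, ‖a n - (LambdaPrime n : ℂ)‖ := by
      apply Finset.sum_le_sum
      intro n _
      have hx := hpt n
      by_cases hp : n.Prime
      · rw [if_pos hp]
        have := norm_sub_norm_le (LambdaPrime n : ℂ) (a n)
        rw [norm_sub_rev, Complex.norm_real, Real.norm_of_nonneg (lp_nonneg n)] at this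
        linarith
      · have := mul_nonneg (inv_nonneg.2 hφK.le) (hnn n)
        have := norm_nonneg (a n - (LambdaPrime n : ℂ))
        have : LambdaPrime n = 0 := by simp [LambdaPrime, hp]
        rw [if_neg hp]
        linarith
    rw [Finset.sum_sub_distrib, Finset.sum_sub_distrib, sum_lp, ← Finset.mul_sum,
      ← Finset.sum_filter, Finset.sum_const, nsmul_eq_mul] at hb
    have := hsum N
    have := Chebyshev.theta_ge N
    nlinarith [Real.log_two_gt_d9]
  · refine ⟨K + 1 / 20 + Real.log 4, ?_⟩
    rw [eventually_map]
    filter_upwards [eventually_gt_atTop 0] with N h3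
    have hN : (0:ℝ) < N := by exact_mod_cast h3
    rw [← div_eq_inv_mul, div_le_iff₀ hN]
    have hb : ∑ n ∈ Icc 1 N, ‖a n - (LambdaPrime n : ℂ)‖ ≤ ∑ n ∈ Icc 1 N, (LambdaPrime n + K
        + (φ K)⁻¹ * (‖a n‖ * φ ‖a n‖)) := by
      apply Finset.sum_le_sum
      intro n _
      have hx := hpt n
      have := norm_sub_le (a n) (LambdaPrime n : ℂ)
      rw [Complex.norm_real, Real.norm_of_nonneg (lp_nonneg n)] at this
      linarith
    rw [Finset.sum_add_distrib, Finset.sum_add_distrib, sum_lp, ← Finset.mul_sum,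
      Finset.sum_const, nsmul_eq_mul, Nat.card_Icc, Nat.add_sub_cancel] at hb
    have := hsum N
    have := Chebyshev.theta_le_log4_mul_x hN.le
    linarith
end

section
/- Let 1 ≤ r < ∞ and let (f_n)_{n≥1} be a sequence in a normed space X. Suppose there exist L > 0 and δ ∈ (0,1) such that for every strictly increasing sequence (n_j) of positive integers and every K ∈ ℕ one has ∑_{j=1}^K ‖f_{n_{j+1}} − f_{n_j}‖^r ≤ L·K^δ. Then (f_n) is a Cauchy sequence in X. -/
open Filter Finset

/-- Let `1 ≤ r < ∞` and let `(f_n)` be a sequence in a normed space `X`.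
If there exist `L > 0` and `δ ∈ (0,1)` such that for every strictly increasing sequence
`(n_j)` of positive integers and every `K`, `∑_{j=1}^K ‖f_{n_{j+1}} − f_{n_j}‖^r ≤ L K^δ`,
then `(f_n)` is Cauchy. -/
theorem stmt18 {𝕜 : Type*} [RCLike 𝕜] {X : Type*} [NormedAddCommGroup X] [NormedSpace 𝕜 X]
    (r : ℝ) (hr : 1 ≤ r) (f : ℕ → X) (L : ℝ) (hL : 0 < L) (δ : ℝ) (hδ : δ ∈ Set.Ioo (0:ℝ) 1)
    (h : ∀ n : ℕ → ℕ, StrictMono n → (∀ j, 0 < n j) →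
      ∀ K : ℕ, ∑ j ∈ range K, ‖f (n (j + 1)) - f (n j)‖ ^ r ≤ L * (K : ℝ) ^ δ) :
    CauchySeq f := by
  rw [Metric.cauchySeq_iff']
  by_contra hc
  push Not at hc
  obtain ⟨ε, hε, hc⟩ := hc
  choose g hg1 hg2 using hc
  have hlt : ∀ N, N < g N := by
    intro N
    refine lt_of_le_of_ne (hg1 N) (fun e => ?_)
    have h2 := hg2 N
    rw [← e, dist_self] at h2
    linarith
  have hm : StrictMono (fun j => g^[j] 1) := by
    refine strictMono_nat_of_lt_succ (fun j => ?_)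
    simp only [Function.iterate_succ_apply']
    exact hlt _
  have hpos : ∀ j, 0 < (fun j => g^[j] 1) j := by
    intro j
    have h0 := hm.monotone (Nat.zero_le j)
    simp only [Function.iterate_zero, id] at h0
    exact h0
  have key := h _ hm hpos
  have hεr : 0 < ε ^ r := Real.rpow_pos_of_pos hε r
  have lower : ∀ K : ℕ, (K : ℝ) * ε ^ r ≤ L * (K : ℝ) ^ δ := by
    intro K
    refine le_trans ?_ (key K)
    have h1 := Finset.card_nsmul_le_sum (range K)
      (fun j => ‖f (g^[j + 1] 1) - f (g^[j] 1)‖ ^ r) (ε ^ r) (by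
        intro j _
        simp only [Function.iterate_succ_apply']
        refine Real.rpow_le_rpow hε.le ?_ (by linarith)
        rw [← dist_eq_norm]
        exact hg2 _)
    simpa using h1
  have ht : Tendsto (fun K : ℕ => (K : ℝ) ^ (1 - δ)) atTop atTop :=
    (tendsto_rpow_atTop (by linarith [hδ.2])).comp tendsto_natCast_atTop_atTop
  obtain ⟨K, hK1, hK2⟩ :=
    ((ht.eventually_gt_atTop (L / ε ^ r)).and (eventually_gt_atTop 0)).exists
  have hKp : (0 : ℝ) < K := by exact_mod_cast hK2
  have hKd : 0 < (K : ℝ) ^ δ := Real.rpow_pos_of_pos hKp δ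
  have hsplit : (K : ℝ) ^ (1 - δ) * (K : ℝ) ^ δ = K := by
    rw [← Real.rpow_add hKp]; simp
  rw [div_lt_iff₀ hεr] at hK1
  have h3 := lower K
  have h4 := mul_lt_mul_of_pos_right hK1 hKd
  have h5 : (K : ℝ) ^ (1 - δ) * ε ^ r * (K : ℝ) ^ δ = K * ε ^ r := by
    rw [mul_right_comm, hsplit]
  linarith
end
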